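/- arXiv:2312.08681 — 5 statements merged into one kernel-verified Lean document; each statement's English description precedes it below -/
import Mathlib

section
/- Let n, m ≥ 1 and let G = Art_{2,2n+1,2m+1} = ⟨a,b,c | ac=ca, (bc)^n b = c(bc)^n, (ab)^m a = b(ab)^m⟩. Suppose G acts without inversions on a tree T and at least one of the elements ab or bc fixes no vertex of T. Then there is a geodesic line in T whose image is G-invariant and on which G acts by translations. -/
/-!
Call an element of `G` a translation of a line `ℓ` if it shifts `ℓ`. Each of the two cases is an
instance of the following situation: `p, q, r` generate `G`, `(pq)ᵏ p = q (pq)ᵏ`, the element `r`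
commutes with `p` or with `q`, and `pq` fixes no vertex.

* Since there are no inversions, `pq` has an axis `ℓ`: if `v` minimises the displacement of `pq`,
  the translates of the geodesic from `v` to `pq • v` fit together to a path without backtracking,
  which in a tree is a geodesic line (`exists_axis`).
* If `z` shifts `ℓ` by `D > 0`, every vertex moved exactly `D` by `z` lies on `ℓ`
  (`mem_axis`). Hence an element commuting with `z` preserves `ℓ`, and it preserves the
  direction of the shift, so it is a translation of `ℓ` (`commute_translates`).
* The element `(pq)²ᵏ⁺¹` is the square of the Garside element `(pq)ᵏ p` and commutes with `p` and
  `q` (`braid_comm`), so both are translations of `ℓ`. The relation forces their translation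
  lengths to agree; as the lengths add up to that of `pq`, they are positive, so `r`,
  commuting with `p` or `q`, is a translation of `ℓ` as well.

All tree geometry is reduced to two facts about the distance to a fixed vertex `u`: it changes by
exactly one along each edge, and every vertex has at most one neighbour nearer to `u`.
-/

/-- Generators: `0 ↦ a`, `1 ↦ b`, `2 ↦ c`. -/
def ArtOdd.a : FreeGroup (Fin 3) := FreeGroup.of 0
def ArtOdd.b : FreeGroup (Fin 3) := FreeGroup.of 1
def ArtOdd.c : FreeGroup (Fin 3) := FreeGroup.of 2

/-- Relators of `Art_{2,2n+1,2m+1} = ⟨a,b,c | ac=ca, (bc)^n b = c(bc)^n, (ab)^m a = b(ab)^m⟩`. -/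
def ArtOdd.rels (n m : ℕ) : Set (FreeGroup (Fin 3)) :=
  { ArtOdd.a * ArtOdd.c * (ArtOdd.c * ArtOdd.a)⁻¹,
    (ArtOdd.b * ArtOdd.c) ^ n * ArtOdd.b * (ArtOdd.c * (ArtOdd.b * ArtOdd.c) ^ n)⁻¹,
    (ArtOdd.a * ArtOdd.b) ^ m * ArtOdd.a * (ArtOdd.b * (ArtOdd.a * ArtOdd.b) ^ m)⁻¹ }

/-- The triangle Artin group `Art_{2,2n+1,2m+1}`. -/
abbrev ArtOdd (n m : ℕ) : Type := PresentedGroup (ArtOdd.rels n m)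

/-- The generator `a`. -/
def ArtOdd.gA (n m : ℕ) : ArtOdd n m := PresentedGroup.of 0
/-- The generator `b`. -/
def ArtOdd.gB (n m : ℕ) : ArtOdd n m := PresentedGroup.of 1
/-- The generator `c`. -/
def ArtOdd.gC (n m : ℕ) : ArtOdd n m := PresentedGroup.of 2

namespace ArtOdd

/-! ### Distances in trees -/

section Tree

variable {V : Type} {T : SimpleGraph V}

lemma closer_unique (hT : T.IsTree) {u v w w' : V} (h : T.Adj v w) (h' : T.Adj v w')
    (hd : T.dist u v = T.dist u w + 1) (hd' : T.dist u v = T.dist u w' + 1) : w = w' := by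
  obtain ⟨p, hp⟩ := hT.connected.exists_walk_length_eq_dist u w
  obtain ⟨q, hq⟩ := hT.connected.exists_walk_length_eq_dist u w'
  have h1 : (p.concat h.symm).IsPath :=
    SimpleGraph.Walk.isPath_of_length_eq_dist _ (by rw [SimpleGraph.Walk.length_concat]; omega)
  have h2 : (q.concat h'.symm).IsPath :=
    SimpleGraph.Walk.isPath_of_length_eq_dist _ (by rw [SimpleGraph.Walk.length_concat]; omega)
  have := (hT.existsUnique_path u v).unique h1 h2
  have := congrArg SimpleGraph.Walk.penultimate this
  simpa using this

lemma exists_step (hT : T.IsTree) {x w : V} (h : x ≠ w) :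
    ∃ y, T.Adj x y ∧ T.dist x w = T.dist y w + 1 := by
  obtain ⟨p, hp⟩ := hT.connected.exists_walk_length_eq_dist x w
  cases p with
  | nil => exact absurd rfl h
  | @cons _ y _ hxy q =>
    refine ⟨y, hxy, ?_⟩
    have h1 := T.dist_le q
    rw [SimpleGraph.Walk.length_cons] at hp
    have h2 := hT.dist_eq_dist_add_one_of_adj w hxy
    rw [T.dist_comm (u := w) (v := x), T.dist_comm (u := w) (v := y)] at h2
    omega

/-- If the geodesic from `x` to `w` starts with a step away from `u`, then `x` lies on the
geodesic from `u` to `w`. -/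
lemma dist_add (hT : T.IsTree) {u w : V} : ∀ (k : ℕ) (x y : V), T.dist x w = k → T.Adj x y →
    T.dist x w = T.dist y w + 1 → T.dist u y = T.dist u x + 1 →
    T.dist u w = T.dist u x + T.dist x w := by
  intro k
  induction k with
  | zero => intro x y h1 _ h2; omega
  | succ k ih =>
    intro x y h1 hxy h2 h3
    by_cases hyw : y = w
    · subst hyw
      rw [T.dist_self] at h2
      omega
    obtain ⟨y', hyy', hs⟩ := exists_step hT hyw
    have h4 : T.dist u y' = T.dist u y + 1 := by
      rcases hT.dist_eq_dist_add_one_of_adj u hyy' with h | h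
      · have := closer_unique hT hyy' hxy.symm h h3
        subst this
        omega
      · exact h
    have := ih y y' (by omega) hyy' hs h4
    omega

lemma path_increasing (hT : T.IsTree) {f : ℤ → V} (hadj : ∀ i, T.Adj (f i) (f (i + 1)))
    (hnb : ∀ i, f i ≠ f (i + 2)) {u : V} {i : ℤ} (h : T.dist u (f (i + 1)) = T.dist u (f i) + 1)
    (k : ℕ) : T.dist u (f (i + k)) = T.dist u (f i) + k := by
  suffices h : T.dist u (f (i + k)) = T.dist u (f i) + k ∧
      T.dist u (f (i + k + 1)) = T.dist u (f i) + k + 1 from h.1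
  induction k with
  | zero => simpa using h
  | succ k ih =>
    obtain ⟨h1, h2⟩ := ih
    push_cast
    rw [← add_assoc]
    refine ⟨by omega, ?_⟩
    rcases hT.dist_eq_dist_add_one_of_adj u (hadj (i + k + 1)) with h3 | h3
    · have := closer_unique hT (hadj (i + k + 1)) (hadj (i + k)).symm h3 (by omega)
      refine absurd this.symm ?_
      rw [show i + k + 1 + 1 = i + k + 2 by ring]
      exact hnb _
    · omega

/-- A bi-infinite path without backtracking in a tree is a geodesic line. -/
lemma line_dist (hT : T.IsTree) {f : ℤ → V} (hadj : ∀ i, T.Adj (f i) (f (i + 1)))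
    (hnb : ∀ i, f i ≠ f (i + 2)) (i j : ℤ) : (T.dist (f i) (f j) : ℤ) = |i - j| := by
  have key : ∀ (i : ℤ) (k : ℕ), T.dist (f i) (f (i + k)) = k := by
    intro i k
    have := path_increasing hT hadj hnb (u := f i) (i := i)
      (by rw [T.dist_self, SimpleGraph.dist_eq_one_iff_adj.2 (hadj i)]) k
    simpa using this
  rcases le_total i j with h | h
  · obtain ⟨k, rfl⟩ := Int.le.dest h
    rw [key, abs_sub_comm, add_sub_cancel_left, Nat.abs_cast]
  · obtain ⟨k, rfl⟩ := Int.le.dest h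
    rw [T.dist_comm, key, add_sub_cancel_left, Nat.abs_cast]

lemma exists_geodesic (hT : T.IsTree) (u w : V) : ∃ f : ℕ → V, f 0 = u ∧ f (T.dist u w) = w ∧
    (∀ i < T.dist u w, T.Adj (f i) (f (i + 1))) ∧
    (∀ i ≤ T.dist u w, ∀ j ≤ T.dist u w, f i = f j → i = j) := by
  obtain ⟨p, hp⟩ := hT.connected.exists_walk_length_eq_dist u w
  have hpath := p.isPath_of_length_eq_dist hp
  refine ⟨p.getVert, by simp, by rw [← hp]; simp, fun i hi => p.adj_getVert_succ (by omega), ?_⟩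
  intro i hi j hj h
  exact hpath.getVert_injOn (by simp; omega) (by simp; omega) h

end Tree

/-! ### Axes of tree automorphisms -/

section Action

variable {V : Type} {T : SimpleGraph V} {G : Type} [Group G] [MulAction G V]

lemma dist_smul (hT : T.IsTree) (hact : ∀ (g : G) (u v : V), T.Adj u v → T.Adj (g • u) (g • v))
    (g : G) (u v : V) : T.dist (g • u) (g • v) = T.dist u v := by
  have key : ∀ (g : G) (u v : V), T.dist (g • u) (g • v) ≤ T.dist u v := by
    intro g u v
    obtain ⟨p, hp⟩ := hT.connected.exists_walk_length_eq_dist u v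
    have := T.dist_le (p.map (⟨fun x => g • x, fun h => hact g _ _ h⟩ : T →g T))
    rw [SimpleGraph.Walk.length_map, hp] at this
    exact this
  refine le_antisymm (key g u v) ?_
  simpa using key g⁻¹ (g • u) (g • v)

/-- An element `g` without fixed vertex, in a group acting without inversions, shifts a line of
the tree by `d > 0`. The line is given as a path without backtracking, see `line_dist`. -/
lemma exists_axis (hT : T.IsTree) (hact : ∀ (g : G) (u v : V), T.Adj u v → T.Adj (g • u) (g • v))
    (hninv : ∀ (g : G) (u v : V), T.Adj u v → ¬(g • u = v ∧ g • v = u))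
    (g : G) (hg : ∀ v : V, g • v ≠ v) :
    ∃ (f : ℤ → V) (d : ℤ), 0 < d ∧ (∀ i, T.Adj (f i) (f (i + 1))) ∧ (∀ i, f i ≠ f (i + 2)) ∧
      ∀ i, g • f i = f (i + d) := by
  have := hT.connected.nonempty
  set v : V := Function.argmin (fun v : V => T.dist v (g • v))
  have hmin : ∀ w : V, T.dist v (g • v) ≤ T.dist w (g • w) :=
    fun w => Function.argmin_le (fun v : V => T.dist v (g • v)) w
  obtain ⟨p, hp0, hpd, hpadj, hpinj⟩ := exists_geodesic hT v (g • v)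
  have hdpos : 0 < T.dist v (g • v) := hT.connected.pos_dist_of_ne (hg v).symm
  generalize hd : T.dist v (g • v) = d at *
  -- `f (k * d + r) = g ^ k • p r`: the translates of the geodesic `p`, placed end to end.
  let f : ℤ → V := fun i => g ^ (i / (d : ℤ)) • p (i % (d : ℤ)).toNat
  have hd0 : (d : ℤ) ≠ 0 := by omega
  have hfk : ∀ (k : ℤ) (r : ℕ), r ≤ d → f (k * d + r) = g ^ k • p r := by
    intro k r hr
    rcases hr.lt_or_eq with hr | rfl
    · have h1 : (k * d + r : ℤ) / d = k := by
        rw [add_comm, Int.add_mul_ediv_right _ _ hd0, Int.ediv_eq_zero_of_lt (by omega) (by omega)]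
        simp
      have h2 : (k * d + r : ℤ) % d = r := by
        rw [add_comm, Int.add_mul_emod_self_right, Int.emod_eq_of_lt (by omega) (by omega)]
      simp only [f, h1, h2, Int.toNat_natCast]
    · have h1 : (k * r + r : ℤ) / r = k + 1 := by
        rw [show (k * r + r : ℤ) = (k + 1) * r by ring, Int.mul_ediv_cancel _ hd0]
      have h2 : (k * r + r : ℤ) % r = 0 := by
        rw [show (k * r + r : ℤ) = (k + 1) * r by ring, Int.mul_emod_left]
      simp only [f, h1, h2, Int.toNat_zero, hp0, hpd]
      rw [zpow_add_one, mul_smul]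
  have hrep : ∀ i : ℤ, ∃ (k : ℤ) (r : ℕ), r < d ∧ i = k * d + r := by
    intro i
    have h1 := Int.emod_nonneg i hd0
    have h2 := Int.emod_lt_of_pos i (show (0 : ℤ) < d by omega)
    refine ⟨i / d, (i % d).toNat, by omega, ?_⟩
    rw [Int.toNat_of_nonneg h1, mul_comm, Int.mul_ediv_add_emod]
  refine ⟨f, d, by omega, ?_, ?_, ?_⟩
  · intro i
    obtain ⟨k, r, hr, rfl⟩ := hrep i
    rw [hfk k r hr.le, add_assoc, ← Nat.cast_succ, hfk k (r + 1) hr]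
    exact hact _ _ _ (hpadj r hr)
  · intro i h
    obtain ⟨k, r, hr, rfl⟩ := hrep i
    rw [hfk k r hr.le] at h
    by_cases hr2 : r + 2 ≤ d
    · rw [add_assoc, show ((r : ℤ) + 2) = ((r + 2 : ℕ) : ℤ) by push_cast; rfl, hfk k _ hr2] at h
      have := hpinj _ hr.le _ hr2 (MulAction.injective _ h)
      omega
    · -- Backtracking at the junction of two translates.
      obtain rfl : d = r + 1 := by omega
      rw [show (k * ((r + 1 : ℕ) : ℤ) + r + 2) = (k + 1) * ((r + 1 : ℕ) : ℤ) + ((1 : ℕ) : ℤ) by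
        push_cast; ring, hfk (k + 1) 1 (by omega), zpow_add_one, mul_smul] at h
      replace h : p r = g • p 1 := MulAction.injective _ h
      rcases Nat.eq_zero_or_pos r with rfl | hr0
      · -- The displacement is `1`, and `g` inverts an edge.
        have h3 : T.Adj (p 0) (p (0 + 1)) := hpadj 0 (by omega)
        exact hninv g (p 0) (p (0 + 1)) h3 ⟨by rw [hpd, hp0], h.symm⟩
      · -- The vertex `p 1` has smaller displacement than `v`.
        have hch : ∀ s : ℕ, 1 + s ≤ r → T.dist (p 1) (p (1 + s)) ≤ s := by
          intro s
          induction s with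
          | zero => simp
          | succ s ih =>
            intro hs
            have h1 := ih (by omega)
            have h2 := SimpleGraph.dist_eq_one_iff_adj.2 (hpadj (1 + s) (by omega))
            have h3 := hT.connected.dist_triangle (u := p 1) (v := p (1 + s)) (w := p (1 + s + 1))
            rw [← add_assoc]
            omega
        have h1 := hch (r - 1) (by omega)
        rw [show 1 + (r - 1) = r by omega, h] at h1
        have h2 := hmin (p 1)
        omega
  · intro i
    obtain ⟨k, r, hr, rfl⟩ := hrep i
    rw [hfk k r hr.le, show (k * (d : ℤ) + r + d) = (k + 1) * d + r by ring, hfk (k + 1) r hr.le,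
      add_comm k 1, zpow_one_add, mul_smul]

/-- A vertex at distance `c` from the axis of `z` is moved by `D + 2c`, where `D` is the
translation length. So the vertices moved by exactly `D` are those on the axis. -/
lemma mem_axis (hT : T.IsTree) (hact : ∀ (g : G) (u v : V), T.Adj u v → T.Adj (g • u) (g • v))
    {f : ℤ → V} (hadj : ∀ i, T.Adj (f i) (f (i + 1))) (hnb : ∀ i, f i ≠ f (i + 2))
    {z : G} {D : ℕ} (hD : 0 < D) (hz : ∀ i, z • f i = f (i + D)) {u : V}
    (hu : T.dist u (z • u) = D) : ∃ i, u = f i := by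
  set i : ℤ := Function.argmin (fun i : ℤ => T.dist u (f i))
  have hmin : ∀ j : ℤ, T.dist u (f i) ≤ T.dist u (f j) :=
    fun j => Function.argmin_le (fun i : ℤ => T.dist u (f i)) j
  by_contra! hne
  -- Moving along the axis from the projection of `u`, the distance to `u` increases.
  have hinc : T.dist u (f (i + 1)) = T.dist u (f i) + 1 := by
    have := hmin (i + 1)
    have := hT.dist_eq_dist_add_one_of_adj u (hadj i)
    omega
  have h1 := path_increasing hT hadj hnb hinc D
  have h2 := path_increasing hT hadj hnb hinc (D - 1)
  have hzne : f (i + D) ≠ z • u := by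
    rw [← hz]
    exact fun h => hne i (MulAction.injective _ h).symm
  have hzd : ∀ j : ℤ, T.dist (f (j + D)) (z • u) = T.dist u (f j) := by
    intro j
    rw [← hz, dist_smul hT hact, T.dist_comm]
  obtain ⟨y, hy, hyd⟩ := exists_step hT hzne
  have hDc : ((D - 1 : ℕ) : ℤ) = D - 1 := by omega
  rw [hDc] at h2
  have hprev : T.Adj (f (i + D)) (f (i + (D - 1))) := by
    have := (hadj (i + (D - 1))).symm
    rwa [show i + ((D : ℤ) - 1) + 1 = i + D by ring] at this
  have hyu : T.dist u y = T.dist u (f (i + D)) + 1 := by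
    rcases hT.dist_eq_dist_add_one_of_adj u hy with h | h
    · have := closer_unique hT hy hprev h (by omega)
      subst this
      have h3 := hzd (i - 1)
      rw [show i - 1 + (D : ℤ) = i + (D - 1) by ring] at h3
      have h4 := hmin (i - 1)
      have h5 := hzd i
      omega
    · exact h
  have h6 := dist_add hT _ _ y rfl hy hyd hyu
  have h7 := hT.connected.pos_dist_of_ne (hne i)
  omega

/-- An element commuting with a translation of positive length along a line is itself a
translation of that line. -/
lemma commute_translates (hT : T.IsTree)
    (hact : ∀ (g : G) (u v : V), T.Adj u v → T.Adj (g • u) (g • v))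
    {f : ℤ → V} (hadj : ∀ i, T.Adj (f i) (f (i + 1))) (hnb : ∀ i, f i ≠ f (i + 2))
    {z : G} {D : ℤ} (hD : 0 < D) (hz : ∀ i, z • f i = f (i + D)) {h : G} (hc : h * z = z * h) :
    ∃ t : ℤ, ∀ i, h • f i = f (i + t) := by
  lift D to ℕ using hD.le
  have hl := line_dist hT hadj hnb
  have hmem : ∀ i, ∃ j, h • f i = f j := by
    intro i
    refine mem_axis hT hact hadj hnb (by omega) hz ?_
    rw [← mul_smul, ← hc, mul_smul, dist_smul hT hact, hz]
    have := hl i (i + D)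
    rw [abs_sub_comm, add_sub_cancel_left, Nat.abs_cast] at this
    omega
  choose s hs using hmem
  have hiso : ∀ i j, |s i - s j| = |i - j| := by
    intro i j
    rw [← hl, ← hs, ← hs, dist_smul hT hact, hl]
  have hsD : ∀ i, s (i + D) = s i + D := by
    intro i
    have h1 : f (s (i + D)) = f (s i + D) := by
      rw [← hs, ← hz, ← hz, ← hs, ← mul_smul, ← mul_smul, hc]
    have h2 := hl (s (i + D)) (s i + D)
    rw [h1, T.dist_self] at h2
    have := abs_eq_zero.1 h2.symm
    omega
  refine ⟨s 0, fun i => ?_⟩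
  rw [hs]
  congr 1
  have h1 := (sq_eq_sq_iff_abs_eq_abs _ _).2 (hiso i 0)
  have h2 := (sq_eq_sq_iff_abs_eq_abs _ _).2 (hiso i (0 + D))
  rw [hsD] at h2
  -- Subtracting the squares leaves a multiple of `D`, which excludes the reflection.
  have h3 : (D : ℤ) * (s i - s 0 - i) = 0 := by linarith [h1, h2]
  rcases mul_eq_zero.1 h3 with h4 | h4 <;> omega

end Action

/-! ### Dihedral braid relations and translations -/

/-- The square of the Garside element of a dihedral Artin group is central. -/
lemma braid_comm {G : Type} [Group G] {p q : G} {k : ℕ}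
    (h : (p * q) ^ k * p = q * (p * q) ^ k) :
    p * (p * q) ^ (2 * k + 1) = (p * q) ^ (2 * k + 1) * p ∧
      q * (p * q) ^ (2 * k + 1) = (p * q) ^ (2 * k + 1) * q := by
  set x := p * q with hx
  -- The Garside element `e` interchanges `p` and `q` by conjugation, and `e ^ 2 = x ^ (2k+1)`.
  obtain ⟨e, he⟩ : ∃ e, e = x ^ k * p := ⟨_, rfl⟩
  have he' : e = q * x ^ k := he.trans h
  have h1 : p * e = e * q := by
    calc p * e = x * x ^ k := by rw [he', hx, mul_assoc]
      _ = x ^ k * x := by rw [← pow_succ', pow_succ]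
      _ = e * q := by rw [he, mul_assoc, ← hx]
  have h2 : q * e = e * p := by
    calc q * e = q * x ^ k * p := by rw [he, mul_assoc]
      _ = e * p := by rw [he']
  have h3 : x ^ (2 * k + 1) = e * e := by
    calc x ^ (2 * k + 1) = x ^ k * x * x ^ k := by
          rw [← pow_succ, ← pow_add]; congr 1; ring
      _ = (x ^ k * p) * (q * x ^ k) := by rw [hx]; simp only [mul_assoc]
      _ = e * e := by rw [← he, ← he']
  rw [h3]
  constructor
  · rw [← mul_assoc, h1, mul_assoc, h2, mul_assoc]
  · rw [← mul_assoc, h2, mul_assoc, h1, mul_assoc]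

section Core

variable {V : Type} {T : SimpleGraph V} {G : Type} [Group G] [MulAction G V]

lemma pow_translates {f : ℤ → V} {g : G} {d : ℤ} (h : ∀ i, g • f i = f (i + d)) (k : ℕ) (i : ℤ) :
    g ^ k • f i = f (i + k * d) := by
  induction k generalizing i with
  | zero => simp
  | succ k ih =>
    rw [pow_succ, mul_smul, h, ih]
    congr 1
    push_cast
    ring

/-- The common form of the two cases of the theorem; `r` is the third generator. -/
lemma core (hT : T.IsTree) (hact : ∀ (g : G) (u v : V), T.Adj u v → T.Adj (g • u) (g • v))
    (hninv : ∀ (g : G) (u v : V), T.Adj u v → ¬(g • u = v ∧ g • v = u))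
    {p q r : G} {k : ℕ} (hb : (p * q) ^ k * p = q * (p * q) ^ k)
    (hr : r * p = p * r ∨ r * q = q * r) (hfree : ∀ v : V, (p * q) • v ≠ v)
    (hgen : ∀ K : Subgroup G, p ∈ K → q ∈ K → r ∈ K → K = ⊤) :
    ∃ ℓ : ℤ → V, Function.Injective ℓ ∧ (∀ i : ℤ, T.Adj (ℓ i) (ℓ (i + 1))) ∧
      ∀ g : G, ∃ t : ℤ, ∀ i : ℤ, g • ℓ i = ℓ (i + t) := by
  obtain ⟨f, d, hd, hadj, hnb, hf⟩ := exists_axis hT hact hninv (p * q) hfree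
  have hl := line_dist hT hadj hnb
  have hinj : Function.Injective f := by
    intro i j hij
    have := hl i j
    rw [hij, T.dist_self] at this
    have := abs_eq_zero.1 this.symm
    omega
  obtain ⟨hp, hq⟩ := braid_comm hb
  have hzD : 0 < ((2 * k + 1 : ℕ) : ℤ) * d := by positivity
  obtain ⟨tp, htp⟩ :=
    commute_translates hT hact hadj hnb hzD (pow_translates hf (2 * k + 1)) hp
  obtain ⟨tq, htq⟩ :=
    commute_translates hT hact hadj hnb hzD (pow_translates hf (2 * k + 1)) hq
  have hsum : tp + tq = d := by
    have := hf 0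
    rw [mul_smul, htq, htp] at this
    have := hinj this
    omega
  -- The braid relation makes the translation lengths of `p` and `q` equal.
  have heq : tp = tq := by
    have := congrArg (fun g : G => g • f 0) hb
    simp only [mul_smul (_ ^ _), mul_smul q] at this
    rw [htp, pow_translates hf, pow_translates hf, htq] at this
    have := hinj this
    linarith
  obtain ⟨tr, htr⟩ : ∃ t : ℤ, ∀ i, r • f i = f (i + t) := by
    rcases hr with h | h
    · exact commute_translates hT hact hadj hnb (by omega) htp h
    · exact commute_translates hT hact hadj hnb (by omega) htq h
  refine ⟨f, hinj, hadj, ?_⟩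
  let K : Subgroup G :=
    { carrier := {g | ∃ t : ℤ, ∀ i, g • f i = f (i + t)}
      one_mem' := ⟨0, by simp⟩
      mul_mem' := by
        rintro g h ⟨s, hs⟩ ⟨t, ht⟩
        exact ⟨t + s, fun i => by rw [mul_smul, ht, hs, add_assoc]⟩
      inv_mem' := by
        rintro g ⟨s, hs⟩
        refine ⟨-s, fun i => ?_⟩
        rw [inv_smul_eq_iff, hs]
        simp }
  have hK : K = ⊤ := hgen K ⟨tp, htp⟩ ⟨tq, htq⟩ ⟨tr, htr⟩
  intro g
  have : g ∈ K := by rw [hK]; trivial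
  exact this

end Core

/-! ### The presentation of the triangle Artin group -/

lemma rel_eq (n m : ℕ) {x y : FreeGroup (Fin 3)} (h : x * y⁻¹ ∈ rels n m) :
    PresentedGroup.mk (rels n m) x = PresentedGroup.mk (rels n m) y :=
  PresentedGroup.mk_eq_mk_of_mul_inv_mem h

lemma generates (n m : ℕ) (K : Subgroup (ArtOdd n m)) (ha : gA n m ∈ K) (hb : gB n m ∈ K)
    (hc : gC n m ∈ K) : K = ⊤ := by
  rw [eq_top_iff, ← PresentedGroup.closure_range_of, Subgroup.closure_le]
  rintro _ ⟨i, rfl⟩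
  fin_cases i
  · exact ha
  · exact hb
  · exact hc

end ArtOdd

/-- Let `n, m ≥ 1` and suppose `G = Art_{2,2n+1,2m+1}` acts without
inversions on a tree `T` so that at least one of `ab`, `bc` fixes no vertex. Then there
is a geodesic line in `T` whose image is `G`-invariant and on which `G` acts by
translations. -/
theorem artOdd_translation_line (n m : ℕ) (hn : 1 ≤ n) (hm : 1 ≤ m)
    (V : Type) (T : SimpleGraph V) (hT : T.IsTree)
    [MulAction (ArtOdd n m) V]
    (hact : ∀ (g : ArtOdd n m) (u v : V), T.Adj u v → T.Adj (g • u) (g • v))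
    (hninv : ∀ (g : ArtOdd n m) (u v : V), T.Adj u v → ¬(g • u = v ∧ g • v = u))
    (hfree : (∀ v : V, (ArtOdd.gA n m * ArtOdd.gB n m) • v ≠ v) ∨
             (∀ v : V, (ArtOdd.gB n m * ArtOdd.gC n m) • v ≠ v)) :
    ∃ ℓ : ℤ → V, Function.Injective ℓ ∧ (∀ i : ℤ, T.Adj (ℓ i) (ℓ (i + 1))) ∧
      ∀ g : ArtOdd n m, ∃ t : ℤ, ∀ i : ℤ, g • ℓ i = ℓ (i + t) := by
  have hac : ArtOdd.gA n m * ArtOdd.gC n m = ArtOdd.gC n m * ArtOdd.gA n m :=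
    ArtOdd.rel_eq n m (x := ArtOdd.a * ArtOdd.c) (y := ArtOdd.c * ArtOdd.a)
      (by simp [ArtOdd.rels])
  have hbc : (ArtOdd.gB n m * ArtOdd.gC n m) ^ n * ArtOdd.gB n m =
      ArtOdd.gC n m * (ArtOdd.gB n m * ArtOdd.gC n m) ^ n :=
    ArtOdd.rel_eq n m (x := (ArtOdd.b * ArtOdd.c) ^ n * ArtOdd.b)
      (y := ArtOdd.c * (ArtOdd.b * ArtOdd.c) ^ n) (Or.inr (Or.inl rfl))
  have hab : (ArtOdd.gA n m * ArtOdd.gB n m) ^ m * ArtOdd.gA n m =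
      ArtOdd.gB n m * (ArtOdd.gA n m * ArtOdd.gB n m) ^ m :=
    ArtOdd.rel_eq n m (x := (ArtOdd.a * ArtOdd.b) ^ m * ArtOdd.a)
      (y := ArtOdd.b * (ArtOdd.a * ArtOdd.b) ^ m) (Or.inr (Or.inr rfl))
  rcases hfree with h | h
  · exact ArtOdd.core hT hact hninv hab (Or.inl hac.symm) h
      fun K ha hb hc => ArtOdd.generates n m K ha hb hc
  · exact ArtOdd.core hT hact hninv hbc (Or.inr hac) h
      fun K hb hc ha => ArtOdd.generates n m K ha hb hc
end

section
/- Let n, m ≥ 1 and let G = Art_{2,2n+1,2m+1} = ⟨a,b,c | ac=ca, (bc)^n b = c(bc)^n, (ab)^m a = b(ab)^m⟩ act minimally and without inversions on a tree T. Then one of the following holds: (1) if a fixes some vertex, then T has exactly one vertex; (2) if a fixes no vertex and at least one of ab or cb fixes no vertex, then the vertex set of T is the image of a geodesic line on which G acts by translations; (3) if a fixes no vertex but both ab and cb fix vertices, then there exist vertices p₀ and q₀ of T such that cb and ab fix q₀, the elements (cb)^n c and (ab)^m a fix p₀, and each of the elements (ab)(cb)^{-1}, (cb)^{-n}(ab)^m,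 (cb)^n(ab)^{-m}, (cb)^{2n+1}, (ab)^{2m+1} fixes both p₀ and q₀. -/
section TreeAction

variable {G V : Type} [Group G] [MulAction G V] (T : SimpleGraph V)

/-- `S` is a `G`-invariant subtree of `T`: a nonempty `G`-invariant set of vertices
closed under taking vertices lying (with respect to the graph metric) between two of
its members. -/
def IsInvariantSubtree (S : Set V) : Prop :=
  S.Nonempty ∧ (∀ (g : G), ∀ v ∈ S, g • v ∈ S) ∧
    ∀ u ∈ S, ∀ v ∈ S, ∀ w : V, T.dist u w + T.dist w v = T.dist u v → w ∈ S

/-- The action of `G` on the tree `T` is minimal if the only invariant subtree is the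
full vertex set. -/
def IsMinimalTreeAction : Prop :=
  ∀ S : Set V, IsInvariantSubtree (G := G) T S → S = Set.univ

end TreeAction

namespace TreeMetric

variable {V : Type} {T : SimpleGraph V}

/-! ### The metric of a tree -/

section Metric

variable (hT : T.IsTree)
include hT

/-- A vertex `u ≠ z` has a unique neighbour closer to `z`. -/
theorem parent_unique {z u v v' : V} (h : T.Adj u v) (h' : T.Adj u v')
    (hd : T.dist z v + 1 = T.dist z u) (hd' : T.dist z v' + 1 = T.dist z u) : v = v' := by
  obtain ⟨p, hp⟩ := hT.connected.exists_walk_length_eq_dist z v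
  obtain ⟨p', hp'⟩ := hT.connected.exists_walk_length_eq_dist z v'
  have e1 : (p.concat h.symm).IsPath :=
    SimpleGraph.Walk.isPath_of_length_eq_dist _ (by simp [hp, hd])
  have e2 : (p'.concat h'.symm).IsPath :=
    SimpleGraph.Walk.isPath_of_length_eq_dist _ (by simp [hp', hd'])
  have e := (hT.existsUnique_path z u).unique e1 e2
  have := congrArg SimpleGraph.Walk.penultimate e
  simpa using this

theorem exists_geodesic (u v : V) : ∃ p : ℕ → V, p 0 = u ∧ p (T.dist u v) = v ∧
    ∀ i j, i ≤ j → j ≤ T.dist u v → T.dist (p i) (p j) = j - i := by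
  obtain ⟨p, hp⟩ := hT.connected.exists_walk_length_eq_dist u v
  have step : ∀ k i, T.dist (p.getVert i) (p.getVert (i + k)) ≤ k := by
    intro k
    induction k with
    | zero => simp
    | succ k ih =>
      intro i
      have h1 := hT.connected.dist_triangle (u := p.getVert i) (v := p.getVert (i + k))
        (w := p.getVert (i + (k + 1)))
      have h2 : T.dist (p.getVert (i + k)) (p.getVert (i + k + 1)) ≤ 1 := by
        by_cases hl : i + k < p.length
        · exact (SimpleGraph.dist_eq_one_iff_adj.2 (p.adj_getVert_succ hl)).le
        · rw [p.getVert_of_length_le (by omega), p.getVert_of_length_le (by omega)]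
          simp
      have := ih i
      rw [← add_assoc] at *
      omega
  refine ⟨p.getVert, by simp, by simp [← hp], fun i j hij hj => ?_⟩
  have h1 := step i 0
  have h2 := step (j - i) i
  have h3 := step (T.dist u v - j) j
  rw [show i + (j - i) = j by omega] at h2
  rw [show j + (T.dist u v - j) = p.length by omega] at h3
  simp only [zero_add, SimpleGraph.Walk.getVert_zero, SimpleGraph.Walk.getVert_length] at h1 h3
  have h4 := hT.connected.dist_triangle (u := u) (v := p.getVert i) (w := p.getVert j)
  have h5 := hT.connected.dist_triangle (u := u) (v := p.getVert j) (w := v)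
  omega

/-- The segment from `u` to `v` contains a vertex at each distance `k ≤ d(u, v)` from `u`. -/
theorem exists_between (u v : V) {k : ℕ} (hk : k ≤ T.dist u v) :
    ∃ w, T.dist u w = k ∧ T.dist w v = T.dist u v - k := by
  obtain ⟨p, h0, h1, h⟩ := exists_geodesic hT u v
  refine ⟨p k, ?_, ?_⟩
  · have := h 0 k (by omega) hk
    rwa [h0] at this
  · have := h k _ hk le_rfl
    rwa [h1] at this

/-- The distance from `z` restricted to a geodesic is V-shaped: in a tree it changes by exactly one
at each step, and it has no interior local maximum. -/
theorem dist_geodesic (z : V) (p : ℕ → V) (L : ℕ)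
    (hp : ∀ i j, i ≤ j → j ≤ L → T.dist (p i) (p j) = j - i) :
    ∃ k ≤ L, ∃ h, ∀ i ≤ L, T.dist z (p i) = h + ((i : ℤ) - k).natAbs := by
  induction L with
  | zero => exact ⟨0, le_rfl, T.dist z (p 0), fun i hi => by simp [Nat.le_zero.1 hi]⟩
  | succ L ih =>
    obtain ⟨k, hk, h, H⟩ := ih fun i j hij hj => hp i j hij (by omega)
    have adj : ∀ i ≤ L, T.Adj (p i) (p (i + 1)) := fun i hi =>
      SimpleGraph.dist_eq_one_iff_adj.1 (by rw [hp i (i + 1) (by omega) (by omega)]; omega)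
    have hne := hT.dist_ne_of_adj z (adj L le_rfl)
    have hdiff := (adj L le_rfl).diff_dist_adj (u := z)
    have hL := H L le_rfl
    rcases Nat.lt_or_ge k L with hkL | hkL
    · have hup : T.dist z (p (L + 1)) = T.dist z (p L) + 1 := by
        by_contra hcon
        obtain ⟨M, rfl⟩ : ∃ M, L = M + 1 := ⟨L - 1, by omega⟩
        have hM := H M (by omega)
        have := parent_unique hT (z := z) (adj M (by omega)).symm (adj (M + 1) le_rfl)
          (by omega) (by omega)
        have h2 := hp M (M + 1 + 1) (by omega) (by omega)
        rw [this, SimpleGraph.dist_self] at h2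
        omega
      refine ⟨k, by omega, h, fun i hi => ?_⟩
      rcases Nat.lt_or_ge i (L + 1) with hi' | hi'
      · exact H i (by omega)
      · obtain rfl : i = L + 1 := by omega
        omega
    · obtain rfl : k = L := by omega
      by_cases hup : T.dist z (p (k + 1)) = T.dist z (p k) + 1
      · refine ⟨k, by omega, h, fun i hi => ?_⟩
        rcases Nat.lt_or_ge i (k + 1) with hi' | hi'
        · exact H i (by omega)
        · obtain rfl : i = k + 1 := by omega
          omega
      · refine ⟨k + 1, by omega, h - 1, fun i hi => ?_⟩
        rcases Nat.lt_or_ge i (k + 1) with hi' | hi'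
        · have := H i (by omega)
          omega
        · obtain rfl : i = k + 1 := by omega
          omega

/-- Every three vertices of a tree have a median. -/
theorem exists_median (x y z : V) : ∃ m, T.dist x m + T.dist m y = T.dist x y ∧
    T.dist x m + T.dist m z = T.dist x z ∧ T.dist y m + T.dist m z = T.dist y z := by
  obtain ⟨p, h0, h1, h⟩ := exists_geodesic hT x y
  obtain ⟨k, hk, e, H⟩ := dist_geodesic hT z p _ h
  have a1 := h 0 k (by omega) hk
  have a2 := h k _ hk le_rfl
  have b0 := H 0 (by omega)
  have b1 := H k hk
  have b2 := H _ le_rfl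
  rw [h0] at a1 b0
  rw [h1] at a2 b2
  have c1 := T.dist_comm (u := z) (v := p k)
  have c2 := T.dist_comm (u := z) (v := x)
  have c3 := T.dist_comm (u := z) (v := y)
  have c4 := T.dist_comm (u := y) (v := p k)
  refine ⟨p k, ?_, ?_, ?_⟩ <;> omega

/-- Trees are `0`-hyperbolic. -/
theorem four_point (x y z w : V) :
    T.dist x y + T.dist z w ≤ T.dist x z + T.dist y w ∨
    T.dist x y + T.dist z w ≤ T.dist x w + T.dist y z := by
  obtain ⟨p, h0, h1, h⟩ := exists_geodesic hT x y
  obtain ⟨k, hk, e, H⟩ := dist_geodesic hT z p _ h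
  obtain ⟨k', hk', e', H'⟩ := dist_geodesic hT w p _ h
  have b0 := H 0 (by omega)
  have b1 := H k hk
  have b2 := H _ le_rfl
  have c0 := H' 0 (by omega)
  have c1 := H' k' hk'
  have c2 := H' _ le_rfl
  rw [h0, T.dist_comm] at b0 c0
  rw [h1, T.dist_comm] at b2 c2
  have t1 := hT.connected.dist_triangle (u := z) (v := p k) (w := w)
  have t2 := hT.connected.dist_triangle (u := p k) (v := p k') (w := w)
  rw [T.dist_comm (u := p k') (v := w)] at t2
  rcases le_total k k' with hkk | hkk
  · have := h k k' hkk hk'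
    omega
  · have := h k' k hkk hk
    rw [T.dist_comm] at this
    omega

/-- A vertex of a geodesic is determined by its distances to the two ends. -/
theorem between_unique {u v w w' : V} (hw : T.dist u w + T.dist w v = T.dist u v)
    (h1 : T.dist u w' = T.dist u w) (h2 : T.dist w' v = T.dist w v) : w = w' := by
  have := four_point hT u v w w'
  rw [T.dist_comm (u := v), T.dist_comm (u := v)] at this
  exact hT.connected.dist_eq_zero_iff.1 (by omega)

end Metric

/-! ### Lines -/

/-- A bi-infinite geodesic, parametrised isometrically by `ℤ`. -/
def IsLine (T : SimpleGraph V) (ℓ : ℤ → V) : Prop :=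
  ∀ i j, T.dist (ℓ i) (ℓ j) = (i - j).natAbs

theorem IsLine.injective {ℓ : ℤ → V} (h : IsLine T ℓ) : Function.Injective ℓ := by
  intro i j hij
  have := h i j
  rw [hij, SimpleGraph.dist_self] at this
  omega

theorem IsLine.adj {ℓ : ℤ → V} (h : IsLine T ℓ) (i : ℤ) : T.Adj (ℓ i) (ℓ (i + 1)) := by
  rw [← SimpleGraph.dist_eq_one_iff_adj, h]
  omega

theorem IsLine.neg {ℓ : ℤ → V} (h : IsLine T ℓ) : IsLine T fun i => ℓ (-i) := by
  intro i j
  rw [h]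
  omega

section Lines

variable (hT : T.IsTree)
include hT

/-- A path without backtracking is geodesic. -/
theorem isLine_of_local {ℓ : ℤ → V} (h1 : ∀ i, T.dist (ℓ i) (ℓ (i + 1)) = 1)
    (h2 : ∀ i, T.dist (ℓ i) (ℓ (i + 2)) = 2) : IsLine T ℓ := by
  have key : ∀ (k : ℕ) (i : ℤ), T.dist (ℓ i) (ℓ (i + k)) = k ∧
      T.dist (ℓ i) (ℓ (i + k + 1)) = k + 1 := by
    intro k
    induction k with
    | zero => intro i; simpa using h1 i
    | succ k ih =>
      intro i
      obtain ⟨a, b⟩ := ih i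
      have c := h1 (i + k)
      have d := h1 (i + k + 1)
      have e := h2 (i + k)
      have f := four_point hT (ℓ i) (ℓ (i + k + 1)) (ℓ (i + k)) (ℓ (i + k + 2))
      have t := hT.connected.dist_triangle (u := ℓ i) (v := ℓ (i + k + 1)) (w := ℓ (i + k + 2))
      rw [T.dist_comm (u := ℓ (i + k + 1)) (v := ℓ (i + k))] at f
      rw [show i + k + 1 + 1 = i + k + 2 by ring] at d
      push_cast
      rw [show i + (k + 1 : ℤ) + 1 = i + k + 2 by ring, show i + (k + 1 : ℤ) = i + k + 1 by ring]
      omega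
  intro i j
  rcases le_total i j with h | h
  · have := (key (j - i).toNat i).1
    rw [show i + ((j - i).toNat : ℤ) = j by omega] at this
    omega
  · have := (key (i - j).toNat j).1
    rw [show j + ((i - j).toNat : ℤ) = i by omega, T.dist_comm] at this
    omega

/-- The vertex `ℓ k` is the nearest point projection of `y` to the line `ℓ`, and `h` is the distance
from `y` to `ℓ`. -/
theorem exists_proj {ℓ : ℤ → V} (hℓ : IsLine T ℓ) (y : V) :
    ∃ (k : ℤ) (h : ℕ), ∀ i, T.dist y (ℓ i) = h + (i - k).natAbs := by
  obtain ⟨k, hk⟩ : ∃ k, ∀ i, T.dist y (ℓ k) ≤ T.dist y (ℓ i) := by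
    exact ⟨_, fun i => Function.argmin_le (fun i => T.dist y (ℓ i)) i⟩
  refine ⟨k, T.dist y (ℓ k), fun i => ?_⟩
  have up := hT.dist_eq_dist_add_one_of_adj y (hℓ.adj k)
  have dn := hT.dist_eq_dist_add_one_of_adj y (hℓ.adj (k - 1))
  rw [sub_add_cancel] at dn
  have h1 := hk (k + 1)
  have h2 := hk (k - 1)
  have h3 := hk i
  have f1 := four_point hT y (ℓ (k + 1)) (ℓ k) (ℓ i)
  have f2 := four_point hT y (ℓ (k - 1)) (ℓ k) (ℓ i)
  have f3 := hT.connected.dist_triangle (u := y) (v := ℓ k) (w := ℓ i)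
  rw [hℓ, hℓ, hℓ] at f1 f2
  rw [hℓ] at f3
  omega

end Lines

/-! ### Elliptic and hyperbolic automorphisms -/

section Action

variable {G : Type} [Group G] [MulAction G V]

/-- `g` translates the line `ℓ` by `t`. -/
def Shifts (g : G) (ℓ : ℤ → V) (t : ℤ) : Prop := ∀ i, g • ℓ i = ℓ (i + t)

theorem Shifts.mul {g g' : G} {ℓ : ℤ → V} {t t' : ℤ} (h : Shifts g ℓ t) (h' : Shifts g' ℓ t') :
    Shifts (g * g') ℓ (t + t') := by
  intro i
  rw [mul_smul, h', h]
  congr 1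
  ring

theorem Shifts.inv {g : G} {ℓ : ℤ → V} {t : ℤ} (h : Shifts g ℓ t) : Shifts g⁻¹ ℓ (-t) := by
  intro i
  rw [inv_smul_eq_iff, h]
  congr 1
  ring

theorem Shifts.one (ℓ : ℤ → V) : Shifts (1 : G) ℓ 0 := by
  intro i
  simp

theorem Shifts.pow {g : G} {ℓ : ℤ → V} {t : ℤ} (h : Shifts g ℓ t) (k : ℕ) :
    Shifts (g ^ k) ℓ (k * t) := by
  induction k with
  | zero => simpa using Shifts.one (G := G) ℓ
  | succ k ih =>
    rw [pow_succ]
    convert ih.mul h using 1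
    push_cast
    ring

theorem Shifts.neg {g : G} {ℓ : ℤ → V} {t : ℤ} (h : Shifts g ℓ t) :
    Shifts g (fun i => ℓ (-i)) (-t) := by
  intro i
  rw [h]
  congr 1
  ring

theorem Shifts.unique {g : G} {ℓ : ℤ → V} {t t' : ℤ} (hℓ : IsLine T ℓ) (h : Shifts g ℓ t)
    (h' : Shifts g ℓ t') : t = t' := by
  have := hℓ.injective ((h 0).symm.trans (h' 0))
  omega

theorem dist_smul (hT : T.IsTree) (hact : ∀ (g : G) (u v : V), T.Adj u v → T.Adj (g • u) (g • v))
    (g : G) (u v : V) : T.dist (g • u) (g • v) = T.dist u v := by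
  have key : ∀ (g : G) (u v : V), T.dist (g • u) (g • v) ≤ T.dist u v := by
    intro g u v
    obtain ⟨p, hp⟩ := hT.connected.exists_walk_length_eq_dist u v
    let f : T →g T := ⟨fun v => g • v, fun h => hact g _ _ h⟩
    have := SimpleGraph.dist_le (p.map f)
    rw [SimpleGraph.Walk.length_map, hp] at this
    exact this
  refine le_antisymm (key g u v) ?_
  have := key g⁻¹ (g • u) (g • v)
  rwa [inv_smul_smul, inv_smul_smul] at this

variable (hT : T.IsTree) (hd : ∀ (g : G) (u v : V), T.dist (g • u) (g • v) = T.dist u v)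
include hT hd

/-- A vertex at distance `h` from a line translated by `t ≠ 0` is moved by `2h + |t|`. -/
theorem dist_smul_self {g : G} {ℓ : ℤ → V} {t k : ℤ} {h : ℕ} {y : V} (hℓ : IsLine T ℓ)
    (hg : Shifts g ℓ t) (ht : t ≠ 0) (hy : ∀ i, T.dist y (ℓ i) = h + (i - k).natAbs) :
    T.dist y (g • y) = 2 * h + t.natAbs := by
  have e : ∀ i, T.dist (g • y) (ℓ (i + t)) = h + (i - k).natAbs := fun i => by
    rw [← hg, hd, hy]
  have a := hy k
  have a' := hy (k + t)
  have b := e k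
  have b' := e (k - t)
  rw [sub_add_cancel] at b'
  have c := hℓ k (k + t)
  have f := four_point hT y (ℓ (k + t)) (g • y) (ℓ k)
  have t1 := hT.connected.dist_triangle (u := y) (v := ℓ (k + t)) (w := g • y)
  have t2 := hT.connected.dist_triangle (u := y) (v := ℓ k) (w := ℓ (k + t))
  have t3 := hT.connected.dist_triangle (u := y) (v := ℓ k) (w := g • y)
  have t4 := hT.connected.dist_triangle (u := ℓ k) (v := ℓ (k + t)) (w := g • y)
  have c1 := T.dist_comm (u := ℓ (k + t)) (v := g • y)
  have c2 := T.dist_comm (u := ℓ (k + t)) (v := ℓ k)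
  omega

/-- A nontrivial translation of a line is not elliptic. -/
theorem Shifts.smul_ne {g : G} {ℓ : ℤ → V} {t : ℤ} (hℓ : IsLine T ℓ) (hg : Shifts g ℓ t)
    (ht : t ≠ 0) (y : V) : g • y ≠ y := by
  intro h
  obtain ⟨k, e, hy⟩ := exists_proj hT hℓ y
  have := dist_smul_self hT hd hℓ hg ht hy
  rw [h, SimpleGraph.dist_self] at this
  omega

/-- A vertex `y` with `d(y, g²y) = 2 d(y, gy)` lies on the axis of the hyperbolic element `g`. By
`dist_smul_self` the two sides are `2h + 2|t|` and `4h + 2|t|`, where `h` is the distance from `y`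
to the axis. -/
theorem mem_axis {g : G} {ℓ : ℤ → V} {t : ℤ} (hℓ : IsLine T ℓ) (hg : Shifts g ℓ t) (ht : t ≠ 0)
    {y : V} (hy : T.dist y (g • g • y) = 2 * T.dist y (g • y)) : ∃ i, ℓ i = y := by
  obtain ⟨k, e, hk⟩ := exists_proj hT hℓ y
  have h1 := dist_smul_self hT hd hℓ hg ht hk
  have h2 := dist_smul_self hT hd hℓ (hg.mul hg) (by omega) hk
  rw [mul_smul] at h2
  have := hk k
  exact ⟨k, (hT.connected.dist_eq_zero_iff.1 (by omega)).symm⟩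

/-- An element conjugating `x` to `y` carries the axis of `x` to the axis of `y`, and the
two translation lengths agree. -/
theorem conj_axis {g x y : G} (hxy : g * x = y * g) {ℓ ℓ' : ℤ → V} {D D' : ℤ} (hℓ : IsLine T ℓ)
    (hℓ' : IsLine T ℓ') (hx : Shifts x ℓ D) (hy : Shifts y ℓ' D') (hD : 0 < D) (hD' : 0 < D') :
    D = D' ∧ ∃ t, ∀ i, g • ℓ i = ℓ' (i + t) := by
  have com : ∀ v : V, g • x • v = y • g • v := fun v => by rw [← mul_smul, hxy, mul_smul]
  have mem : ∀ i, ∃ j, ℓ' j = g • ℓ i := by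
    intro i
    apply mem_axis hT hd hℓ' hy hD'.ne'
    rw [← com, ← com, hd, hd, hx, hx, hℓ, hℓ]
    omega
  choose f hf using mem
  have iso : ∀ i j, (f i - f j).natAbs = (i - j).natAbs := by
    intro i j
    rw [← hℓ', hf, hf, hd, hℓ]
  have tr : ∀ i, f (i + D) = f i + D' := by
    intro i
    apply hℓ'.injective
    rw [hf, ← hx, com, ← hf, hy]
  have eD : D = D' := by
    have := iso (0 + D) 0
    rw [tr] at this
    omega
  refine ⟨eD, f 0, fun i => ?_⟩
  rw [← hf]
  congr 1
  have h1 := iso i 0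
  have h2 := iso i (0 + D)
  rw [tr] at h2
  omega

/-- An element of the centralizer of a hyperbolic element acts
on its axis as a translation. -/
theorem commute_axis {g x : G} (hxy : g * x = x * g) {ℓ : ℤ → V} {D : ℤ} (hℓ : IsLine T ℓ)
    (hx : Shifts x ℓ D) (hD : 0 < D) : ∃ t, Shifts g ℓ t :=
  (conj_axis hT hd hxy hℓ hℓ hx hx hD hD).2

/-- If `g` is elliptic then `d(r, g r)` is even and `g` fixes the midpoint of `[r, g r]`. -/
theorem midpoint_fixed {g : G} {p : V} (hp : g • p = p) (r : V) :
    ∃ e, T.dist r (g • r) = 2 * e ∧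
      ∀ w, T.dist r w = e → T.dist w (g • r) = e → g • w = w := by
  obtain ⟨m, h1, h2, h3⟩ := exists_median hT r (g • r) p
  have hpr := hd g r p
  rw [hp] at hpr
  have c := T.dist_comm (u := g • r) (v := m)
  refine ⟨T.dist r m, by omega, fun w w1 w2 => ?_⟩
  obtain rfl : m = w := between_unique hT h1 w1 (by omega)
  symm
  apply between_unique hT (w' := g • m) h3
  · rw [hd, c]
    omega
  · have := hd g m p
    rwa [hp] at this

/-- The fixed vertices of a group element form a subtree. -/
theorem between_fixed {g : G} {u v w : V} (hu : g • u = u) (hv : g • v = v)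
    (hw : T.dist u w + T.dist w v = T.dist u v) : g • w = w := by
  have h1 := hd g u w
  have h2 := hd g w v
  rw [hu] at h1
  rw [hv] at h2
  exact (between_unique hT hw h1 h2).symm

/-- Serre's lemma: two elliptic elements with elliptic product have a common fixed vertex. -/
theorem serre_fixed {x y : G} {p q r : V} (hp : x • p = p) (hq : y • q = q)
    (hr : (x * y) • r = r) : ∃ v : V, x • v = v ∧ y • v = v := by
  -- `y r = x⁻¹ r`, so `x` and `y` both fix the midpoint of `[r, y r]`
  have e : x⁻¹ • r = y • r := by rw [inv_smul_eq_iff, ← mul_smul, hr]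
  have hp' : x⁻¹ • p = p := by rw [inv_smul_eq_iff, hp]
  obtain ⟨a, ha, hA⟩ := midpoint_fixed hT hd hq r
  obtain ⟨b, hb, hB⟩ := midpoint_fixed hT hd hp' r
  rw [e] at hb hB
  obtain ⟨w, w1, w2⟩ := exists_between hT r (y • r) (k := a) (by omega)
  refine ⟨w, ?_, hA w w1 (by omega)⟩
  have := hB w (by omega) (by omega)
  rw [inv_smul_eq_iff] at this
  exact this.symm

/-- Commuting elliptic elements have a common fixed vertex: `y` fixes `q` and `x q`, hence also the
midpoint of `[q, x q]`, which is fixed by `x`. -/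
theorem commute_fixed {x y : G} (hxy : x * y = y * x) {p q : V} (hp : x • p = p)
    (hq : y • q = q) : ∃ v : V, x • v = v ∧ y • v = v := by
  obtain ⟨a, ha, hA⟩ := midpoint_fixed hT hd hp q
  obtain ⟨w, w1, w2⟩ := exists_between hT q (x • q) (k := a) (by omega)
  refine ⟨w, hA w w1 (by omega), ?_⟩
  refine between_fixed hT hd hq (v := x • q) ?_ (by omega)
  rw [← mul_smul, ← hxy, mul_smul, hq]

/-- Helly's theorem for three fixed subtrees. -/
theorem helly_fixed {x y z : G} {u v w : V} (hu : x • u = u ∧ y • u = u)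
    (hv : y • v = v ∧ z • v = v) (hw : x • w = w ∧ z • w = w) :
    ∃ o : V, x • o = o ∧ y • o = o ∧ z • o = o := by
  obtain ⟨o, h1, h2, h3⟩ := exists_median hT u v w
  exact ⟨o, between_fixed hT hd hu.1 hw.1 h2, between_fixed hT hd hu.2 hv.1 h1,
    between_fixed hT hd hv.2 hw.2 h3⟩

/-- An automorphism of a tree that inverts no edge is either elliptic or hyperbolic, i.e. it
translates some line. The line is built from the translates of a segment `[x, gx]` of minimal
length. -/
theorem elliptic_or_hyperbolic (g : G)
    (hninv : ∀ u v : V, T.Adj u v → ¬(g • u = v ∧ g • v = u)) :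
    (∃ v : V, g • v = v) ∨ ∃ (ℓ : ℤ → V) (D : ℤ), IsLine T ℓ ∧ 0 < D ∧ Shifts g ℓ D := by
  by_cases hfix : ∃ v : V, g • v = v
  · exact Or.inl hfix
  right
  have hne := hT.connected.nonempty
  obtain ⟨x, hx⟩ : ∃ x : V, ∀ y, T.dist x (g • x) ≤ T.dist y (g • y) :=
    ⟨_, fun y => Function.argmin_le (fun y : V => T.dist y (g • y)) y⟩
  obtain ⟨p, p0, p1, hp⟩ := exists_geodesic hT x (g • x)
  have hDpos : T.dist x (g • x) ≠ 0 := fun h =>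
    hfix ⟨x, (hT.connected.dist_eq_zero_iff.1 h).symm⟩
  generalize hD : T.dist x (g • x) = D at *
  have hDz : (0 : ℤ) < D := by omega
  -- the path `[x, gx]` and its translates are glued to a line
  let ℓ : ℤ → V := fun i => g ^ (i / D) • p (i % D).toNat
  have hsh : Shifts g ℓ D := by
    intro i
    simp only [ℓ]
    rw [Int.add_emod_right, Int.add_ediv_of_dvd_right (dvd_refl _), Int.ediv_self hDz.ne',
      ← mul_smul, mul_self_zpow]
  have hlow : ∀ r : ℕ, r ≤ D → ℓ r = p r := by
    intro r hr
    rcases Nat.lt_or_ge r D with h | h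
    · simp only [ℓ]
      rw [Int.ediv_eq_zero_of_lt (by omega) (by omega), Int.emod_eq_of_lt (by omega) (by omega)]
      simp
    · obtain rfl : r = D := by omega
      simp only [ℓ]
      rw [Int.ediv_self hDz.ne', Int.emod_self]
      simp [p0, p1]
  have hred : ∀ (k i : ℤ), T.dist (ℓ i) (ℓ (i + k)) = T.dist (ℓ (i % D)) (ℓ (i % D + k)) := by
    intro k i
    have hz : ∀ n j : ℤ, g ^ n • ℓ j = ℓ (j + n * D) := by
      intro n j
      rcases n with n | n
      · simpa using hsh.pow n j
      · rw [zpow_negSucc, (hsh.pow (n + 1)).inv, Int.negSucc_eq]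
        push_cast
        congr 1
    rw [← hd (g ^ (i / D)) (ℓ (i % D)), hz, hz]
    have := Int.emod_add_mul_ediv i D
    congr 2 <;> linarith
  have l1 : ∀ i, T.dist (ℓ i) (ℓ (i + 1)) = 1 := by
    intro i
    rw [hred]
    have h0 := Int.emod_nonneg i hDz.ne'
    have h1 := Int.emod_lt_of_pos i hDz
    obtain ⟨r, hr⟩ := Int.eq_ofNat_of_zero_le h0
    rw [hr] at h1 ⊢
    have e := hlow (r + 1) (by omega)
    push_cast at e
    rw [e, hlow r (by omega), hp r (r + 1) (by omega) (by omega)]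
    omega
  refine ⟨ℓ, D, isLine_of_local hT l1 fun i => ?_, hDz, hsh⟩
  rw [hred]
  have h0 := Int.emod_nonneg i hDz.ne'
  have h1 := Int.emod_lt_of_pos i hDz
  obtain ⟨r, hr⟩ := Int.eq_ofNat_of_zero_le h0
  rw [hr] at h1 ⊢
  rcases Nat.lt_or_ge (r + 1) D with h | h
  · have e := hlow (r + 2) (by omega)
    push_cast at e
    rw [e, hlow r (by omega), hp r (r + 2) (by omega) (by omega)]
    omega
  -- at the junction, backtracking contradicts the choice of `x` or the absence of inversions
  · have a1 := l1 r
    have a2 := l1 (r + 1)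
    rw [show (r : ℤ) + 1 + 1 = r + 2 by ring] at a2
    have t := hT.dist_eq_dist_add_one_of_adj (ℓ r) (SimpleGraph.dist_eq_one_iff_adj.1 a2)
    by_contra hcon
    have hb : ℓ r = ℓ (r + 2) := hT.connected.dist_eq_zero_iff.1 (by omega)
    have hg : g • ℓ 1 = ℓ r := by
      rw [hsh, hb]
      congr 1
      omega
    have hg0 : g • ℓ 0 = ℓ (r + 1) := by
      rw [hsh]
      congr 1
      omega
    rcases Nat.lt_or_ge D 2 with hD2 | hD2
    · obtain rfl : r = 0 := by omega
      apply hninv _ _ (SimpleGraph.dist_eq_one_iff_adj.1 (l1 0))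
      exact ⟨by simpa using hg0, by simpa using hg⟩
    · have h3 := hx (ℓ 1)
      have e := hlow 1 (by omega)
      push_cast at e
      rw [hg, e, hlow r (by omega), hp 1 r (by omega) (by omega)] at h3
      omega

/-! ### Two elements satisfying an odd dihedral relation -/

omit hT hd

theorem elliptic_conj {x y g : G} (hxy : g * x = y * g) (hy : ∃ v : V, y • v = v) :
    ∃ v : V, x • v = v := by
  obtain ⟨v, hv⟩ := hy
  refine ⟨g⁻¹ • v, ?_⟩
  rw [eq_inv_smul_iff, ← mul_smul, hxy, mul_smul, smul_inv_smul, hv]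

theorem pow_fixed {g : G} {v : V} (h : g • v = v) (k : ℕ) : g ^ k • v = v :=
  (MulAction.stabilizer G v).pow_mem h k

/-- The relation `(xy)^m x = y (xy)^m` says that the Garside element `Δ = (xy)^m x` of the dihedral
Artin group conjugates `x` to `y`. -/
theorem garside_mul_left {x y : G} {m : ℕ} (h : (x * y) ^ m * x = y * (x * y) ^ m) :
    ((x * y) ^ m * x) * x = y * ((x * y) ^ m * x) := by
  rw [← mul_assoc, h]

theorem garside_sq {x y : G} {m : ℕ} (h : (x * y) ^ m * x = y * (x * y) ^ m) :
    ((x * y) ^ m * x) * ((x * y) ^ m * x) = (x * y) ^ (2 * m + 1) := by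
  nth_rewrite 2 [h]
  rw [show 2 * m + 1 = m + 1 + m by ring, pow_add, pow_succ]
  simp only [mul_assoc]

/-- The square `(xy)^(2m+1)` of the Garside element is central. -/
theorem garside_sq_comm {x y : G} {m : ℕ} (h : (x * y) ^ m * x = y * (x * y) ^ m) :
    (x * y) ^ (2 * m + 1) * x = x * (x * y) ^ (2 * m + 1) := by
  have h2 : ((x * y) ^ m * x) * y = x * ((x * y) ^ m * x) := by
    rw [mul_assoc, ← pow_succ, pow_succ', mul_assoc, h]
  rw [← garside_sq h, mul_assoc, garside_mul_left h, ← mul_assoc, h2, mul_assoc]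

include hT hd

/-- If `xy` is hyperbolic, then its axis is also the axis of `x` and of `y`, since the Garside element
`Δ` commutes with `Δ² = (xy)^(2m+1)` and therefore translates that axis by half as much as `Δ²`. -/
theorem dihedral_axis {x y : G} {m : ℕ} (h : (x * y) ^ m * x = y * (x * y) ^ m) {ℓ : ℤ → V}
    {D : ℤ} (hℓ : IsLine T ℓ) (hxy : Shifts (x * y) ℓ D) (hD : 0 < D) :
    ∃ t, 0 < t ∧ Shifts x ℓ t ∧ Shifts y ℓ t := by
  have hp := hxy.pow (2 * m + 1)
  have hm := hxy.pow m
  have hcom : ((x * y) ^ m * x) * (x * y) ^ (2 * m + 1) =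
      (x * y) ^ (2 * m + 1) * ((x * y) ^ m * x) := by
    rw [← garside_sq h]
    exact (mul_assoc _ _ _).symm
  have hmD : (0 : ℤ) ≤ m * D := by positivity
  have e : ((2 * m + 1 : ℕ) : ℤ) * D = 2 * (m * D) + D := by push_cast; ring
  rw [e] at hp
  generalize (m : ℤ) * D = M at *
  obtain ⟨t, ht⟩ := commute_axis hT hd hcom hℓ hp (by omega)
  have ht2 := ht.mul ht
  rw [garside_sq h] at ht2
  have e2 := ht2.unique hℓ hp
  have hx : Shifts x ℓ (-M + t) := by
    have := hm.inv.mul ht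
    rwa [inv_mul_cancel_left] at this
  refine ⟨-M + t, by omega, hx, ?_⟩
  have := hx.inv.mul hxy
  rw [inv_mul_cancel_left] at this
  convert this using 1
  omega

/-- If the product of two elements of equal translation length is elliptic, their axes share
a segment of at least that length, which they translate in opposite directions. -/
theorem axes_overlap {x y : G} {ℓ ℓ' : ℤ → V} {D : ℤ} (hℓ : IsLine T ℓ) (hℓ' : IsLine T ℓ')
    (hx : Shifts x ℓ D) (hy : Shifts y ℓ' D) (hD : 0 < D) {r : V} (hr : (x * y) • r = r) :
    ∃ k k', ℓ k = ℓ' k' ∧ ℓ (k - D) = ℓ' (k' + D) := by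
  have e : x⁻¹ • r = y • r := by rw [inv_smul_eq_iff, ← mul_smul, hr]
  -- both axes run along the middle part of the segment `[r, y r]`
  obtain ⟨k, h, H⟩ := exists_proj hT hℓ r
  obtain ⟨k', h', H'⟩ := exists_proj hT hℓ' r
  have d1 := dist_smul_self hT hd hℓ hx.inv (by omega) H
  have d2 := dist_smul_self hT hd hℓ' hy (by omega) H'
  have s1 : ∀ i, T.dist (y • r) (ℓ (i + -D)) = h + (i - k).natAbs := fun i => by
    rw [← hx.inv, ← e, hd, H]
  have s2 : ∀ i, T.dist (y • r) (ℓ' (i + D)) = h' + (i - k').natAbs := fun i => by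
    rw [← hy, hd, H']
  rw [e] at d1
  have a1 := H k
  have a2 := H (k - D)
  have a3 := s1 (k + D)
  have a4 := s1 k
  have b1 := H' k'
  have b2 := H' (k' + D)
  have b3 := s2 (k' - D)
  have b4 := s2 k'
  rw [T.dist_comm, add_neg_cancel_right] at a3
  rw [T.dist_comm, ← sub_eq_add_neg] at a4
  rw [T.dist_comm, sub_add_cancel] at b3
  rw [T.dist_comm] at b4
  exact ⟨k, k', between_unique hT (u := r) (v := y • r) (by omega) (by omega) (by omega),
    between_unique hT (u := r) (v := y • r) (by omega) (by omega) (by omega)⟩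

/-- If `x` is hyperbolic and `xy` is elliptic, then the square of the Garside element fixes the axis
of `x` pointwise: it commutes with `x` and is elliptic, being a power of `xy`. -/
theorem garside_sq_axis {x y : G} {m : ℕ} (h : (x * y) ^ m * x = y * (x * y) ^ m) {ℓ : ℤ → V}
    {D : ℤ} (hℓ : IsLine T ℓ) (hx : Shifts x ℓ D) (hD : 0 < D) {r : V} (hr : (x * y) • r = r)
    (i : ℤ) : ((x * y) ^ m * x) • ((x * y) ^ m * x) • ℓ i = ℓ i := by
  obtain ⟨t, ht⟩ := commute_axis hT hd (garside_sq_comm h) hℓ hx hD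
  rw [← mul_smul, garside_sq h, ht]
  have : t = 0 := by
    by_contra h0
    refine ht.smul_ne hT hd hℓ h0 r ?_
    exact pow_fixed hr _
  rw [this, add_zero]

variable (hell : ∀ g : G, (∃ v : V, g • v = v) ∨
  ∃ (ℓ : ℤ → V) (D : ℤ), IsLine T ℓ ∧ 0 < D ∧ Shifts g ℓ D)
include hell

/-- Elliptic generators of a dihedral Artin group of odd type have a common fixed vertex, as their
product is elliptic by `dihedral_axis`. -/
theorem dihedral_fixed {x y : G} {m : ℕ} (h : (x * y) ^ m * x = y * (x * y) ^ m)
    (hx : ∃ v : V, x • v = v) (hy : ∃ v : V, y • v = v) : ∃ v : V, x • v = v ∧ y • v = v := by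
  obtain ⟨p, hp⟩ := hx
  obtain ⟨q, hq⟩ := hy
  rcases hell (x * y) with ⟨r, hr⟩ | ⟨ℓ, D, hℓ, hD, hs⟩
  · exact serre_fixed hT hd hp hq hr
  · obtain ⟨t, ht, h1, -⟩ := dihedral_axis hT hd h hℓ hs hD
    exact absurd hp (h1.smul_ne hT hd hℓ ht.ne' p)

/-! ### Three generators with elliptic products -/

/-- The configuration in which `a` is hyperbolic while `ab` and `cb` are elliptic. The axis
of `a`, which is also that of `c`, overlaps the axis of `b`. The vertex `q` lies on this overlap, at
least one translation length away from one of its ends, and `p` is the midpoint of the overlap. -/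
theorem both_elliptic {a b c : G} {n m : ℕ} (hac : a * c = c * a)
    (hab : (a * b) ^ m * a = b * (a * b) ^ m) (hcb : (c * b) ^ n * c = b * (c * b) ^ n)
    (ha : ∀ v : V, a • v ≠ v) {r s : V} (hr : (a * b) • r = r) (hs : (c * b) • s = s) :
    ∃ p q : V, (c * b) • q = q ∧ (a * b) • q = q ∧ ((c * b) ^ n * c) • p = p ∧
      ((a * b) ^ m * a) • p = p ∧ a • p = c • p := by
  obtain ⟨ℓ, D, hℓ, hD, hA⟩ := (hell a).resolve_left fun ⟨v, hv⟩ => ha v hv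
  have hΔ := garside_sq_axis hT hd hab hℓ hA hD hr
  have hΔa := garside_mul_left hab
  have hE := garside_mul_left hcb
  have hΔ2 := garside_sq hab
  generalize hΔdef : (a * b) ^ m * a = Δ at *
  -- `ℓ'` is the axis of `b`
  obtain ⟨ℓ', hℓ'def⟩ : ∃ ℓ' : ℤ → V, ∀ i, ℓ' i = Δ • ℓ i := ⟨_, fun _ => rfl⟩
  have hℓ' : IsLine T ℓ' := fun i j => by rw [hℓ'def, hℓ'def, hd, hℓ]
  have hB : Shifts b ℓ' D := fun i => by
    rw [hℓ'def, hℓ'def, ← mul_smul, ← hΔa, mul_smul, hA]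
  have hΔ' : ∀ i, Δ • ℓ' i = ℓ i := fun i => by rw [hℓ'def, hΔ]
  obtain ⟨k, k', o1, o2⟩ := axes_overlap hT hd hℓ hℓ' hA hB hD hr
  -- `c` is hyperbolic of the same translation length
  have hcne : ∀ v : V, c • v ≠ v := fun v hv =>
    hB.smul_ne hT hd hℓ' hD.ne' (((c * b) ^ n * c) • v) (by rw [← mul_smul, ← hE, mul_smul, hv])
  obtain ⟨t, hC⟩ := commute_axis hT hd hac.symm hℓ hA hD
  have ht0 : t ≠ 0 := by
    rintro rfl
    exact hcne (ℓ 0) (by simpa using hC 0)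
  have htD : t = D := by
    rcases lt_or_gt_of_ne ht0 with hneg | hpos
    · -- overlaps of both orientations are incompatible
      exfalso
      obtain ⟨e, -⟩ := conj_axis hT hd hE hℓ.neg hℓ' hC.neg hB (by omega) hD
      obtain ⟨j, j', u1, u2⟩ := axes_overlap hT hd hℓ.neg hℓ' (e ▸ hC.neg) hB hD hs
      have w1 := hℓ k (-j)
      have w2 := hℓ k (-(j - D))
      have w3 := hℓ (k - D) (-j)
      have w4 := hℓ (k - D) (-(j - D))
      rw [o1, u1, hℓ'] at w1
      rw [o1, u2, hℓ'] at w2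
      rw [o2, u1, hℓ'] at w3
      rw [o2, u2, hℓ'] at w4
      omega
    · exact (conj_axis hT hd hE hℓ hℓ' hC hB hpos hD).1
  rw [htD] at hC
  have hfixed : ∀ i, a • ℓ i = c • ℓ i := fun i => by rw [hA, hC]
  have hbk : b • ℓ k = ℓ (k - D) := by rw [o1, hB, ← o2]
  have hq1 : (a * b) • ℓ k = ℓ k := by rw [mul_smul, hbk, hA, sub_add_cancel]
  have hq2 : (c * b) • ℓ k = ℓ k := by rw [mul_smul, hbk, hC, sub_add_cancel]
  -- the involution `Δ` on `ℓ ∪ ℓ'` reverses the overlap, hence fixes its midpoint `ℓ M`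
  obtain ⟨p, hp⟩ : ∃ p : V, Δ • p = p := by
    rcases hell Δ with h | ⟨ℓ₁, D₁, g1, g2, g3⟩
    · exact h
    · have := g3.mul g3
      rw [hΔ2] at this
      exact absurd (pow_fixed hr _) (this.smul_ne hT hd g1 (by omega) r)
  have hΔk : Δ • ℓ k = ℓ k' := by rw [o1, hΔ']
  obtain ⟨M, hM⟩ : ∃ M, Δ • ℓ M = ℓ M := by
    obtain ⟨e, he, hw⟩ := midpoint_fixed hT hd hp (ℓ k)
    rw [hΔk, hℓ] at he
    refine ⟨(k + k') / 2, hw _ ?_ ?_⟩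
    · rw [hℓ]
      omega
    · rw [hΔk, hℓ]
      omega
  have hEE := garside_sq_axis hT hd hcb hℓ hC hD hs
  obtain ⟨-, t', ht'⟩ := conj_axis hT hd hE hℓ hℓ' hC hB hD hD
  have ht'0 : t' = 0 := by
    by_contra h0
    -- otherwise the overlap is invariant under a nontrivial translation
    have shift : ∀ i, ℓ i = ℓ' (k + k' - i) →
        ℓ (i + t') = ℓ' (k + k' - (i + t')) ∧ ℓ (i - t') = ℓ' (k + k' - (i - t')) := by
      have i1 : ∀ i, ℓ i = ℓ' (k + k' - i) → ℓ (k + k' - i) = ℓ' i := by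
        intro i hi
        rw [← hΔ' (k + k' - i), ← hi, hℓ'def]
      have i2 : ∀ i, ℓ i = ℓ' (k + k' - i) → ℓ (k + k' - i - t') = ℓ' (i + t') := by
        intro i hi
        have h1 := ht' (k + k' - i - t')
        rw [sub_add_cancel] at h1
        rw [← hEE (k + k' - i - t'), h1, ← hi, ht']
      intro i hi
      constructor
      · have h1 := i2 i hi
        have h2 := i1 _ (h1.trans (by congr 1; ring))
        convert h2 using 2 <;> ring
      · have h1 := i1 i hi
        have h2 := i2 _ (h1.trans (by congr 1; ring))
        convert h2 using 2 <;> ring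
    have far : ∀ N : ℕ, ℓ (k + N * t') = ℓ' (k + k' - (k + N * t')) ∧
        ℓ (k - N * t') = ℓ' (k + k' - (k - N * t')) := by
      intro N
      induction N with
      | zero => simp [o1]
      | succ N ih =>
        have h1 := (shift _ ih.1).1
        have h2 := (shift _ ih.2).2
        push_cast
        constructor
        · convert h1 using 2 <;> ring
        · convert h2 using 2 <;> ring
    have all : ∀ i, ℓ i = ℓ' (k + k' - i) := by
      intro i
      obtain ⟨f1, f2⟩ := far (i - k).natAbs
      have hN : ((i - k).natAbs : ℤ) ≤ (((i - k).natAbs : ℤ) * t').natAbs := by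
        rw [Int.natAbs_mul, Int.natAbs_natCast]
        exact_mod_cast Nat.le_mul_of_pos_right _ (Int.natAbs_pos.2 h0)
      generalize ((i - k).natAbs : ℤ) * t' = S at *
      apply between_unique hT (u := ℓ (k + S)) (v := ℓ (k - S))
      · rw [hℓ, hℓ, hℓ]
        omega
      · rw [hℓ _ i, f1, hℓ']
        omega
      · rw [hℓ i, f2, hℓ']
        omega
    -- then the axes of `a` and `b` coincide and `Δ` translates them by `D`
    have hB' : Shifts b ℓ (-D) := by
      intro i
      rw [all, hB, all]
      congr 1
      ring
    have h1 := ((hA.mul hB').pow m).mul hA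
    rw [hΔdef] at h1
    refine h1.smul_ne hT hd hℓ ?_ p hp
    rw [add_neg_cancel, mul_zero, zero_add]
    exact hD.ne'
  refine ⟨ℓ M, ℓ k, hq2, hq1, ?_, hM, hfixed M⟩
  rw [ht', ht'0, add_zero, hℓ'def, hM]

end Action

end TreeMetric

/-! ### The Artin group -/

namespace ArtOdd

theorem rel_ac (n m : ℕ) : gA n m * gC n m = gC n m * gA n m := by
  have := PresentedGroup.mk_eq_mk_of_mul_inv_mem (rels := rels n m) (x := a * c) (y := c * a)
    (by simp [rels])
  simp only [map_mul] at this
  exact this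

theorem rel_ab (n m : ℕ) :
    (gA n m * gB n m) ^ m * gA n m = gB n m * (gA n m * gB n m) ^ m := by
  have := PresentedGroup.mk_eq_mk_of_mul_inv_mem (rels := rels n m)
    (x := (a * b) ^ m * a) (y := b * (a * b) ^ m) (by simp [rels])
  simp only [map_mul, map_pow] at this
  exact this

/-- The relation between `b` and `c`, with `c` in the role of the first generator. -/
theorem rel_cb (n m : ℕ) :
    (gC n m * gB n m) ^ n * gC n m = gB n m * (gC n m * gB n m) ^ n := by
  have : (gB n m * gC n m) ^ n * gB n m = gC n m * (gB n m * gC n m) ^ n := by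
    have := PresentedGroup.mk_eq_mk_of_mul_inv_mem (rels := rels n m)
      (x := (b * c) ^ n * b) (y := c * (b * c) ^ n) (by simp [rels])
    simp only [map_mul, map_pow] at this
    exact this
  rw [mul_pow_mul, ← this, mul_pow_mul]

/-- A subgroup containing the three generators is everything. -/
theorem mem_of_generators {n m : ℕ} (H : Subgroup (ArtOdd n m)) (hA : gA n m ∈ H)
    (hB : gB n m ∈ H) (hC : gC n m ∈ H) (g : ArtOdd n m) : g ∈ H := by
  refine PresentedGroup.generated_by _ H (fun j => ?_) g
  fin_cases j
  · exact hA
  · exact hB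
  · exact hC

end ArtOdd

open TreeMetric in
/-- Trichotomy for a minimal action without inversions of
`G = Art_{2,2n+1,2m+1}` on a tree `T`. -/
theorem artOdd_minimal_action_trichotomy (n m : ℕ) (hn : 1 ≤ n) (hm : 1 ≤ m)
    (V : Type) (T : SimpleGraph V) (hT : T.IsTree)
    [MulAction (ArtOdd n m) V]
    (hact : ∀ (g : ArtOdd n m) (u v : V), T.Adj u v → T.Adj (g • u) (g • v))
    (hninv : ∀ (g : ArtOdd n m) (u v : V), T.Adj u v → ¬(g • u = v ∧ g • v = u))
    (hmin : IsMinimalTreeAction (G := ArtOdd n m) T) :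
    ((∃ v : V, ArtOdd.gA n m • v = v) → ∀ u v : V, u = v) ∧
    (((∀ v : V, ArtOdd.gA n m • v ≠ v) ∧
        ((∀ v : V, (ArtOdd.gA n m * ArtOdd.gB n m) • v ≠ v) ∨
         (∀ v : V, (ArtOdd.gC n m * ArtOdd.gB n m) • v ≠ v))) →
      ∃ ℓ : ℤ → V, Function.Injective ℓ ∧ (∀ i : ℤ, T.Adj (ℓ i) (ℓ (i + 1))) ∧
        Set.range ℓ = Set.univ ∧
        ∀ g : ArtOdd n m, ∃ t : ℤ, ∀ i : ℤ, g • ℓ i = ℓ (i + t)) ∧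
    (((∀ v : V, ArtOdd.gA n m • v ≠ v) ∧
        (∃ v : V, (ArtOdd.gA n m * ArtOdd.gB n m) • v = v) ∧
        (∃ v : V, (ArtOdd.gC n m * ArtOdd.gB n m) • v = v)) →
      ∃ p₀ q₀ : V,
        (ArtOdd.gC n m * ArtOdd.gB n m) • q₀ = q₀ ∧
        (ArtOdd.gA n m * ArtOdd.gB n m) • q₀ = q₀ ∧
        ((ArtOdd.gC n m * ArtOdd.gB n m) ^ n * ArtOdd.gC n m) • p₀ = p₀ ∧
        ((ArtOdd.gA n m * ArtOdd.gB n m) ^ m * ArtOdd.gA n m) • p₀ = p₀ ∧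
        (∀ g ∈ ({(ArtOdd.gA n m * ArtOdd.gB n m) * (ArtOdd.gC n m * ArtOdd.gB n m)⁻¹,
                 (ArtOdd.gC n m * ArtOdd.gB n m) ^ (-(n : ℤ)) *
                   (ArtOdd.gA n m * ArtOdd.gB n m) ^ (m : ℤ),
                 (ArtOdd.gC n m * ArtOdd.gB n m) ^ (n : ℤ) *
                   (ArtOdd.gA n m * ArtOdd.gB n m) ^ (-(m : ℤ)),
                 (ArtOdd.gC n m * ArtOdd.gB n m) ^ (2 * n + 1),
                 (ArtOdd.gA n m * ArtOdd.gB n m) ^ (2 * m + 1)} : Set (ArtOdd n m)),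
          g • p₀ = p₀ ∧ g • q₀ = q₀)) := by
  have hd := TreeMetric.dist_smul hT hact
  have hell : ∀ g : ArtOdd n m, _ := fun g => elliptic_or_hyperbolic hT hd g (hninv g)
  have rac := ArtOdd.rel_ac n m
  have rab := ArtOdd.rel_ab n m
  have rcb := ArtOdd.rel_cb n m
  have gen := @ArtOdd.mem_of_generators n m
  generalize ArtOdd.gA n m = a at *
  generalize ArtOdd.gB n m = b at *
  generalize ArtOdd.gC n m = c at *
  refine ⟨fun ha => ?_, fun ⟨ha, h⟩ => ?_, fun ⟨ha, ⟨r, hr⟩, ⟨s, hs⟩⟩ => ?_⟩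
  · -- `a`, `b`, `c` are conjugate, hence all elliptic; their fixed subtrees meet pairwise
    have hb : ∃ v : V, b • v = v := by
      refine elliptic_conj (g := ((a * b) ^ m * a)⁻¹) ?_ ha
      rw [inv_mul_eq_iff_eq_mul, ← mul_assoc, garside_mul_left rab, mul_inv_cancel_right]
    have hc : ∃ v : V, c • v = v := elliptic_conj (garside_mul_left rcb) hb
    obtain ⟨u, hu⟩ := dihedral_fixed hT hd hell rab ha hb
    obtain ⟨v, hv⟩ := dihedral_fixed hT hd hell rcb hc hb
    obtain ⟨p, hp⟩ := ha
    obtain ⟨q, hq⟩ := hc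
    obtain ⟨w, hw⟩ := commute_fixed hT hd rac hp hq
    obtain ⟨o, oa, ob, oc⟩ := helly_fixed hT hd hu hv.symm hw
    have ho : ({o} : Set V) = Set.univ := by
      refine hmin _ ⟨⟨o, rfl⟩, ?_, ?_⟩
      · rintro g v rfl
        exact gen (MulAction.stabilizer _ v) oa ob oc g
      · rintro u rfl v rfl w hw
        rw [SimpleGraph.dist_self] at hw
        exact hT.connected.dist_eq_zero_iff.1 (by omega)
    intro u v
    have hu : u ∈ ({o} : Set V) := ho ▸ Set.mem_univ u
    have hv : v ∈ ({o} : Set V) := ho ▸ Set.mem_univ v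
    exact hu.trans hv.symm
  · -- the three generators share an axis, which is an invariant subtree
    obtain ⟨ℓ, hℓ, ta, tb, tc, hA, hB, hC⟩ : ∃ ℓ : ℤ → V, IsLine T ℓ ∧ ∃ ta tb tc,
        Shifts a ℓ ta ∧ Shifts b ℓ tb ∧ Shifts c ℓ tc := by
      rcases h with h | h
      · obtain ⟨ℓ, D, hℓ, hD, hs⟩ := (hell (a * b)).resolve_left fun ⟨v, hv⟩ => h v hv
        obtain ⟨t, ht, hA, hB⟩ := dihedral_axis hT hd rab hℓ hs hD
        obtain ⟨tc, hC⟩ := commute_axis hT hd rac.symm hℓ hA ht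
        exact ⟨ℓ, hℓ, t, t, tc, hA, hB, hC⟩
      · obtain ⟨ℓ, D, hℓ, hD, hs⟩ := (hell (c * b)).resolve_left fun ⟨v, hv⟩ => h v hv
        obtain ⟨t, ht, hC, hB⟩ := dihedral_axis hT hd rcb hℓ hs hD
        obtain ⟨ta, hA⟩ := commute_axis hT hd rac hℓ hC ht
        exact ⟨ℓ, hℓ, ta, t, t, hA, hB, hC⟩
    let H : Subgroup (ArtOdd n m) :=
      { carrier := {g | ∃ t, Shifts g ℓ t}
        mul_mem' := fun ⟨_, h⟩ ⟨_, h'⟩ => ⟨_, h.mul h'⟩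
        one_mem' := ⟨_, Shifts.one ℓ⟩
        inv_mem' := fun ⟨_, h⟩ => ⟨_, h.inv⟩ }
    have hall : ∀ g : ArtOdd n m, ∃ t, Shifts g ℓ t := gen H ⟨_, hA⟩ ⟨_, hB⟩ ⟨_, hC⟩
    refine ⟨ℓ, hℓ.injective, hℓ.adj, hmin _ ⟨⟨_, 0, rfl⟩, ?_, ?_⟩, hall⟩
    · rintro g _ ⟨i, rfl⟩
      obtain ⟨t, ht⟩ := hall g
      exact ⟨i + t, (ht i).symm⟩
    · rintro _ ⟨i, rfl⟩ _ ⟨j, rfl⟩ w hw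
      obtain ⟨k, e, hk⟩ := exists_proj hT hℓ w
      rw [T.dist_comm (u := ℓ i), hk, hk, hℓ] at hw
      have := hk k
      exact ⟨k, (hT.connected.dist_eq_zero_iff.1 (by omega)).symm⟩
  · obtain ⟨p, q, q1, q2, p1, p2, p3⟩ := both_elliptic hT hd hell rac rab rcb ha hr hs
    refine ⟨p, q, q1, q2, p1, p2, ?_⟩
    -- everything is generated by elements known to fix `q`, respectively `p`
    have Q1 : c * b ∈ MulAction.stabilizer (ArtOdd n m) q := q1
    have Q2 : a * b ∈ MulAction.stabilizer (ArtOdd n m) q := q2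
    have P1 : (c * b) ^ n * c ∈ MulAction.stabilizer (ArtOdd n m) p := p1
    have P2 : (a * b) ^ m * a ∈ MulAction.stabilizer (ArtOdd n m) p := p2
    have P3 : c⁻¹ * a ∈ MulAction.stabilizer (ArtOdd n m) p := by
      rw [MulAction.mem_stabilizer_iff, mul_smul, p3, inv_smul_smul]
    have com : a * c⁻¹ = c⁻¹ * a := by
      rw [eq_inv_mul_iff_mul_eq, ← mul_assoc, ← rac, mul_inv_cancel_right]
    intro g hg
    suffices g ∈ MulAction.stabilizer (ArtOdd n m) p ∧ g ∈ MulAction.stabilizer (ArtOdd n m) q from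
      this
    simp only [Set.mem_insert_iff, Set.mem_singleton_iff] at hg
    rcases hg with rfl | rfl | rfl | rfl | rfl
    · refine ⟨?_, mul_mem Q2 (inv_mem Q1)⟩
      rwa [show a * b * (c * b)⁻¹ = c⁻¹ * a by rw [← com]; group]
    · refine ⟨?_, mul_mem (zpow_mem Q1 _) (zpow_mem Q2 _)⟩
      convert mul_mem (inv_mem P1) P2 using 1
      rw [rcb, rab, zpow_neg, zpow_natCast, zpow_natCast]
      group
    · refine ⟨?_, mul_mem (zpow_mem Q1 _) (zpow_mem Q2 _)⟩
      convert mul_mem (mul_mem P1 P3) (inv_mem P2) using 1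
      rw [zpow_neg, zpow_natCast, zpow_natCast]
      group
    · exact ⟨garside_sq rcb ▸ mul_mem P1 P1, pow_mem Q1 _⟩
    · exact ⟨garside_sq rab ▸ mul_mem P2 P2, pow_mem Q2 _⟩
end

section
/- Let m ≥ 1 with m not congruent to 1 modulo 3, and let G = Art_{2,3,2m+1} = ⟨a,b,c | ac=ca, bcb=cbc, (ab)^m a = b(ab)^m⟩. Then every action of G without inversions on a tree T either has a vertex fixed by every element of G, or admits a geodesic line in T whose image is G-invariant. -/
/-!
The generators `a`, `b`, `c` are conjugate, so either all of them fix a vertex or all of them have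
an axis, along which they translate by the same `t > 0`. Moreover `(a * b) ^ (2 * m + 1)` commutes
with `a` and `b`, while `(c * b) ^ 3` commutes with `b` and `c` (`Art23odd.commute_pow`).

*All generators fix a vertex.* Two elements with fixed vertices have a common one as soon as some
positive power of their product is central in the group they generate
(`Art23odd.exists_common_fixed_of_commute`). This applies to each pair of generators, and the Helly
property of subtrees (`Art23odd.exists_common_fixed_three`) gives a global fixed vertex.

*All generators have an axis.* If `c * b` fixes no vertex, the axis of `c * b` is an axis of the
central power `(c * b) ^ 3`, hence is preserved by `b` and `c`, and by `a` since `a` commutes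
with `c`. The same works for `a * b`. There remains the case that `c * b` and `a * b` both fix
a vertex, which is impossible (`Art23odd.false_of_axis`): Let `ℓ` and `ℓ'` be the axes of `c` and
`b`. They share a segment of length `t` with opposite orientations; parametrize them by `ℤ` with
`ℓ 0 = ℓ' 0` and `ℓ (-j) = ℓ' j` for `0 ≤ j ≤ t`. As `a` commutes with `c`, it also has axis `ℓ`,
and since `a * b` fixes a vertex, it translates `ℓ` in the same direction as `c`. Now `c * b` and
`r ^ m`, where `r = a * b`, conjugate `c`, respectively `a`, to `b`; they fix `ℓ 0`, so both map
`ℓ i` to `ℓ' i`. They also agree on `ℓ'`, because `b * (c * b)` and `b * r ^ m` conjugate `b` to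
`c`, respectively `a`. It follows that `r ^ m` permutes cyclically the neighbours
`ℓ 1 ↦ ℓ (-1) ↦ ℓ' (-1) ↦ ℓ 1` of `ℓ 0`, and that `r` maps `ℓ' (-1)` to `ℓ 1`. So `r ^ (3 * m)`
and `r ^ (m - 1)` fix `ℓ' (-1)`. If `m % 3 ≠ 1` the exponents are coprime, `r` fixes `ℓ' (-1)`, and
`ℓ 1 = ℓ (-1)`, contradicting the injectivity of `ℓ`.
-/

/-- Generators: `0 ↦ a`, `1 ↦ b`, `2 ↦ c`. -/
def Art23odd.a : FreeGroup (Fin 3) := FreeGroup.of 0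
def Art23odd.b : FreeGroup (Fin 3) := FreeGroup.of 1
def Art23odd.c : FreeGroup (Fin 3) := FreeGroup.of 2

/-- Relators of `Art_{2,3,2m+1} = ⟨a,b,c | ac=ca, bcb=cbc, (ab)^m a = b(ab)^m⟩`. -/
def Art23odd.rels (m : ℕ) : Set (FreeGroup (Fin 3)) :=
  { Art23odd.a * Art23odd.c * (Art23odd.c * Art23odd.a)⁻¹,
    Art23odd.b * Art23odd.c * Art23odd.b * (Art23odd.c * Art23odd.b * Art23odd.c)⁻¹,
    (Art23odd.a * Art23odd.b) ^ m * Art23odd.a *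
      (Art23odd.b * (Art23odd.a * Art23odd.b) ^ m)⁻¹ }

/-- The triangle Artin group `Art_{2,3,2m+1}`. -/
abbrev Art23odd (m : ℕ) : Type := PresentedGroup (Art23odd.rels m)

/-- The generator `a`. -/
def Art23odd.gA (m : ℕ) : Art23odd m := PresentedGroup.of 0
/-- The generator `b`. -/
def Art23odd.gB (m : ℕ) : Art23odd m := PresentedGroup.of 1
/-- The generator `c`. -/
def Art23odd.gC (m : ℕ) : Art23odd m := PresentedGroup.of 2

namespace Art23odd

/-! ### Distances in a tree -/

section Tree

variable {V : Type*} {T : SimpleGraph V}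

theorem eq_of_adj_closer (hT : T.IsTree) {x u u' v : V} (hu : T.Adj u v) (hu' : T.Adj u' v)
    (h : T.dist x v = T.dist x u + 1) (h' : T.dist x v = T.dist x u' + 1) : u = u' := by
  have key : ∀ w, T.Adj w v → T.dist x v = T.dist x w + 1 →
      ∃ p : T.Walk x v, p.IsPath ∧ p.penultimate = w := by
    intro w hw hd
    obtain ⟨q, hq⟩ := hT.connected.exists_walk_length_eq_dist x w
    refine ⟨q.concat hw, ?_, by simp⟩
    apply SimpleGraph.Walk.isPath_of_length_eq_dist
    rw [SimpleGraph.Walk.length_concat, hq, hd]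
  obtain ⟨p, hp, rfl⟩ := key u hu h
  obtain ⟨p', hp', rfl⟩ := key u' hu' h'
  have : p = p' := (hT.existsUnique_path x v).unique hp hp'
  rw [this]

theorem exists_adj_closer (hT : T.IsTree) {x v : V} (h : T.dist x v ≠ 0) :
    ∃ u, T.Adj u v ∧ T.dist x v = T.dist x u + 1 := by
  obtain ⟨p, hp, hl⟩ := hT.connected.exists_path_of_dist x v
  have hnn : ¬ p.Nil := by
    intro hn
    have := SimpleGraph.Walk.length_eq_zero_iff.2 hn
    omega
  refine ⟨p.penultimate, p.adj_penultimate hnn, ?_⟩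
  have h1 : T.dist x p.penultimate ≤ p.dropLast.length := SimpleGraph.dist_le _
  have h2 : p.dropLast.length + 1 = p.length := by
    rw [← SimpleGraph.Walk.length_concat _ (p.adj_penultimate hnn), p.concat_dropLast]
  have h3 := hT.dist_eq_dist_add_one_of_adj x (p.adj_penultimate hnn)
  omega

/-- A geodesic between two vertices is unique: it has a single vertex at each distance. -/
theorem eq_of_dist_eq (hT : T.IsTree) {x z p p' : V} (hp : T.dist x p + T.dist z p = T.dist x z)
    (hpp : T.dist x p' = T.dist x p) (hpp' : T.dist z p' = T.dist z p) : p = p' := by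
  induction hj : T.dist z p generalizing p p' with
  | zero =>
    rw [hj] at hpp'
    rw [← hT.connected.dist_eq_zero_iff.1 hj, ← hT.connected.dist_eq_zero_iff.1 hpp']
  | succ j ih =>
    obtain ⟨w, hw, hwd⟩ := exists_adj_closer hT (x := z) (v := p) (by omega)
    obtain ⟨w', hw', hwd'⟩ := exists_adj_closer hT (x := z) (v := p') (by omega)
    have t1 := hT.connected.dist_triangle (u := x) (v := w) (w := z)
    have t2 := hT.connected.dist_triangle (u := x) (v := w') (w := z)
    rw [T.dist_comm (u := w)] at t1
    rw [T.dist_comm (u := w')] at t2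
    have a1 := hT.dist_eq_dist_add_one_of_adj x hw
    have a2 := hT.dist_eq_dist_add_one_of_adj x hw'
    have hww : w = w' := ih (by omega) (by omega) (by omega) (by omega)
    subst hww
    exact eq_of_adj_closer hT (x := x) (v := w) hw.symm hw'.symm (by omega) (by omega)

/-- If no neighbour of `y` is closer both to `x` and to `z`, then `y` lies on the geodesic
from `x` to `z`. -/
theorem dist_eq_add (hT : T.IsTree) {x y z : V}
    (h : ∀ w, T.Adj w y → T.dist x y = T.dist x w + 1 → T.dist z y = T.dist z w + 1 → False) :
    T.dist x z = T.dist x y + T.dist z y := by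
  induction hn : T.dist z y generalizing y with
  | zero => rw [hT.connected.dist_eq_zero_iff.1 hn]; rfl
  | succ n ih =>
    obtain ⟨w, hw, hwd⟩ := exists_adj_closer hT (x := z) (v := y) (by omega)
    have hxw : T.dist x w = T.dist x y + 1 := by
      rcases hT.dist_eq_dist_add_one_of_adj x hw with h1 | h1
      · exact h1
      · exact (h w hw h1 hwd).elim
    have := ih (y := w) (fun w' hw' h1 h2 => by
      have := eq_of_adj_closer hT hw' hw.symm h1 hxw
      subst this
      omega) (by omega)
    omega

/-- A path without backtracking whose first step moves away from `x` keeps moving away. -/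
theorem dist_ray (hT : T.IsTree) {x : V} (f : ℕ → V) (hadj : ∀ n, T.Adj (f n) (f (n + 1)))
    (hne : ∀ n, f n ≠ f (n + 2)) (h1 : T.dist x (f 1) = T.dist x (f 0) + 1) (n : ℕ) :
    T.dist x (f n) = T.dist x (f 0) + n := by
  suffices h : ∀ n, T.dist x (f (n + 1)) = T.dist x (f n) + 1 by
    induction n with
    | zero => rfl
    | succ n ih => rw [h, ih]; rfl
  intro n
  induction n with
  | zero => exact h1
  | succ n ih =>
    rcases hT.dist_eq_dist_add_one_of_adj x (hadj (n + 1)) with h2 | h2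
    · exact (hne n (eq_of_adj_closer hT (hadj n) (hadj (n + 1)).symm ih h2)).elim
    · exact h2

/-! ### Lines -/

/-- A bi-infinite path without backtracking. In a tree this is the same as a geodesic line. -/
structure IsLine (T : SimpleGraph V) (ℓ : ℤ → V) : Prop where
  adj : ∀ i, T.Adj (ℓ i) (ℓ (i + 1))
  ne : ∀ i, ℓ i ≠ ℓ (i + 2)

theorem IsLine.comp_neg {ℓ : ℤ → V} (h : IsLine T ℓ) : IsLine T (fun i => ℓ (-i)) where
  adj i := by
    have := (h.adj (-(i + 1))).symm
    rwa [show -(i + 1) + 1 = -i by ring] at this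
  ne i := by
    have := (h.ne (-(i + 2))).symm
    rwa [show -(i + 2) + 2 = -i by ring] at this

/-- The nearest-point projection `ℓ k` of `x` to a line, at distance `D`: every other vertex of
the line is reached from `x` through `ℓ k`. -/
theorem IsLine.exists_proj (hT : T.IsTree) {ℓ : ℤ → V} (h : IsLine T ℓ) (x : V) :
    ∃ (k : ℤ) (D : ℕ), ∀ i : ℤ, T.dist x (ℓ (k + i)) = D + i.natAbs := by
  obtain ⟨k, hk⟩ : ∃ k, ∀ j, T.dist x (ℓ k) ≤ T.dist x (ℓ j) :=
    ⟨Function.argmin (fun j => T.dist x (ℓ j)), fun j => Function.argmin_le (fun j => T.dist x (ℓ j)) j⟩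
  have fwd : ∀ {ℓ : ℤ → V}, IsLine T ℓ → ∀ k, (∀ j, T.dist x (ℓ k) ≤ T.dist x (ℓ j)) →
      ∀ n : ℕ, T.dist x (ℓ (k + n)) = T.dist x (ℓ k) + n := by
    intro ℓ h k hk n
    have := dist_ray hT (x := x) (fun n : ℕ => ℓ (k + n))
      (fun n => by have := h.adj (k + n); push_cast; rwa [← add_assoc])
      (fun n => by have := h.ne (k + n); push_cast; rwa [← add_assoc])
      (by
        have h1 := hT.dist_eq_dist_add_one_of_adj x (h.adj k)
        have h2 := hk (k + 1)
        simp only [Nat.cast_one, Nat.cast_zero, add_zero]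
        omega) n
    simpa using this
  refine ⟨k, T.dist x (ℓ k), fun i => ?_⟩
  rcases le_total 0 i with hi | hi
  · have := fwd h k hk i.natAbs
    rwa [Int.natAbs_of_nonneg hi] at this
  · have := fwd h.comp_neg (-k) (fun j => by simpa using hk (-j)) i.natAbs
    simp only [neg_neg, neg_add_rev] at this
    rwa [Int.ofNat_natAbs_of_nonpos hi, neg_neg, add_comm i k] at this

theorem IsLine.dist_eq (hT : T.IsTree) {ℓ : ℤ → V} (h : IsLine T ℓ) (i j : ℤ) :
    T.dist (ℓ i) (ℓ j) = (i - j).natAbs := by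
  obtain ⟨k, D, hk⟩ := h.exists_proj hT (ℓ i)
  have h1 := hk (i - k)
  have h2 := hk (j - k)
  rw [add_sub_cancel] at h1 h2
  rw [SimpleGraph.dist_self] at h1
  omega

theorem IsLine.injective (hT : T.IsTree) {ℓ : ℤ → V} (h : IsLine T ℓ) :
    Function.Injective ℓ := by
  intro i j hij
  have := h.dist_eq hT i j
  rw [hij, SimpleGraph.dist_self] at this
  omega

end Tree

/-! ### Groups acting on a tree -/

section Action

variable {V : Type*} {T : SimpleGraph V} {G : Type*} [Group G] [MulAction G V]

theorem dist_smul (hT : T.IsTree) (hA : ∀ (g : G) (u v : V), T.Adj u v → T.Adj (g • u) (g • v))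
    (g : G) (x y : V) : T.dist (g • x) (g • y) = T.dist x y := by
  have key : ∀ (g : G) (x y : V), T.dist (g • x) (g • y) ≤ T.dist x y := by
    intro g x y
    obtain ⟨p, hp⟩ := hT.connected.exists_walk_length_eq_dist x y
    let f : T →g T := ⟨fun v => g • v, fun {u v} h => hA g u v h⟩
    rw [← hp, ← SimpleGraph.Walk.length_map f p]
    exact SimpleGraph.dist_le (p.map f)
  refine le_antisymm (key g x y) ?_
  simpa using key g⁻¹ (g • x) (g • y)

/-- `ℓ` is an axis of `g`: a line along which `g` translates by `t > 0`. -/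
structure IsAxis (T : SimpleGraph V) (g : G) (ℓ : ℤ → V) (t : ℤ) : Prop extends IsLine T ℓ where
  pos : 0 < t
  smul : ∀ i, g • ℓ i = ℓ (i + t)

theorem IsLine.smul (hA : ∀ (g : G) (u v : V), T.Adj u v → T.Adj (g • u) (g • v))
    {ℓ : ℤ → V} (h : IsLine T ℓ) (g : G) : IsLine T (fun i => g • ℓ i) where
  adj i := hA g _ _ (h.adj i)
  ne i hi := h.ne i (MulAction.injective g hi)

theorem smul_inv_translate {g : G} {ℓ : ℤ → V} {n : ℤ} (h : ∀ i, g • ℓ i = ℓ (i + n)) (i : ℤ) :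
    g⁻¹ • ℓ i = ℓ (i + -n) := by
  rw [inv_smul_eq_iff, h]; congr 1; ring

theorem smul_pow_translate {g : G} {ℓ : ℤ → V} {n : ℤ} (h : ∀ i, g • ℓ i = ℓ (i + n)) (N : ℕ)
    (i : ℤ) : g ^ N • ℓ i = ℓ (i + N * n) := by
  induction N generalizing i with
  | zero => simp
  | succ N ih => rw [pow_succ, mul_smul, h, ih]; congr 1; push_cast; ring

theorem smul_zpow_translate {g : G} {ℓ : ℤ → V} {n : ℤ} (h : ∀ i, g • ℓ i = ℓ (i + n)) (N : ℤ)
    (i : ℤ) : g ^ N • ℓ i = ℓ (i + N * n) := by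
  obtain ⟨N, rfl | rfl⟩ := N.eq_nat_or_neg
  · rw [zpow_natCast, smul_pow_translate h]
  · rw [zpow_neg, zpow_natCast, smul_inv_translate (smul_pow_translate h N)]; congr 1; ring

theorem IsAxis.inv_neg {g : G} {ℓ : ℤ → V} {t : ℤ} (h : IsAxis T g ℓ t) :
    IsAxis T g⁻¹ (fun i => ℓ (-i)) t where
  toIsLine := h.toIsLine.comp_neg
  pos := h.pos
  smul i := by rw [smul_inv_translate h.smul]; congr 1; ring

theorem IsAxis.pow {g : G} {ℓ : ℤ → V} {t : ℤ} (h : IsAxis T g ℓ t) {N : ℕ} (hN : 0 < N) :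
    IsAxis T (g ^ N) ℓ (N * t) where
  toIsLine := h.toIsLine
  pos := mul_pos (by exact_mod_cast hN) h.pos
  smul := smul_pow_translate h.smul N

/-- Conjugating `g` to `g'` by `h` carries an axis of `g` to an axis of `g'`. -/
theorem IsAxis.conj (hA : ∀ (g : G) (u v : V), T.Adj u v → T.Adj (g • u) (g • v))
    {g g' h : G} {ℓ : ℤ → V} {t : ℤ} (hg : IsAxis T g ℓ t) (hc : h * g = g' * h) :
    IsAxis T g' (fun i => h • ℓ i) t where
  toIsLine := hg.toIsLine.smul hA h
  pos := hg.pos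
  smul i := by rw [← mul_smul, ← hc, mul_smul, hg.smul]

/-- If `ℓ k` is the projection of `x` to an axis of `g`, the geodesic from `x` to `g • x` runs
through `ℓ k` and `ℓ (k + t) = g • ℓ k`; in particular it has length `2 * D + t`. -/
theorem IsAxis.exists_proj (hT : T.IsTree)
    (hA : ∀ (g : G) (u v : V), T.Adj u v → T.Adj (g • u) (g • v))
    {g : G} {ℓ : ℤ → V} {t : ℤ} (h : IsAxis T g ℓ t) (x : V) :
    ∃ (k : ℤ) (D : ℕ), (∀ i : ℤ, T.dist x (ℓ (k + i)) = D + i.natAbs) ∧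
      (∀ i : ℤ, T.dist (g • x) (ℓ (k + i)) = D + (i - t).natAbs) ∧
      T.dist x (g • x) = 2 * D + t.natAbs := by
  obtain ⟨k, D, hk⟩ := h.toIsLine.exists_proj hT x
  have hk' : ∀ i : ℤ, T.dist (g • x) (ℓ (k + i)) = D + (i - t).natAbs := by
    intro i
    rw [← hk, ← dist_smul hT hA g x, h.smul]
    congr 2; ring
  have ht := h.pos
  refine ⟨k, D, hk, hk', ?_⟩
  have := dist_eq_add hT (x := x) (y := ℓ (k + t)) (z := g • x) (fun w hw h1 h2 => by
    have h3 := h.adj (k + (t - 1))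
    rw [show k + (t - 1) + 1 = k + t by ring] at h3
    have h4 := hk (t - 1)
    have h5 := hk t
    have h6 := hk' (t - 1)
    have h7 := hk' t
    have := eq_of_adj_closer hT (x := x) hw h3 h1 (by omega)
    subst this
    omega)
  rw [this, hk, hk']
  omega

theorem IsAxis.smul_ne (hT : T.IsTree)
    (hA : ∀ (g : G) (u v : V), T.Adj u v → T.Adj (g • u) (g • v))
    {g : G} {ℓ : ℤ → V} {t : ℤ} (h : IsAxis T g ℓ t) (x : V) : g • x ≠ x := by
  intro hx
  obtain ⟨k, D, -, -, h1⟩ := h.exists_proj hT hA x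
  rw [hx, SimpleGraph.dist_self] at h1
  have := h.pos
  omega

/-- The axis and the translation length of `g` are unique. -/
theorem IsAxis.unique (hT : T.IsTree)
    (hA : ∀ (g : G) (u v : V), T.Adj u v → T.Adj (g • u) (g • v))
    {g : G} {ℓ ℓ' : ℤ → V} {t t' : ℤ} (h : IsAxis T g ℓ t) (h' : IsAxis T g ℓ' t') :
    t = t' ∧ ∃ n, ∀ i, ℓ' i = ℓ (i + n) := by
  have hp := h.pos
  have hp' := h'.pos
  have key : ∀ {ℓ ℓ' : ℤ → V} {t t' : ℤ}, IsAxis T g ℓ t → IsAxis T g ℓ' t' → ∀ j, ∃ (k : ℤ) (D : ℕ),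
      T.dist (ℓ' j) (ℓ k) = D ∧ t'.natAbs = 2 * D + t.natAbs := by
    intro ℓ ℓ' t t' h h' j
    obtain ⟨k, D, h1, -, h2⟩ := h.exists_proj hT hA (ℓ' j)
    refine ⟨k, D, by simpa using h1 0, ?_⟩
    rw [h'.smul, h'.toIsLine.dist_eq hT] at h2
    omega
  have htt : t = t' := by
    obtain ⟨k, D, _, h1⟩ := key h h' 0
    obtain ⟨k', D', _, h2⟩ := key h' h 0
    omega
  subst htt
  have hex : ∀ j, ∃ k, ℓ' j = ℓ k := by
    intro j
    obtain ⟨k, D, h1, h2⟩ := key h h' j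
    obtain rfl : D = 0 := by omega
    exact ⟨k, hT.connected.dist_eq_zero_iff.1 h1⟩
  choose κ hκ using hex
  -- `κ` is an isometry of `ℤ` commuting with the translation by `t`, hence a translation
  refine ⟨rfl, κ 0, fun j => ?_⟩
  have hd : ∀ i j, (κ i - κ j).natAbs = (i - j).natAbs := by
    intro i j
    rw [← h.toIsLine.dist_eq hT, ← hκ, ← hκ, h'.toIsLine.dist_eq hT]
  have ht : κ t = κ 0 + t := by
    apply h.toIsLine.injective hT
    rw [← hκ, ← h.smul, ← hκ, h'.smul, zero_add]
  rw [hκ]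
  congr 1
  have h1 := hd j 0
  have h2 := hd j t
  omega

theorem IsAxis.conj_unique (hT : T.IsTree)
    (hA : ∀ (g : G) (u v : V), T.Adj u v → T.Adj (g • u) (g • v))
    {g g' h : G} {ℓ ℓ' : ℤ → V} {t t' : ℤ} (hg : IsAxis T g ℓ t) (hg' : IsAxis T g' ℓ' t')
    (hc : h * g = g' * h) : ∃ n, ∀ i, h • ℓ i = ℓ' (i + n) :=
  (hg'.unique hT hA (hg.conj hA hc)).2

/-- Everything commuting with an element translating along a line translates along it too. -/
theorem IsLine.translate_of_commute (hT : T.IsTree)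
    (hA : ∀ (g : G) (u v : V), T.Adj u v → T.Adj (g • u) (g • v))
    {g h : G} {ℓ : ℤ → V} (hℓ : IsLine T ℓ) {n : ℤ} (hn : n ≠ 0)
    (hg : ∀ i, g • ℓ i = ℓ (i + n)) (hc : Commute g h) : ∃ n', ∀ i, h • ℓ i = ℓ (i + n') := by
  rcases lt_or_gt_of_ne hn with hn | hn
  · have ax : IsAxis T g⁻¹ ℓ (-n) := ⟨hℓ, by omega, smul_inv_translate hg⟩
    exact ax.conj_unique hT hA ax hc.inv_left.symm
  · have ax : IsAxis T g ℓ n := ⟨hℓ, hn, hg⟩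
    exact ax.conj_unique hT hA ax hc.symm

/-- An element without fixed vertex has an axis, obtained by gluing together the translates of a
geodesic from a vertex of minimal displacement to its image. -/
theorem exists_axis (hT : T.IsTree)
    (hA : ∀ (g : G) (u v : V), T.Adj u v → T.Adj (g • u) (g • v))
    (hI : ∀ (g : G) (u v : V), T.Adj u v → ¬(g • u = v ∧ g • v = u)) (g : G)
    (hg : ∀ x : V, g • x ≠ x) : ∃ (ℓ : ℤ → V) (t : ℤ), IsAxis T g ℓ t := by
  have := hT.connected.nonempty
  obtain ⟨x, hx⟩ : ∃ x, ∀ y, T.dist x (g • x) ≤ T.dist y (g • y) :=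
    ⟨Function.argmin (fun y : V => T.dist y (g • y)),
      fun j => Function.argmin_le (fun y : V => T.dist y (g • y)) j⟩
  obtain ⟨p, hp, hpl⟩ := hT.connected.exists_path_of_dist x (g • x)
  obtain ⟨t, ht⟩ : ∃ t : ℕ, t = T.dist x (g • x) := ⟨_, rfl⟩
  have htpos : 0 < t := ht ▸ hT.connected.pos_dist_of_ne (hg x).symm
  have f0 : p.getVert 0 = x := p.getVert_zero
  have ft : p.getVert t = g • x := by rw [ht, ← hpl, p.getVert_length]
  have fadj : ∀ i < t, T.Adj (p.getVert i) (p.getVert (i + 1)) :=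
    fun i hi => p.adj_getVert_succ (by omega)
  have finj : ∀ i ≤ t, ∀ j ≤ t, p.getVert i = p.getVert j → i = j :=
    fun i hi j hj h => hp.getVert_injOn (by simp; omega) (by simp; omega) h
  generalize p.getVert = f at f0 ft fadj finj
  let ℓ : ℤ → V := fun i => g ^ (i / t) • f (i % t).toNat
  have hℓ : ∀ (k : ℤ) (s : ℕ), s ≤ t → ℓ (k * t + s) = g ^ k • f s := by
    intro k s hs
    rcases hs.lt_or_eq with hs | rfl
    · have h1 : (k * t + s) / (t : ℤ) = k := by
        rw [Int.add_comm, Int.add_mul_ediv_right _ _ (by omega),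
          Int.ediv_eq_zero_of_lt (by omega) (by omega)]; ring
      have h2 : (k * t + s) % (t : ℤ) = s := by
        rw [Int.add_comm, Int.add_mul_emod_self_right]
        exact Int.emod_eq_of_lt (by omega) (by omega)
      simp only [ℓ, h1, h2, Int.toNat_natCast]
    · have h1 : (k * s + s) / (s : ℤ) = k + 1 := by
        rw [show k * (s : ℤ) + s = (k + 1) * s by ring]
        exact Int.mul_ediv_cancel _ (by omega)
      have h2 : (k * s + s) % (s : ℤ) = 0 := by
        rw [show k * (s : ℤ) + s = (k + 1) * s by ring]
        exact Int.mul_emod_left _ _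
      simp only [ℓ, h1, h2, Int.toNat_zero, f0, ft, zpow_add_one, mul_smul]
  have hdec : ∀ i : ℤ, ∃ (k : ℤ) (s : ℕ), s < t ∧ i = k * t + s := by
    intro i
    have h1 := Int.emod_nonneg i (b := t) (by omega)
    have h2 := Int.emod_lt_of_pos i (b := t) (by omega)
    refine ⟨i / t, (i % t).toNat, by omega, ?_⟩
    rw [Int.toNat_of_nonneg h1]
    exact (Int.ediv_mul_add_emod i t).symm
  have hdist : ∀ n, 1 + n ≤ t → T.dist (f 1) (f (1 + n)) ≤ n := by
    intro n hn
    induction n with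
    | zero => simp
    | succ n ih =>
      have h1 := hT.connected.dist_triangle (u := f 1) (v := f (1 + n)) (w := f (1 + (n + 1)))
      have h2 := SimpleGraph.dist_eq_one_iff_adj.2 (fadj (1 + n) (by omega))
      rw [add_assoc] at h2
      have h3 := ih (by omega)
      omega
  refine ⟨ℓ, t, ⟨fun i => ?_, fun i => ?_⟩, by omega, fun i => ?_⟩
  · obtain ⟨k, s, hs, rfl⟩ := hdec i
    have := hℓ k (s + 1) (by omega)
    push_cast at this
    rw [hℓ k s hs.le, add_assoc, this]
    exact hA _ _ _ (fadj s hs)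
  · obtain ⟨k, s, hs, rfl⟩ := hdec i
    rw [hℓ k s hs.le]
    by_cases hs2 : s + 2 ≤ t
    · have := hℓ k (s + 2) hs2
      push_cast at this
      rw [add_assoc, this]
      intro h
      have := finj s hs.le (s + 2) hs2 (MulAction.injective _ h)
      omega
    · have hst : s = t - 1 := by omega
      have := hℓ (k + 1) 1 (by omega)
      rw [show k * (t : ℤ) + s + 2 = (k + 1) * t + (1 : ℕ) by push_cast [hst, Nat.cast_sub htpos]; ring,
        this, zpow_add_one, mul_smul]
      intro h
      have h := MulAction.injective _ h
      -- `f (t - 1) = g • f 1` makes `g` an inversion if `t = 1`, and the displacement of `f 1`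
      -- smaller than `t` otherwise
      by_cases ht1 : t = 1
      · subst ht1
        obtain rfl : s = 0 := by omega
        rw [f0, ft] at h
        have := fadj 0 (by omega)
        rw [f0, zero_add, ft] at this
        exact hI g _ _ this ⟨rfl, h.symm⟩
      · have h1 := hx (f 1)
        have h2 := hdist (t - 2) (by omega)
        rw [show 1 + (t - 2) = s by omega, h] at h2
        omega
  · obtain ⟨k, s, hs, rfl⟩ := hdec i
    rw [show k * (t : ℤ) + s + t = (k + 1) * t + s by ring, hℓ _ _ hs.le, hℓ _ _ hs.le, ← mul_smul,
      add_comm k 1, zpow_one_add]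

end Action

/-! ### Fixed vertices and products -/

section Fixed

variable {V : Type*} {T : SimpleGraph V} {G : Type*} [Group G] [MulAction G V]

/-- The fixed vertices of `g` form a convex set. -/
theorem smul_eq_of_between (hT : T.IsTree)
    (hA : ∀ (g : G) (u v : V), T.Adj u v → T.Adj (g • u) (g • v)) {g : G} {x z p : V}
    (hx : g • x = x) (hz : g • z = z) (hp : T.dist x p + T.dist z p = T.dist x z) : g • p = p := by
  refine (eq_of_dist_eq hT hp ?_ ?_).symm
  · conv_lhs => rw [← hx, dist_smul hT hA]
  · conv_lhs => rw [← hz, dist_smul hT hA]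

theorem exists_nearest_fixed {g : G} (hg : ∃ x : V, g • x = x) (q : V) :
    ∃ y : V, g • y = y ∧ ∀ w : V, g • w = w → T.dist q y ≤ T.dist q w := by
  obtain ⟨x, hx⟩ := hg
  have : Nonempty {x : V // g • x = x} := ⟨⟨x, hx⟩⟩
  let f : {x : V // g • x = x} → ℕ := fun x => T.dist q x
  obtain ⟨y, hy⟩ : ∃ y, ∀ w, f y ≤ f w := ⟨_, fun w => Function.argmin_le f w⟩
  exact ⟨y, y.2, fun w hw => hy ⟨w, hw⟩⟩

/-- The midpoint of the geodesic from `q` to `g • q` is fixed by an element `g` having a fixed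
vertex. -/
theorem exists_fixed_midpoint (hT : T.IsTree)
    (hA : ∀ (g : G) (u v : V), T.Adj u v → T.Adj (g • u) (g • v)) {g : G}
    (hg : ∃ x : V, g • x = x) (q : V) :
    ∃ y : V, g • y = y ∧ T.dist (g • q) y = T.dist q y ∧ T.dist q (g • q) = 2 * T.dist q y := by
  obtain ⟨y, hy, hmin⟩ := exists_nearest_fixed (T := T) hg q
  have hgy : T.dist (g • q) y = T.dist q y := by
    conv_lhs => rw [← hy, dist_smul hT hA]
  refine ⟨y, hy, hgy, ?_⟩
  have := dist_eq_add hT (x := q) (y := y) (z := g • q) (fun w hw h1 h2 => by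
    -- `w` and `g • w` are both the neighbour of `y` closer to `g • q`
    have h3 : T.Adj (g • w) y := by have := hA g _ _ hw; rwa [hy] at this
    have h4 : g • w = w := eq_of_adj_closer hT h3 hw (x := g • q)
      (by rw [dist_smul hT hA, hgy]; exact h1) h2
    have := hmin w h4
    omega)
  omega

/-- Two elements with fixed vertices whose product has a fixed vertex have a common one. -/
theorem exists_common_fixed (hT : T.IsTree)
    (hA : ∀ (g : G) (u v : V), T.Adj u v → T.Adj (g • u) (g • v)) {g h : G}
    (hg : ∃ x : V, g • x = x) (hh : ∃ x : V, h • x = x) (hgh : ∃ x : V, (g * h) • x = x) :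
    ∃ x : V, g • x = x ∧ h • x = x := by
  obtain ⟨q, hq⟩ := hgh
  obtain ⟨y, hy, h1, h2⟩ := exists_fixed_midpoint hT hA hh q
  obtain ⟨x, hx⟩ := hg
  have hx' : ∃ x : V, g⁻¹ • x = x := ⟨x, by rw [inv_smul_eq_iff, hx]⟩
  obtain ⟨z, hz, h3, h4⟩ := exists_fixed_midpoint hT hA hx' q
  have hhq : h • q = g⁻¹ • q := by rw [eq_inv_smul_iff, ← mul_smul, hq]
  rw [hhq] at h1 h2
  have hzy : z = y := (eq_of_dist_eq hT (x := q) (z := g⁻¹ • q) (by omega) (by omega) (by omega))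
  subst hzy
  exact ⟨z, by rw [inv_smul_eq_iff] at hz; exact hz.symm, hy⟩

/-- Elements with fixed vertices have a common one if a positive power of their product is
central in the group they generate. -/
theorem exists_common_fixed_of_commute (hT : T.IsTree)
    (hA : ∀ (g : G) (u v : V), T.Adj u v → T.Adj (g • u) (g • v))
    (hI : ∀ (g : G) (u v : V), T.Adj u v → ¬(g • u = v ∧ g • v = u)) {g h : G} {N : ℕ}
    (hN : 0 < N) (hcg : Commute ((g * h) ^ N) g) (hch : Commute ((g * h) ^ N) h)
    (hg : ∃ x : V, g • x = x) (hh : ∃ x : V, h • x = x) :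
    ∃ x : V, g • x = x ∧ h • x = x := by
  refine exists_common_fixed hT hA hg hh ?_
  by_contra hne
  push Not at hne
  obtain ⟨ℓ, t, hℓ⟩ := exists_axis hT hA hI (g * h) hne
  -- an element with a fixed vertex which translates along `ℓ` fixes `ℓ`
  have key : ∀ {k : G}, Commute ((g * h) ^ N) k → (∃ x : V, k • x = x) → ∀ i, k • ℓ i = ℓ i := by
    rintro k hk ⟨x, hx⟩ i
    obtain ⟨n, hn⟩ := (hℓ.pow hN).toIsLine.translate_of_commute hT hA
      (hℓ.pow hN).pos.ne' (hℓ.pow hN).smul hk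
    obtain ⟨j, D, hj⟩ := hℓ.toIsLine.exists_proj hT x
    have h1 := hj 0
    have h2 := hj n
    have h3 := dist_smul hT hA k x (ℓ j)
    rw [hx, hn] at h3
    rw [add_zero] at h1
    obtain rfl : n = 0 := by omega
    rw [hn, add_zero]
  apply hne (ℓ 0)
  rw [mul_smul, key hch hh, key hcg hg]

/-- Helly property for the fixed trees of three elements. -/
theorem exists_common_fixed_three (hT : T.IsTree)
    (hA : ∀ (g : G) (u v : V), T.Adj u v → T.Adj (g • u) (g • v)) {a b c : G}
    (hab : ∃ x : V, a • x = x ∧ b • x = x) (hbc : ∃ x : V, b • x = x ∧ c • x = x)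
    (hac : ∃ x : V, a • x = x ∧ c • x = x) : ∃ x : V, a • x = x ∧ b • x = x ∧ c • x = x := by
  obtain ⟨q, hqa, hqb⟩ := hab
  obtain ⟨y, hy, hmin⟩ := exists_nearest_fixed (T := T) (g := c) (hbc.imp fun _ h => h.2) q
  -- the vertex of `Fix c` nearest to `q` is on the geodesic from `q` to any other one
  have key : ∀ z : V, c • z = z → T.dist q y + T.dist z y = T.dist q z := by
    intro z hz
    refine (dist_eq_add hT fun w hw h1 h2 => ?_).symm
    have h3 : c • w = w := smul_eq_of_between hT hA hz hy (by
      rw [SimpleGraph.dist_eq_one_iff_adj.2 hw.symm, h2])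
    have := hmin w h3
    omega
  obtain ⟨z, hzb, hzc⟩ := hbc
  obtain ⟨z', hza', hzc'⟩ := hac
  exact ⟨y, smul_eq_of_between hT hA hqa hza' (key z' hzc'),
    smul_eq_of_between hT hA hqb hzb (key z hzc), hy⟩

/-- Suppose `b` and `c` translate by the same `t` along `ℓ'` and `ℓ`. If `c * b` has a fixed
vertex, then `ℓ` and `ℓ'` share a segment of length `t`, with opposite orientations. -/
theorem exists_overlap (hT : T.IsTree)
    (hA : ∀ (g : G) (u v : V), T.Adj u v → T.Adj (g • u) (g • v)) {b c : G} {ℓ ℓ' : ℤ → V} {t : ℤ}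
    (hc : IsAxis T c ℓ t) (hb : IsAxis T b ℓ' t) (hcb : ∃ x : V, (c * b) • x = x) :
    ∃ K K' : ℤ, ∀ j : ℤ, 0 ≤ j → j ≤ t → ℓ (K - j) = ℓ' (K' + j) := by
  obtain ⟨q, hq⟩ := hcb
  rw [mul_smul] at hq
  obtain ⟨k', D', h1', h2', h3'⟩ := hb.exists_proj hT hA q
  obtain ⟨k, D, h1, h2, h3⟩ := hc.exists_proj hT hA (b • q)
  rw [hq] at h2 h3
  refine ⟨k + t, k', fun j hj hjt => ?_⟩
  have e1 := h1 (t - j)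
  have e2 := h2 (t - j)
  have e3 := h1' j
  have e4 := h2' j
  have e5 := T.dist_comm (u := q) (v := b • q)
  rw [show k + t - j = k + (t - j) by ring]
  exact eq_of_dist_eq hT (x := q) (z := b • q) (by omega) (by omega) (by omega)

end Fixed

/-! ### The triangle Artin relations -/

section Relations

variable {G : Type*} [Group G]

/-- In the dihedral Artin group of odd label `2 * m + 1`, the power `(x * y) ^ (2 * m + 1)` is
central, being the square of `(x * y) ^ m * x`, which conjugates `x` to `y` and `y` to `x`. -/
theorem commute_pow {x y : G} {m : ℕ} (h : (x * y) ^ m * x = y * (x * y) ^ m) :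
    Commute ((x * y) ^ (2 * m + 1)) x ∧ Commute ((x * y) ^ (2 * m + 1)) y := by
  obtain ⟨w, hw⟩ : ∃ w, w = (x * y) ^ m * x := ⟨_, rfl⟩
  have hw' : w = y * (x * y) ^ m := hw.trans h
  have hx : w * x = y * w := by
    conv_lhs => rw [hw', mul_assoc, ← hw]
  have hy : w * y = x * w := by
    conv_lhs => rw [hw, mul_assoc, ← pow_succ, pow_succ', mul_assoc, ← hw']
  have hww : (x * y) ^ (2 * m + 1) = w * w := by
    conv_rhs => rw [hw', ← hw', hw, mul_assoc, ← hw, hw', ← mul_assoc x, ← pow_succ', ← pow_add]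
    congr 1; ring
  rw [hww]
  constructor
  · rw [Commute, SemiconjBy, mul_assoc, hx, ← mul_assoc, hy, mul_assoc]
  · rw [Commute, SemiconjBy, mul_assoc, hy, ← mul_assoc, hx, mul_assoc]

variable {V : Type*} {T : SimpleGraph V} [MulAction G V]

theorem IsAxis.shift {g : G} {ℓ : ℤ → V} {t : ℤ} (h : IsAxis T g ℓ t) (K : ℤ) :
    IsAxis T g (fun i => ℓ (K + i)) t where
  adj i := by have := h.adj (K + i); rwa [add_assoc] at this
  ne i := by have := h.ne (K + i); rwa [add_assoc] at this
  pos := h.pos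
  smul i := by rw [h.smul, add_assoc]

theorem smul_pow_eq {g : G} {x : V} (h : g • x = x) (N : ℕ) : g ^ N • x = x :=
  (MulAction.stabilizer G x).pow_mem h N

/-- The case of a generator `c` with an axis in which `a * b` and `c * b` have fixed vertices is
impossible. -/
theorem false_of_axis (hT : T.IsTree)
    (hA : ∀ (g : G) (u v : V), T.Adj u v → T.Adj (g • u) (g • v)) {a b c : G} {m : ℕ}
    (hmod : m % 3 ≠ 1) (hac : Commute a c) (hbc : b * c * b = c * b * c)
    (hab : (a * b) ^ m * a = b * (a * b) ^ m) {ℓ : ℤ → V} {t : ℤ} (hc : IsAxis T c ℓ t)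
    (hcb : ∃ x : V, (c * b) • x = x) (hr : ∃ x : V, (a * b) • x = x) : False := by
  have hub : c * b * c = b * (c * b) := by rw [← hbc, mul_assoc]
  obtain ⟨ℓ', hb⟩ : ∃ ℓ', IsAxis T b ℓ' t := ⟨_, hc.conj hA hub⟩
  obtain ⟨K, K', hK⟩ := exists_overlap hT hA hc hb hcb
  -- choose the origins of the two axes at the same end of the common segment
  replace hc := hc.shift K
  replace hb := hb.shift K'
  replace hK : ∀ j, 0 ≤ j → j ≤ t → (fun i => ℓ (K + i)) (-j) = (fun i => ℓ' (K' + i)) j := hK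
  generalize (fun i => ℓ (K + i)) = ℓ at hc hK
  generalize (fun i => ℓ' (K' + i)) = ℓ' at hb hK
  have ht := hc.pos
  have h0 : ℓ 0 = ℓ' 0 := by simpa using hK 0 le_rfl ht.le
  -- `c * b` maps the axis of `c` to that of `b`, preserving the origin
  have hu : ∀ i, (c * b) • ℓ i = ℓ' i := by
    obtain ⟨n, hn⟩ := hc.conj_unique hT hA hb hub
    have h1 : (c * b) • ℓ 0 = ℓ' 0 := by
      rw [h0, mul_smul, hb.smul, zero_add, ← hK t ht.le le_rfl, hc.smul, neg_add_cancel, h0]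
    obtain rfl : n = 0 := by simpa using hb.toIsLine.injective hT ((hn 0).symm.trans h1)
    simpa using hn
  -- `a` acts on the axis of `c` in the same way as `c`
  have ha : ∀ i, a • ℓ i = ℓ (i + t) := by
    obtain ⟨n, hn⟩ := hc.toIsLine.translate_of_commute hT hA ht.ne' hc.smul hac.symm
    rcases lt_trichotomy n 0 with hn0 | hn0 | hn0
    · have ax : IsAxis T a (fun i => ℓ (-i)) (-n) := by
        have : IsAxis T a⁻¹ ℓ (-n) := ⟨hc.toIsLine, by omega, smul_inv_translate hn⟩
        simpa using this.inv_neg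
      obtain ⟨htn, -⟩ := hb.unique hT hA (ax.conj hA hab)
      rw [← htn] at ax
      obtain ⟨L, L', hL⟩ := exists_overlap hT hA ax hb hr
      exfalso
      -- the axes would share segments both with equal and with opposite orientations
      have d : ∀ x y x' y', ℓ x = ℓ' x' → ℓ y = ℓ' y' → (x - y).natAbs = (x' - y').natAbs := by
        intro x y x' y' h1 h2
        rw [← hc.toIsLine.dist_eq hT, ← hb.toIsLine.dist_eq hT, h1, h2]
      have e1 := hK 0 le_rfl ht.le
      have e2 := hK t ht.le le_rfl
      have e3 := hL 0 le_rfl ht.le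
      have e4 := hL t ht.le le_rfl
      have d1 := d _ _ _ _ e1 e3
      have d2 := d _ _ _ _ e1 e4
      have d3 := d _ _ _ _ e2 e3
      have d4 := d _ _ _ _ e2 e4
      omega
    · subst hn0
      exfalso
      apply hb.smul_ne hT hA ((a * b) ^ m • ℓ 0)
      rw [← mul_smul, ← hab, mul_smul, hn, add_zero]
    · have ax : IsAxis T a ℓ n := ⟨hc.toIsLine, hn0, hn⟩
      obtain ⟨rfl, -⟩ := hb.unique hT hA (ax.conj hA hab)
      exact hn
  have haxis : IsAxis T a ℓ t := ⟨hc.toIsLine, ht, ha⟩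
  have hr0 : (a * b) • ℓ 0 = ℓ 0 := by
    rw [h0, mul_smul, hb.smul, zero_add, ← hK t ht.le le_rfl, ha, neg_add_cancel, h0]
  have hrm0 : (a * b) ^ m • ℓ 0 = ℓ 0 := smul_pow_eq hr0 m
  have hrm : ∀ i, (a * b) ^ m • ℓ i = ℓ' i := by
    obtain ⟨n, hn⟩ := haxis.conj_unique hT hA hb hab
    obtain rfl : n = 0 := by
      simpa using hb.toIsLine.injective hT ((hn 0).symm.trans (hrm0.trans h0))
    simpa using hn
  -- `b * (c * b)` and `b * (a * b) ^ m` both map the axis of `b` to that of `a` and `c`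
  have hur : ∀ i, (c * b) • ℓ' i = (a * b) ^ m • ℓ' i := by
    have hv : b * (c * b) * b = c * (b * (c * b)) := by
      rw [← hub]; simp only [mul_assoc]; rw [← mul_assoc b c b, hbc, mul_assoc]
    obtain ⟨n₁, hn₁⟩ := hb.conj_unique hT hA hc hv
    obtain ⟨n₂, hn₂⟩ := hb.conj_unique hT hA haxis (h := b * (a * b) ^ m) (by
      rw [← hab, mul_assoc, ← pow_succ, pow_succ', mul_assoc, hab])
    have h1 := hn₁ 0
    have h2 := hn₂ 0
    rw [mul_smul, ← h0, hu, ← h0] at h1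
    rw [mul_smul, ← h0, hrm, ← h0] at h2
    obtain rfl : n₁ = n₂ := by
      simpa using hc.toIsLine.injective hT (h1.symm.trans h2)
    intro i
    apply MulAction.injective b
    simp only [← mul_smul]
    rw [hn₁, hn₂]
  -- the orbit of `ℓ' (-1)` under `r = a * b`
  have e1 : (a * b) ^ m • ℓ 1 = ℓ (-1) := by rw [hrm, hK 1 (by omega) (by omega)]
  have e2 : (a * b) ^ m • ℓ (-1) = ℓ' (-1) := hrm _
  have e3 : (a * b) ^ m • ℓ' (-1) = ℓ 1 := by
    rw [← hur, mul_smul, hb.smul, ← hK _ (by omega) (by omega), hc.smul]; congr 1; ring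
  have e4 : (a * b) • ℓ' (-1) = ℓ 1 := by
    rw [mul_smul, hb.smul, ← hK _ (by omega) (by omega), ha]; congr 1; ring
  have hne : ℓ (-1) ≠ ℓ 1 := by
    intro h
    have := hc.toIsLine.injective hT h
    omega
  generalize a * b = r at *
  generalize ℓ' (-1) = e at *
  let H : Subgroup G := MulAction.stabilizer G e
  have p1 : r ^ (3 * (m : ℤ)) ∈ H := by
    rw [MulAction.mem_stabilizer_iff, show 3 * (m : ℤ) = ((m + m + m : ℕ) : ℤ) by push_cast; ring,
      zpow_natCast, pow_add, pow_add, mul_smul, mul_smul, e3, e1, e2]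
  have p2 : r ^ ((m : ℤ) - 1) ∈ H := by
    rw [MulAction.mem_stabilizer_iff, show (m : ℤ) - 1 = -1 + m by ring, zpow_add, mul_smul,
      zpow_natCast, e3, zpow_neg_one, inv_smul_eq_iff, e4]
  -- `3 * m` and `m - 1` are coprime as `3 ∤ m - 1`
  obtain ⟨u, v, huv⟩ : ∃ u v : ℤ, 3 * (m : ℤ) * u + ((m : ℤ) - 1) * v = 1 := by
    obtain ⟨k, hk⟩ : ∃ k : ℤ, (m : ℤ) = 3 * k ∨ (m : ℤ) = 3 * k + 2 := ⟨m / 3, by omega⟩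
    rcases hk with hk | hk
    · exact ⟨k, -3 * k - 1, by rw [hk]; ring⟩
    · exact ⟨-k, 3 * k + 1, by rw [hk]; ring⟩
  have p3 : r • e = e := by
    have := H.mul_mem (H.zpow_mem p1 u) (H.zpow_mem p2 v)
    rwa [← zpow_mul, ← zpow_mul, ← zpow_add, huv, zpow_one, MulAction.mem_stabilizer_iff] at this
  have p4 : r ^ m • e = e := smul_pow_eq p3 m
  have p5 : ℓ 1 = e := e3.symm.trans p4
  exact hne (by rw [← e1, p5, p4])

end Relations

/-! ### The presented group -/

section Presented

variable (m : ℕ)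

theorem gA_mul_gC : gA m * gC m = gC m * gA m :=
  PresentedGroup.mk_eq_mk_of_mul_inv_mem (rels := rels m) (x := a * c) (y := c * a)
    (by simp [rels])

theorem gB_gC_gB : gB m * gC m * gB m = gC m * gB m * gC m :=
  PresentedGroup.mk_eq_mk_of_mul_inv_mem (rels := rels m) (x := b * c * b) (y := c * b * c)
    (by simp [rels])

theorem gA_gB_pow : (gA m * gB m) ^ m * gA m = gB m * (gA m * gB m) ^ m :=
  PresentedGroup.mk_eq_mk_of_mul_inv_mem (rels := rels m) (x := (a * b) ^ m * a)
    (y := b * (a * b) ^ m) (by simp [rels])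

theorem mem_of_generators {H : Subgroup (Art23odd m)} (ha : gA m ∈ H) (hb : gB m ∈ H)
    (hc : gC m ∈ H) (g : Art23odd m) : g ∈ H := by
  refine PresentedGroup.generated_by (rels m) H (fun j => ?_) g
  fin_cases j
  exacts [ha, hb, hc]

end Presented

/-- The elements translating along `ℓ` form a subgroup. -/
def translating {V G : Type*} [Group G] [MulAction G V] (ℓ : ℤ → V) : Subgroup G where
  carrier := {g | ∃ n : ℤ, ∀ i, g • ℓ i = ℓ (i + n)}
  one_mem' := ⟨0, by simp⟩
  mul_mem' := by
    rintro g h ⟨n, hn⟩ ⟨k, hk⟩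
    exact ⟨k + n, fun i => by rw [mul_smul, hk, hn, add_assoc]⟩
  inv_mem' := by
    rintro g ⟨n, hn⟩
    exact ⟨-n, smul_inv_translate hn⟩

theorem exists_fixed_of_conj {V G : Type*} [Group G] [MulAction G V] {g g' h : G}
    (hc : h * g = g' * h) (hg : ∃ x : V, g • x = x) : ∃ x : V, g' • x = x := by
  obtain ⟨x, hx⟩ := hg
  exact ⟨h • x, by rw [← mul_smul, ← hc, mul_smul, hx]⟩

end Art23odd

/-- For `m ≥ 1` with `m ≢ 1 (mod 3)`, every action without
inversions of `G = Art_{2,3,2m+1}` on a tree `T` either has a global fixed vertex or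
admits a geodesic line in `T` whose image is `G`-invariant. -/
theorem art23odd_fixed_point_or_line (m : ℕ) (hm : 1 ≤ m) (hmod : m % 3 ≠ 1)
    (V : Type) (T : SimpleGraph V) (hT : T.IsTree)
    [MulAction (Art23odd m) V]
    (hact : ∀ (g : Art23odd m) (u v : V), T.Adj u v → T.Adj (g • u) (g • v))
    (hninv : ∀ (g : Art23odd m) (u v : V), T.Adj u v → ¬(g • u = v ∧ g • v = u)) :
    (∃ v : V, ∀ g : Art23odd m, g • v = v) ∨
    ∃ ℓ : ℤ → V, Function.Injective ℓ ∧ (∀ i : ℤ, T.Adj (ℓ i) (ℓ (i + 1))) ∧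
      ∀ (g : Art23odd m) (i : ℤ), ∃ j : ℤ, g • ℓ i = ℓ j := by
  have hac : Commute (Art23odd.gA m) (Art23odd.gC m) := Art23odd.gA_mul_gC m
  have hbc := Art23odd.gB_gC_gB m
  have hab := Art23odd.gA_gB_pow m
  have hgen := @Art23odd.mem_of_generators m
  generalize Art23odd.gA m = a at *
  generalize Art23odd.gB m = b at *
  generalize Art23odd.gC m = c at *
  have hcb : (c * b) ^ 1 * c = b * (c * b) ^ 1 := by rw [pow_one, ← hbc, mul_assoc]
  obtain ⟨hrA, hrB⟩ := Art23odd.commute_pow hab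
  obtain ⟨huC, huB⟩ := Art23odd.commute_pow hcb
  by_cases hc : ∃ x : V, c • x = x
  · left
    have hb : ∃ x : V, b • x = x := Art23odd.exists_fixed_of_conj hcb hc
    have ha : ∃ x : V, a • x = x :=
      Art23odd.exists_fixed_of_conj (h := ((a * b) ^ m)⁻¹)
        (by rw [inv_mul_eq_iff_eq_mul, ← mul_assoc, hab, mul_assoc, mul_inv_cancel, mul_one]) hb
    have h1 := Art23odd.exists_common_fixed_of_commute hT hact hninv (by omega) hrA hrB ha hb
    have h2 := Art23odd.exists_common_fixed_of_commute hT hact hninv (by omega) huC huB hc hb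
    have h3 := Art23odd.exists_common_fixed_of_commute hT hact hninv (N := 1) (by omega)
      (by rw [pow_one]; exact (Commute.refl a).mul_left hac.symm)
      (by rw [pow_one]; exact hac.mul_left (Commute.refl c)) ha hc
    obtain ⟨x, hxa, hxb, hxc⟩ :=
      Art23odd.exists_common_fixed_three hT hact h1 (h2.imp fun _ h => h.symm) h3
    exact ⟨x, fun g => hgen (H := MulAction.stabilizer _ x) hxa hxb hxc g⟩
  · right
    have ha : ¬ ∃ x : V, a • x = x := fun ha =>
      hc <| Art23odd.exists_fixed_of_conj (h := ((c * b) ^ 1)⁻¹)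
        (by rw [inv_mul_eq_iff_eq_mul, ← mul_assoc, hcb, mul_assoc, mul_inv_cancel, mul_one])
        (Art23odd.exists_fixed_of_conj hab ha)
    -- it suffices to find a line along which all three generators translate
    suffices h : ∃ ℓ : ℤ → V, Art23odd.IsLine T ℓ ∧ a ∈ Art23odd.translating ℓ ∧
        b ∈ Art23odd.translating ℓ ∧ c ∈ Art23odd.translating ℓ by
      obtain ⟨ℓ, hℓ, h1, h2, h3⟩ := h
      refine ⟨ℓ, hℓ.injective hT, hℓ.adj, fun g i => ?_⟩
      obtain ⟨n, hn⟩ := hgen h1 h2 h3 g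
      exact ⟨i + n, hn i⟩
    -- an element without fixed vertex translating along a line does so by a nonzero amount
    have key : ∀ {g h : Art23odd m} {ℓ : ℤ → V}, Art23odd.IsLine T ℓ → (¬ ∃ x : V, g • x = x) →
        g ∈ Art23odd.translating ℓ → Commute g h → h ∈ Art23odd.translating ℓ := by
      rintro g h ℓ hℓ hg ⟨n, hn⟩ hgh
      refine hℓ.translate_of_commute hT hact (n := n) ?_ hn hgh
      rintro rfl
      exact hg ⟨ℓ 0, by rw [hn, add_zero]⟩
    by_cases hu : ∃ x : V, (c * b) • x = x
    · by_cases hr : ∃ x : V, (a * b) • x = x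
      · push Not at hc
        obtain ⟨ℓ, t, hℓ⟩ := Art23odd.exists_axis hT hact hninv c hc
        exact (Art23odd.false_of_axis hT hact hmod hac hbc hab hℓ hu hr).elim
      · push Not at hr
        obtain ⟨ℓ, t, hℓ⟩ := Art23odd.exists_axis hT hact hninv (a * b) hr
        have hp := hℓ.pow (N := 2 * m + 1) (by omega)
        have h1 : a ∈ Art23odd.translating ℓ :=
          hℓ.toIsLine.translate_of_commute hT hact hp.pos.ne' hp.smul hrA
        have h2 : b ∈ Art23odd.translating ℓ :=
          hℓ.toIsLine.translate_of_commute hT hact hp.pos.ne' hp.smul hrB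
        exact ⟨ℓ, hℓ.toIsLine, h1, h2, key hℓ.toIsLine ha h1 hac⟩
    · push Not at hu
      obtain ⟨ℓ, t, hℓ⟩ := Art23odd.exists_axis hT hact hninv (c * b) hu
      have hp := hℓ.pow (N := 2 * 1 + 1) (by omega)
      have h1 : c ∈ Art23odd.translating ℓ :=
        hℓ.toIsLine.translate_of_commute hT hact hp.pos.ne' hp.smul huC
      have h2 : b ∈ Art23odd.translating ℓ :=
        hℓ.toIsLine.translate_of_commute hT hact hp.pos.ne' hp.smul huB
      exact ⟨ℓ, hℓ.toIsLine, key hℓ.toIsLine hc h1 hac.symm, h2, h1⟩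
end

section
/- Let m = 3k+1 for some integer k ≥ 0, and let G = Art_{2,3,2m+1} = ⟨a,b,c | ac=ca, bcb=cbc, (ab)^m a = b(ab)^m⟩. Then every action of G without inversions on a tree T either has a vertex fixed by every element of G, or admits a geodesic line in T whose image is G-invariant, or has a vertex p₀ fixed by both of the elements (ab)^m a and (ab)^3. -/
namespace TreeAct

open SimpleGraph

/-! ### Geodesics, medians and lines in a tree -/

section Tree

variable {V : Type*} {T : SimpleGraph V}

/-- In a tree, every vertex other than the root `x` has only one neighbour closer to `x`. -/
lemma closer_unique (hT : T.IsTree) {x u w₁ w₂ : V} (h₁ : T.Adj u w₁) (h₂ : T.Adj u w₂)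
    (d₁ : T.dist x u = T.dist x w₁ + 1) (d₂ : T.dist x u = T.dist x w₂ + 1) : w₁ = w₂ := by
  obtain ⟨p₁, -, l₁⟩ := hT.connected.exists_path_of_dist x w₁
  obtain ⟨p₂, -, l₂⟩ := hT.connected.exists_path_of_dist x w₂
  have q₁ : (p₁.concat h₁.symm).IsPath := Walk.isPath_of_length_eq_dist _ (by simp; omega)
  have q₂ : (p₂.concat h₂.symm).IsPath := Walk.isPath_of_length_eq_dist _ (by simp; omega)
  have h := congrArg Subtype.val
    ((hT.isAcyclic.subsingleton_path x u).elim ⟨_, q₁⟩ ⟨_, q₂⟩)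
  have := congrArg Walk.penultimate h
  simpa using this

lemma exists_closer (hT : T.IsTree) {x u : V} (h : x ≠ u) :
    ∃ w, T.Adj u w ∧ T.dist x u = T.dist x w + 1 := by
  obtain ⟨p, -, l⟩ := hT.connected.exists_path_of_dist u x
  cases p with
  | nil => exact absurd rfl h
  | cons hadj q =>
    refine ⟨_, hadj, ?_⟩
    have h1 := T.dist_le q
    have h2 := hT.dist_eq_dist_add_one_of_adj x hadj
    simp only [Walk.length_cons] at l
    rw [T.dist_comm (u := x)] at h2 ⊢
    rw [T.dist_comm (u := x)] at h2 ⊢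
    omega

/-- Two geodesics that leave `m` through different neighbours concatenate to a geodesic. -/
lemma dist_concat (hT : T.IsTree) {x m y : V}
    (h : ∀ u, T.Adj m u → T.dist x m = T.dist x u + 1 → T.dist y m = T.dist y u + 1 → False) :
    T.dist x y = T.dist x m + T.dist m y := by
  induction hn : T.dist y m generalizing m with
  | zero =>
    have := (hT.connected.dist_eq_zero_iff).1 hn
    subst this
    simp
  | succ n ih =>
    have hne : y ≠ m := by
      rintro rfl
      simp at hn
    obtain ⟨w, hw, hd⟩ := exists_closer hT hne
    have h1 : T.dist x w = T.dist x m + 1 := by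
      rcases hT.dist_eq_dist_add_one_of_adj x hw with h1 | h1
      · exact (h w hw h1 hd).elim
      · exact h1
    have := ih (m := w) (by
      intro u hu hu1 hu2
      have := closer_unique hT hu hw.symm hu1 h1
      subst this
      omega) (by omega)
    rw [T.dist_comm (u := m), this, T.dist_comm (u := w)]
    omega

/-- A point on a geodesic from `x` to `y` is determined by its distances to the ends. -/
lemma between_unique (hT : T.IsTree) {x y m m' : V} (h : T.dist x y = T.dist x m + T.dist m y)
    (h₁ : T.dist x m' = T.dist x m) (h₂ : T.dist m' y = T.dist m y) : m' = m := by
  induction hn : T.dist y m generalizing m m' with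
  | zero =>
    have e := (hT.connected.dist_eq_zero_iff).1 hn
    rw [T.dist_comm (u := m), hn] at h₂
    have e' := (hT.connected.dist_eq_zero_iff).1 h₂
    rw [e', e]
  | succ n ih =>
    have hne : y ≠ m := by
      rintro rfl
      simp at hn
    have hne' : y ≠ m' := by
      rintro rfl
      rw [T.dist_self, T.dist_comm] at h₂
      omega
    obtain ⟨w, hw, hd⟩ := exists_closer hT hne
    obtain ⟨w', hw', hd'⟩ := exists_closer hT hne'
    have c1 := T.dist_comm (u := y) (v := m)
    have c2 := T.dist_comm (u := y) (v := m')
    have c3 := T.dist_comm (u := y) (v := w)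
    have c4 := T.dist_comm (u := y) (v := w')
    have t1 := hT.connected.dist_triangle (u := x) (v := w) (w := y)
    have t2 := hT.connected.dist_triangle (u := x) (v := w') (w := y)
    have t3 := hT.dist_eq_dist_add_one_of_adj x hw
    have t4 := hT.dist_eq_dist_add_one_of_adj x hw'
    have e : w' = w := ih (m := w) (m' := w') (by omega) (by omega) (by omega) (by omega)
    subst e
    exact closer_unique hT hw'.symm hw.symm (by omega : T.dist x w' = _) (by omega)

lemma exists_median (hT : T.IsTree) (x y z : V) : ∃ m, T.dist x y = T.dist x m + T.dist m y ∧
    T.dist x z = T.dist x m + T.dist m z ∧ T.dist y z = T.dist y m + T.dist m z := by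
  -- the vertex of the geodesic from `x` to `y` that is nearest to `z`
  obtain ⟨m, hm, hmin⟩ := WellFounded.has_min (measure (T.dist z)).wf
    {m | T.dist x y = T.dist x m + T.dist m y} ⟨x, by simp⟩
  simp only [Set.mem_ofPred_eq] at hm
  have key : ∀ u, T.Adj m u → T.dist z m = T.dist z u + 1 →
      T.dist x y ≠ T.dist x u + T.dist u y := by
    intro u hu hz hxy
    exact hmin u hxy (show T.dist z u < T.dist z m by omega)
  refine ⟨m, hm, dist_concat hT ?_, dist_concat hT ?_⟩
  · intro u hu h1 h2
    have t1 := hT.connected.dist_triangle (u := x) (v := u) (w := y)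
    have t3 := hT.dist_eq_dist_add_one_of_adj y hu
    have c1 := T.dist_comm (u := y) (v := m)
    have c3 := T.dist_comm (u := y) (v := u)
    exact key u hu h2 (by omega)
  · intro u hu h1 h2
    have t1 := hT.connected.dist_triangle (u := x) (v := u) (w := y)
    have t3 := hT.dist_eq_dist_add_one_of_adj x hu
    have c1 := T.dist_comm (u := y) (v := m)
    have c3 := T.dist_comm (u := y) (v := u)
    exact key u hu h2 (by omega)

/-- A bi-infinite path without backtracking. In a tree this is a geodesic line; see
`IsLine.dist`. -/
def IsLine (T : SimpleGraph V) (L : ℤ → V) : Prop :=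
  ∀ i, T.Adj (L i) (L (i + 1)) ∧ L i ≠ L (i + 2)

lemma IsLine.dist_add (hT : T.IsTree) {L : ℤ → V} (hL : IsLine T L) (i : ℤ) (k : ℕ) :
    T.dist (L i) (L (i + k)) = k := by
  induction k using Nat.strong_induction_on with
  | _ k ih =>
    match k with
    | 0 => simp
    | 1 => simpa using (dist_eq_one_iff_adj).2 (hL i).1
    | k + 2 =>
      have h0 := ih k (by omega)
      have h1 := ih (k + 1) (by omega)
      have a0 := (hL (i + k)).1
      have a1 := (hL (i + k + 1)).1
      have ne := (hL (i + k)).2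
      have e1 : i + ((k + 1 : ℕ) : ℤ) = i + k + 1 := by push_cast; ring
      have e2 : i + ((k + 2 : ℕ) : ℤ) = i + k + 1 + 1 := by push_cast; ring
      have e3 : i + (k : ℤ) + 2 = i + k + 1 + 1 := by ring
      rw [e1] at h1
      rw [e3] at ne
      rw [e2]
      rcases hT.dist_eq_dist_add_one_of_adj (L i) a1 with h | h
      · exact absurd (closer_unique hT (x := L i) a0.symm a1 (by omega) h) ne
      · omega

lemma IsLine.dist (hT : T.IsTree) {L : ℤ → V} (hL : IsLine T L) (i j : ℤ) :
    (T.dist (L i) (L j) : ℤ) = |j - i| := by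
  rcases le_total i j with h | h
  · obtain ⟨k, hk⟩ := Int.le.dest h
    have := hL.dist_add hT i k
    rw [hk] at this
    rw [this, abs_of_nonneg (by omega)]
    omega
  · obtain ⟨k, hk⟩ := Int.le.dest h
    have := hL.dist_add hT j k
    rw [hk] at this
    rw [T.dist_comm, this, abs_of_nonpos (by omega)]
    omega

lemma IsLine.injective (hT : T.IsTree) {L : ℤ → V} (hL : IsLine T L) : Function.Injective L := by
  intro i j h
  have := hL.dist hT i j
  rw [h, T.dist_self, Nat.cast_zero, eq_comm, abs_eq_zero] at this
  omega

/-- The neighbour of `L i` closer to another point of the line lies on the line. -/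
lemma IsLine.closer (hT : T.IsTree) {L : ℤ → V} (hL : IsLine T L) {i j : ℤ} {u : V}
    (hu : T.Adj (L i) u) (hd : T.dist (L j) (L i) = T.dist (L j) u + 1) :
    (i < j ∧ u = L (i + 1)) ∨ (j < i ∧ u = L (i - 1)) := by
  have h0 := hL.dist hT j i
  rcases lt_trichotomy i j with h | h | h
  · refine Or.inl ⟨h, closer_unique hT hu (hL i).1 hd ?_⟩
    have h1 := hL.dist hT j (i + 1)
    rw [abs_of_nonpos (by omega)] at h0 h1
    omega
  · subst h
    simp at hd
  · have a := (hL (i - 1)).1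
    rw [sub_add_cancel] at a
    refine Or.inr ⟨h, closer_unique hT hu a.symm hd ?_⟩
    have h1 := hL.dist hT j (i - 1)
    rw [abs_of_nonneg (by omega)] at h0 h1
    omega

/-- Nearest-point projection `L i` of a vertex `v` to a line. -/
lemma IsLine.proj (hT : T.IsTree) {L : ℤ → V} (hL : IsLine T L) (v : V) :
    ∃ i, ∀ j, (T.dist v (L j) : ℤ) = T.dist v (L i) + |j - i| := by
  obtain ⟨i, -, hmin⟩ := WellFounded.has_min (measure fun i => T.dist v (L i)).wf
    Set.univ ⟨0, trivial⟩
  refine ⟨i, fun j => ?_⟩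
  have : ∀ k, ¬ T.dist v (L k) < T.dist v (L i) := fun k => hmin k trivial
  rw [← hL.dist hT, dist_concat hT (m := L i)]
  · push_cast; rfl
  · intro u hu h1 h2
    rcases hL.closer hT hu h2 with ⟨-, rfl⟩ | ⟨-, rfl⟩
    · exact this (i + 1) (by omega)
    · exact this (i - 1) (by omega)

end Tree

/-- An action of `G` without inversions on the tree `T` by graph automorphisms. -/
structure IsTreeAction (G : Type*) {V : Type*} [Group G] [MulAction G V] (T : SimpleGraph V) :
    Prop where
  tree : T.IsTree
  adj : ∀ (g : G) (u v : V), T.Adj u v → T.Adj (g • u) (g • v)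
  no_inv : ∀ (g : G) (u v : V), T.Adj u v → ¬(g • u = v ∧ g • v = u)

/-- `g` fixes a vertex. -/
def Elliptic {G : Type*} (V : Type*) [Group G] [MulAction G V] (g : G) : Prop :=
  ∃ v : V, g • v = v

/-- `g` translates the line `L` by `n ≠ 0`. The sign of `n` records the direction of translation
relative to the parametrization of `L`. -/
def IsAxis {G V : Type*} [Group G] [MulAction G V] (T : SimpleGraph V) (g : G) (L : ℤ → V)
    (n : ℤ) : Prop :=
  IsLine T L ∧ n ≠ 0 ∧ ∀ i, g • L i = L (i + n)

section Action

variable {G V : Type*} [Group G] [MulAction G V] {T : SimpleGraph V}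

lemma IsTreeAction.adj_iff (A : IsTreeAction G T) (g : G) {u v : V} :
    T.Adj (g • u) (g • v) ↔ T.Adj u v :=
  ⟨fun h => by simpa using A.adj g⁻¹ _ _ h, A.adj g u v⟩

lemma IsTreeAction.dist_le (A : IsTreeAction G T) (g : G) (u v : V) :
    T.dist (g • u) (g • v) ≤ T.dist u v := by
  obtain ⟨p, -, l⟩ := A.tree.connected.exists_path_of_dist u v
  let f : T →g T := ⟨fun x => g • x, fun {a b} h => A.adj g a b h⟩
  rw [← l, ← Walk.length_map f p]
  exact SimpleGraph.dist_le (p.map f)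

lemma IsTreeAction.dist_smul (A : IsTreeAction G T) (g : G) (u v : V) :
    T.dist (g • u) (g • v) = T.dist u v :=
  le_antisymm (A.dist_le g u v) (by simpa using A.dist_le g⁻¹ (g • u) (g • v))

lemma IsTreeAction.dist_inv_smul (A : IsTreeAction G T) (g : G) (u v : V) :
    T.dist (g⁻¹ • u) v = T.dist u (g • v) := by
  rw [← A.dist_smul g, smul_inv_smul]

/-! ### Fixed vertices -/

/-- Fixed-point sets are convex. -/
lemma IsTreeAction.fix_between (A : IsTreeAction G T) {g : G} {x y m : V} (hx : g • x = x)
    (hy : g • y = y) (h : T.dist x y = T.dist x m + T.dist m y) : g • m = m :=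
  between_unique A.tree h (by simpa [hx] using A.dist_smul g x m)
    (by simpa [hy] using A.dist_smul g m y)

/-- For elliptic `g`, the midpoint of the geodesic from `v` to `g • v` is fixed by `g`. -/
lemma IsTreeAction.exists_midpoint (A : IsTreeAction G T) {g : G} (hg : Elliptic V g) (v : V) :
    ∃ m, g • m = m ∧ T.dist v (g • v) = T.dist v m + T.dist m (g • v) ∧
      T.dist m (g • v) = T.dist v m := by
  -- `m` is the projection of `v` to the fixed subtree of `g`
  obtain ⟨m, hm, hmin⟩ := WellFounded.has_min (measure (T.dist v)).wf {m | g • m = m} hg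
  simp only [Set.mem_ofPred_eq] at hm
  have e : T.dist m (g • v) = T.dist v m := by
    conv_lhs => rw [← hm, A.dist_smul, T.dist_comm]
  refine ⟨m, hm, dist_concat A.tree ?_, e⟩
  intro u hu h1 h2
  have hu' : T.Adj m (g • u) := by simpa [hm] using A.adj g _ _ hu
  have h3 : T.dist (g • v) m = T.dist (g • v) (g • u) + 1 := by
    rw [A.dist_smul, ← h1, T.dist_comm, e]
  exact hmin u (closer_unique A.tree hu' hu h3 h2) (show T.dist v u < T.dist v m by omega)

/-- Serre's lemma: if `g`, `h` and `g * h` are elliptic, then `g` and `h` have a common fixed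
vertex. If `g * h` fixes `v`, then `h • v = g⁻¹ • v`, and both elements fix the midpoint of
the geodesic from `v` to this vertex. -/
lemma IsTreeAction.serre (A : IsTreeAction G T) {g h : G} (hg : Elliptic V g)
    (hh : Elliptic V h) (hgh : Elliptic V (g * h)) : ∃ v : V, g • v = v ∧ h • v = v := by
  obtain ⟨v, hv⟩ := hgh
  have hv' : h • v = g⁻¹ • v := by rw [eq_inv_smul_iff, ← mul_smul, hv]
  have hg' : Elliptic V g⁻¹ := by
    obtain ⟨w, hw⟩ := hg
    exact ⟨w, inv_smul_eq_iff.2 hw.symm⟩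
  obtain ⟨p, hp, p1, p2⟩ := A.exists_midpoint hg' v
  obtain ⟨q, hq, q1, q2⟩ := A.exists_midpoint hh v
  rw [hv'] at q1 q2
  have : q = p := between_unique A.tree p1 (by omega) (by omega)
  subst this
  exact ⟨q, (inv_smul_eq_iff.1 hp).symm, hq⟩

lemma IsTreeAction.commute_fix (A : IsTreeAction G T) {g h : G} (hc : Commute g h)
    (hg : Elliptic V g) (hh : Elliptic V h) : ∃ v : V, g • v = v ∧ h • v = v := by
  obtain ⟨v, hv⟩ := hg
  obtain ⟨m, hm, h1, -⟩ := A.exists_midpoint hh v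
  refine ⟨m, A.fix_between hv ?_ h1, hm⟩
  rw [← mul_smul, hc.eq, mul_smul, hv]

lemma Elliptic.conj {g : G} (hg : Elliptic V g) (k : G) : Elliptic V (k * g * k⁻¹) := by
  obtain ⟨v, hv⟩ := hg
  exact ⟨k • v, by simp [mul_smul, hv]⟩

lemma Elliptic.pow {g : G} (hg : Elliptic V g) (k : ℕ) : Elliptic V (g ^ k) := by
  obtain ⟨v, hv⟩ := hg
  exact ⟨v, (MulAction.stabilizer G v).pow_mem hv k⟩

lemma Elliptic.inv {g : G} (hg : Elliptic V g) : Elliptic V g⁻¹ := by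
  obtain ⟨w, hw⟩ := hg
  exact ⟨w, inv_smul_eq_iff.2 hw.symm⟩

/-! ### Axes -/

/-- The displacement formula `dist v (g • v) = |n| + 2 * dist v L`, together with the distances
from `v` to the points of `L`. -/
lemma IsAxis.displacement (A : IsTreeAction G T) {g : G} {L : ℤ → V} {n : ℤ}
    (h : IsAxis T g L n) (v : V) :
    ∃ i, (∀ j, (T.dist v (L j) : ℤ) = T.dist v (L i) + |j - i|) ∧
      (T.dist v (g • v) : ℤ) = |n| + 2 * T.dist v (L i) := by
  obtain ⟨hL, hn, hg⟩ := h
  obtain ⟨i, hi⟩ := hL.proj A.tree v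
  refine ⟨i, hi, ?_⟩
  have hgi : ∀ j, (T.dist (g • v) (L j) : ℤ) = T.dist v (L i) + |j - n - i| := fun j => by
    rw [← hi, ← A.dist_smul g v, hg, sub_add_cancel]
  have e1 := hi (i + n)
  have e2 := hgi (i + n)
  rw [add_sub_cancel_left] at e1
  rw [add_sub_cancel_right, sub_self, abs_zero] at e2
  rw [dist_concat A.tree (m := L (i + n))]
  · rw [T.dist_comm (v := g • v)]
    push_cast
    rw [e1, e2]
    ring
  · intro u hu h1 h2
    -- the neighbour of `L (i + n)` towards `v` is the one towards `L i`
    have key : (u = L (i + n + 1) ∧ n < 0) ∨ (u = L (i + n - 1) ∧ 0 < n) := by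
      rcases lt_or_gt_of_ne hn with hn | hn
      · refine Or.inl ⟨closer_unique A.tree hu (hL _).1 h1 ?_, hn⟩
        have := hi (i + n + 1)
        rw [abs_of_neg hn] at e1
        rw [abs_of_nonpos (by omega)] at this
        omega
      · have a := (hL (i + n - 1)).1
        rw [sub_add_cancel] at a
        refine Or.inr ⟨closer_unique A.tree hu a.symm h1 ?_, hn⟩
        have := hi (i + n - 1)
        rw [abs_of_pos hn] at e1
        rw [abs_of_nonneg (by omega)] at this
        omega
    rcases key with ⟨rfl, -⟩ | ⟨rfl, -⟩
    · have := hgi (i + n + 1)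
      have := abs_nonneg (i + n + 1 - n - i)
      omega
    · have := hgi (i + n - 1)
      have := abs_nonneg (i + n - 1 - n - i)
      omega

lemma IsAxis.not_elliptic (A : IsTreeAction G T) {g : G} {L : ℤ → V} {n : ℤ}
    (h : IsAxis T g L n) : ¬ Elliptic V g := by
  rintro ⟨v, hv⟩
  obtain ⟨i, -, hi⟩ := h.displacement A v
  have := abs_pos.2 h.2.1
  rw [hv, T.dist_self] at hi
  omega

lemma pow_smul_line {g : G} {L : ℤ → V} {n : ℤ} (h : ∀ i, g • L i = L (i + n)) (k : ℕ) (i : ℤ) :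
    g ^ k • L i = L (i + k * n) := by
  induction k generalizing i with
  | zero => simp
  | succ k ih =>
    rw [pow_succ, mul_smul, h, ih]
    congr 1
    push_cast
    ring

lemma inv_smul_line {g : G} {L : ℤ → V} {n : ℤ} (h : ∀ i, g • L i = L (i + n)) (i : ℤ) :
    g⁻¹ • L i = L (i - n) := by
  rw [inv_smul_eq_iff, h, sub_add_cancel]

lemma IsAxis.pow {g : G} {L : ℤ → V} {n : ℤ} (h : IsAxis T g L n) {k : ℕ} (hk : k ≠ 0) :
    IsAxis T (g ^ k) L (k * n) :=
  ⟨h.1, mul_ne_zero (by exact_mod_cast hk) h.2.1, pow_smul_line h.2.2 k⟩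

lemma IsAxis.inv {g : G} {L : ℤ → V} {n : ℤ} (h : IsAxis T g L n) : IsAxis T g⁻¹ L (-n) :=
  ⟨h.1, neg_ne_zero.2 h.2.1, inv_smul_line h.2.2⟩

lemma IsLine.smul (A : IsTreeAction G T) {L : ℤ → V} (h : IsLine T L) (k : G) :
    IsLine T (fun i => k • L i) :=
  fun i => ⟨A.adj k _ _ (h i).1, fun e => (h i).2 (smul_left_cancel k e)⟩

lemma IsAxis.conj (A : IsTreeAction G T) {g : G} {L : ℤ → V} {n : ℤ} (h : IsAxis T g L n)
    (k : G) : IsAxis T (k * g * k⁻¹) (fun i => k • L i) n :=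
  ⟨h.1.smul A k, h.2.1, fun i => by simp [mul_smul, h.2.2]⟩

/-- The translation length does not depend on the axis. -/
lemma IsAxis.abs_eq (A : IsTreeAction G T) {g : G} {L M : ℤ → V} {n r : ℤ}
    (h : IsAxis T g L n) (hM : IsAxis T g M r) : |n| = |r| := by
  have key : ∀ {L M : ℤ → V} {n r : ℤ}, IsAxis T g L n → IsAxis T g M r → |r| ≤ |n| := by
    intro L M n r h hM
    obtain ⟨i, -, hi⟩ := hM.displacement A (L 0)
    rw [h.2.2, h.1.dist A.tree] at hi
    simp only [zero_add, sub_zero] at hi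
    omega
  exact le_antisymm (key hM h) (key h hM)

/-- An element commuting with a hyperbolic element translates its axis. -/
lemma IsAxis.commute (A : IsTreeAction G T) {g h : G} {L : ℤ → V} {n : ℤ} (hL : IsAxis T g L n)
    (hc : Commute h g) : ∃ s, ∀ i, h • L i = L (i + s) := by
  -- vertices of `h • L` are displaced by `|n|`, so they lie on `L`
  have mem : ∀ i, ∃ j, h • L i = L j := by
    intro i
    obtain ⟨j, -, hj⟩ := hL.displacement A (h • L i)
    rw [← mul_smul, ← hc.eq, mul_smul, A.dist_smul, hL.2.2, hL.1.dist A.tree,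
      add_sub_cancel_left] at hj
    exact ⟨j, (A.tree.connected.dist_eq_zero_iff).1 (by omega)⟩
  choose σ hσ using mem
  have iso : ∀ i j, |σ j - σ i| = |j - i| := fun i j => by
    rw [← hL.1.dist A.tree, ← hL.1.dist A.tree, ← hσ, ← hσ, A.dist_smul]
  have eqv : ∀ i, σ (i + n) = σ i + n := fun i => by
    apply hL.1.injective A.tree
    rw [← hσ, ← hL.2.2, ← mul_smul, hc.eq, mul_smul, hσ, hL.2.2]
  refine ⟨σ 0, fun i => ?_⟩
  rw [hσ]
  congr 1
  have h1 := iso 0 i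
  have h2 := iso 0 (i + n)
  rw [eqv] at h2
  have := hL.2.1
  rcases abs_eq_abs.1 h1 with h1 | h1 <;> rcases abs_eq_abs.1 h2 with h2 | h2 <;> omega

/-- If two hyperbolic elements with the same translation length agree at a vertex, then they
agree at a vertex of the axis of the first one, namely at the projection of the given vertex. -/
lemma IsAxis.agree (A : IsTreeAction G T) {g h : G} {L M : ℤ → V} {n r : ℤ}
    (hg : IsAxis T g L n) (hh : IsAxis T h M r) (hnr : |n| = |r|) {p : V}
    (hp : g • p = h • p) : ∃ i, h • L i = g • L i := by
  obtain ⟨i, hi, di⟩ := hg.displacement A p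
  obtain ⟨j, hj, dj⟩ := hh.displacement A p
  have i1 : (T.dist p (g • L i) : ℤ) = T.dist p (L i) + |n| := by
    rw [hg.2.2, hi, add_sub_cancel_left]
  have j1 : (T.dist p (h • M j) : ℤ) = T.dist p (M j) + |r| := by
    rw [hh.2.2, hj, add_sub_cancel_left]
  have i2 : (T.dist (L i) (g • p) : ℤ) = T.dist p (L i) + |n| := by
    rw [T.dist_comm, ← sub_add_cancel i n, ← hg.2.2, A.dist_smul, hi]
    simp [hg.2.2]
  have j2 : (T.dist (M j) (h • p) : ℤ) = T.dist p (M j) + |r| := by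
    rw [T.dist_comm, ← sub_add_cancel j r, ← hh.2.2, A.dist_smul, hj]
    simp [hh.2.2]
  have i3 := A.dist_smul g (L i) p
  have j3 := A.dist_smul h (M j) p
  have c1 := T.dist_comm (u := p) (v := L i)
  have c2 := T.dist_comm (u := p) (v := M j)
  rw [← hp] at dj j2 j3
  have e : M j = L i := between_unique A.tree (x := p) (y := g • p) (by omega) (by omega)
    (by omega)
  have e' : h • M j = g • L i := between_unique A.tree (x := p) (y := g • p) (by omega)
    (by omega) (by omega)
  exact ⟨i, by rw [← e', e]⟩

/-- An element without fixed vertex has an axis. The axis is the union of the `g`-translates of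
a geodesic from `v` to `g • v`, where `v` is a vertex of minimal displacement. -/
lemma IsTreeAction.exists_axis (A : IsTreeAction G T) {g : G} (hg : ¬ Elliptic V g) :
    ∃ L n, IsAxis T g L n := by
  have : Nonempty V := A.tree.connected.nonempty
  obtain ⟨v, -, hmin⟩ := WellFounded.has_min (measure fun v => T.dist v (g • v)).wf
    Set.univ ⟨Classical.arbitrary V, trivial⟩
  obtain ⟨w, -, hw⟩ := A.tree.connected.exists_path_of_dist v (g • v)
  set n := T.dist v (g • v) with hn
  set p := w.getVert with hp
  have p0 : p 0 = v := w.getVert_zero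
  have pn : p n = g • v := by rw [← hw]; exact w.getVert_length
  have padj : ∀ r < n, T.Adj (p r) (p (r + 1)) := fun r hr => w.adj_getVert_succ (by omega)
  have npos : 0 < n := Nat.pos_of_ne_zero fun h =>
    hg ⟨v, ((A.tree.connected.dist_eq_zero_iff).1 h).symm⟩
  have ple : ∀ r k, r + k ≤ n → T.dist (p r) (p (r + k)) ≤ k := by
    intro r k
    induction k with
    | zero => simp
    | succ k ih =>
      intro h
      have h1 := ih (by omega)
      have h2 := (dist_eq_one_iff_adj).2 (padj (r + k) (by omega))
      have h3 := A.tree.connected.dist_triangle (u := p r) (v := p (r + k)) (w := p (r + k + 1))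
      rw [← add_assoc]
      omega
  have pne : ∀ r, r + 2 ≤ n → p r ≠ p (r + 2) := by
    intro r hr e
    have h1 := ple 0 r (by omega)
    have h2 := ple (r + 2) (n - (r + 2)) (by omega)
    rw [zero_add] at h1
    rw [Nat.add_sub_cancel' hr, ← e] at h2
    have h3 := A.tree.connected.dist_triangle (u := p 0) (v := p r) (w := p n)
    rw [p0, pn, ← hn] at h3
    rw [p0] at h1
    rw [pn] at h2
    omega
  -- by minimality (or absence of inversions, if `n = 1`) no backtracking occurs at `g • v`
  have turn : p (n - 1) ≠ g • p 1 := by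
    intro e
    rcases Nat.lt_or_ge n 2 with h | h
    · have n1 : n = 1 := by omega
      rw [n1] at pn e
      rw [pn, Nat.sub_self, p0] at e
      refine A.no_inv g v (g • v) ?_ ⟨rfl, e.symm⟩
      rw [← dist_eq_one_iff_adj, ← hn, n1]
    · have h1 := ple 1 (n - 2) (by omega)
      rw [show 1 + (n - 2) = n - 1 by omega, e] at h1
      exact hmin (p 1) trivial (show T.dist (p 1) (g • p 1) < n by omega)
  have nz : (n : ℤ) ≠ 0 := by omega
  let L : ℤ → V := fun i => g ^ (i / (n : ℤ)) • p (i % (n : ℤ)).toNat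
  have hL : ∀ (q : ℤ) (r : ℕ), r ≤ n → L (q * n + r) = g ^ q • p r := by
    intro q r hr
    rcases Nat.lt_or_ge r n with h | h
    · have e1 : (q * n + r) / (n : ℤ) = q := by
        rw [add_comm, Int.add_mul_ediv_right _ _ nz,
          Int.ediv_eq_zero_of_lt (by omega) (by omega), zero_add]
      have e2 : (q * n + r) % (n : ℤ) = r := by
        rw [add_comm, Int.add_mul_emod_self_right, Int.emod_eq_of_lt (by omega) (by omega)]
      simp only [L, e1, e2, Int.toNat_natCast]
    · obtain rfl : r = n := by omega
      have e0 : q * (n : ℤ) + n = (q + 1) * n := by ring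
      simp only [L, e0, Int.mul_ediv_cancel _ nz, Int.mul_emod_left, Int.toNat_zero, p0, pn,
        zpow_add, zpow_one, mul_smul]
  have decomp : ∀ i : ℤ, ∃ (q : ℤ) (r : ℕ), r < n ∧ i = q * n + r := by
    intro i
    have h1 := Int.emod_nonneg i nz
    have h2 := Int.emod_lt_of_pos i (by omega : (0 : ℤ) < n)
    refine ⟨i / n, (i % n).toNat, by omega, ?_⟩
    rw [Int.toNat_of_nonneg h1]
    exact (Int.ediv_mul_add_emod i n).symm
  refine ⟨L, n, fun i => ?_, nz, fun i => ?_⟩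
  · obtain ⟨q, r, hr, rfl⟩ := decomp i
    have e1 : q * (n : ℤ) + r + 1 = q * n + (r + 1 : ℕ) := by push_cast; ring
    refine ⟨?_, ?_⟩
    · rw [e1, hL q r hr.le, hL q (r + 1) hr]
      exact A.adj _ _ _ (padj r hr)
    · rw [hL q r hr.le]
      rcases Nat.lt_or_ge (r + 1) n with h | h
      · have e2 : q * (n : ℤ) + r + 2 = q * n + (r + 2 : ℕ) := by push_cast; ring
        rw [e2, hL q (r + 2) h]
        exact fun e => pne r h (smul_left_cancel _ e)
      · obtain rfl : r = n - 1 := by omega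
        have e2 : q * (n : ℤ) + (n - 1 : ℕ) + 2 = (q + 1) * n + (1 : ℕ) := by
          push_cast [Nat.cast_sub (show 1 ≤ n by omega)]
          ring
        rw [e2, hL (q + 1) 1 npos, zpow_add, zpow_one, mul_smul]
        exact fun e => turn (smul_left_cancel _ e)
  · obtain ⟨q, r, hr, rfl⟩ := decomp i
    have e1 : q * (n : ℤ) + r + n = (q + 1) * n + r := by ring
    rw [e1, hL _ _ hr.le, hL _ _ hr.le, add_comm, zpow_add, zpow_one, mul_smul]

lemma IsTreeAction.elliptic_of_pow (A : IsTreeAction G T) {g : G} {k : ℕ} (hk : k ≠ 0)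
    (h : Elliptic V (g ^ k)) : Elliptic V g := by
  by_contra hg
  obtain ⟨L, n, hL⟩ := A.exists_axis hg
  exact (hL.pow hk).not_elliptic A h

/-- An element without fixed vertex that translates an axis of another element has that line as
its own axis: a translation by `0` would fix it pointwise. -/
lemma IsAxis.of_shift {g h : G} {L : ℤ → V} {n s : ℤ} (hL : IsAxis T g L n)
    (hs : ∀ i, h • L i = L (i + s)) (hh : ¬ Elliptic V h) : IsAxis T h L s :=
  ⟨hL.1, fun e => hh ⟨L 0, by simp [hs, e]⟩, hs⟩

end Action

/-! ### The Artin relations -/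

section Artin

variable {G V : Type*} [Group G] [MulAction G V] {T : SimpleGraph V} {a b c : G} {m : ℕ}

/-- The defining relation of odd length `2 * m + 1` makes `((a * b) ^ m * a) ^ 2` equal to
`(a * b) ^ (2 * m + 1)`. -/
lemma garside_sq (r : (a * b) ^ m * a = b * (a * b) ^ m) :
    ((a * b) ^ m * a) ^ 2 = (a * b) ^ (2 * m + 1) := by
  calc ((a * b) ^ m * a) ^ 2 = (a * b) ^ m * a * ((a * b) ^ m * a) := pow_two _
    _ = (a * b) ^ m * a * (b * (a * b) ^ m) := by rw [r]
    _ = (a * b) ^ m * (a * b) * (a * b) ^ m := by simp only [mul_assoc]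
    _ = (a * b) ^ (2 * m + 1) := by rw [← pow_succ, ← pow_add]; congr 1; omega

lemma garside_conj (r : (a * b) ^ m * a = b * (a * b) ^ m) :
    b = ((a * b) ^ m * a) * a * ((a * b) ^ m * a)⁻¹ := by
  rw [eq_mul_inv_iff_mul_eq]
  conv_rhs => rw [r]
  simp only [mul_assoc]

lemma garside_conj' (r : (a * b) ^ m * a = b * (a * b) ^ m) :
    ((a * b) ^ m * a) * b = a * ((a * b) ^ m * a) := by
  have : a * b * (a * b) ^ m = (a * b) ^ m * (a * b) := (pow_succ' _ _).symm.trans (pow_succ _ _)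
  rw [mul_assoc, ← this, r, mul_assoc]

lemma commute_center (r : (a * b) ^ m * a = b * (a * b) ^ m) :
    Commute a ((a * b) ^ (2 * m + 1)) ∧ Commute b ((a * b) ^ (2 * m + 1)) := by
  rw [← garside_sq r, pow_two]
  have h1 := garside_conj r
  rw [eq_mul_inv_iff_mul_eq] at h1
  have h2 := garside_conj' r
  generalize (a * b) ^ m * a = D at *
  constructor
  · change a * (D * D) = D * D * a
    rw [← mul_assoc, ← h2, mul_assoc, h1, mul_assoc]
  · change b * (D * D) = D * D * b
    rw [← mul_assoc, h1, mul_assoc, ← h2, mul_assoc]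

/-- If `a * b` is hyperbolic for two elements satisfying an odd Artin relation, then its axis is
an axis of `a` and of `b`: both commute with a power of `a * b`, and they cannot be elliptic
since, being conjugate, both would then fix the axis of `a * b` pointwise. -/
lemma axis_of_not_elliptic (A : IsTreeAction G T) (r : (a * b) ^ m * a = b * (a * b) ^ m)
    (h : ¬ Elliptic V (a * b)) : ∃ L s t, IsAxis T a L s ∧ IsAxis T b L t := by
  obtain ⟨L, n, hL⟩ := A.exists_axis h
  have hz := hL.pow (k := 2 * m + 1) (by omega)
  obtain ⟨s, hs⟩ := hz.commute A (commute_center r).1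
  obtain ⟨t, ht⟩ := hz.commute A (commute_center r).2
  have hst : ¬ (s = 0 ∧ t = 0) := by
    rintro ⟨rfl, rfl⟩
    exact h ⟨L 0, by simp [mul_smul, hs, ht]⟩
  have hab : Elliptic V a → Elliptic V b := fun h => by
    rw [garside_conj r]
    exact h.conj _
  have hba : Elliptic V b → Elliptic V a := fun h => by
    rw [eq_mul_inv_of_mul_eq (garside_conj' r).symm]
    exact h.conj _
  have ha : ¬ Elliptic V a := fun h => hst
    ⟨by_contra fun hs0 => IsAxis.not_elliptic A ⟨hL.1, hs0, hs⟩ h,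
     by_contra fun ht0 => IsAxis.not_elliptic A ⟨hL.1, ht0, ht⟩ (hab h)⟩
  exact ⟨L, s, t, hL.of_shift hs ha, hL.of_shift ht fun h => ha (hba h)⟩

/-- The core of the hyperbolic case: if `a` is hyperbolic but `a * b` and `b * c` are elliptic,
then `a * b * a` is elliptic. -/
lemma aba_elliptic (A : IsTreeAction G T) (rac : a * c = c * a) (rbc : b * c * b = c * b * c)
    (r : (a * b) ^ m * a = b * (a * b) ^ m) (ha : ¬ Elliptic V a) (hab : Elliptic V (a * b))
    (hbc : Elliptic V (b * c)) : Elliptic V (a * b * a) := by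
  obtain ⟨L, n, hL⟩ := A.exists_axis ha
  have hb : IsAxis T b _ n := garside_conj r ▸ hL.conj A _
  have cconj : c = (b * c) * b * (b * c)⁻¹ := by
    rw [eq_mul_inv_iff_mul_eq, ← mul_assoc, rbc]
  have hcM : IsAxis T c _ n := cconj ▸ hb.conj A _
  obtain ⟨t, ht⟩ := hL.commute A (show Commute c a from rac.symm)
  have hc : IsAxis T c L t := hL.of_shift ht (hcM.not_elliptic A)
  have htn : |t| = |n| := hc.abs_eq A hcM
  -- `b` agrees with `a⁻¹` at a vertex `L i`, and with `c⁻¹` at a vertex `L j`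
  obtain ⟨v, hv⟩ := hab
  obtain ⟨i, hi⟩ := hL.inv.agree A hb (abs_neg n) (p := v)
    (by rw [inv_smul_eq_iff, ← mul_smul, hv])
  obtain ⟨w, hw⟩ := hbc
  obtain ⟨j, hj⟩ := hc.inv.agree A hb ((abs_neg t).trans htn) (p := c • w)
    (by rw [inv_smul_smul, ← mul_smul, hw])
  rw [hL.inv.2.2] at hi
  rw [hc.inv.2.2] at hj
  -- hence `a` and `c` translate `L` in the same direction
  have htt : t = n := by
    rcases abs_eq_abs.1 htn with h | h
    · exact h
    · exfalso
      have iso := A.dist_smul b (L i) (L j)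
      have d1 := hL.1.dist A.tree i j
      have d2 := hL.1.dist A.tree (i + -n) (j + -t)
      rw [hi, hj] at iso
      rw [iso, d1, h] at d2
      have n0 := hL.2.1
      have hij : i = j + n := by
        rcases abs_eq_abs.1 d2 with h | h <;> omega
      refine (hb.pow (k := 2) (by omega)).not_elliptic A ⟨L j, ?_⟩
      rw [pow_two, mul_smul, hj, h, neg_neg, ← hij, hi, hij, add_neg_cancel_right]
  subst htt
  -- `b * c * b` exchanges `L i` and `L (i - t)`, so it fixes their midpoint
  have sw1 : (b * c * b) • L i = L (i + -t) := by
    rw [mul_smul, mul_smul, hi, hc.2.2, neg_add_cancel_right, hi]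
  have sw2 : (b * c * b) • L (i + -t) = L i := by
    rw [rbc, mul_smul, mul_smul, hc.2.2, neg_add_cancel_right, hi, hc.2.2, neg_add_cancel_right]
  have hell : Elliptic V (b * c * b) := A.elliptic_of_pow (k := 2) (by omega)
    ⟨L i, by rw [pow_two, mul_smul, sw1, sw2]⟩
  obtain ⟨u, hu, h1, h2⟩ := A.exists_midpoint hell (L i)
  rw [sw1] at h1 h2
  obtain ⟨k, rfl⟩ : ∃ k, u = L k := by
    have d := hL.1.dist A.tree i (i + -t)
    rw [add_sub_cancel_left] at d
    rcases abs_cases (-t) with ⟨e, -⟩ | ⟨e, -⟩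
    · refine ⟨i + T.dist (L i) u, between_unique A.tree (x := L i) (y := L (i + -t)) ?_ ?_ ?_⟩ <;>
      have := hL.1.dist A.tree i (i + T.dist (L i) u) <;>
      have := hL.1.dist A.tree (i + T.dist (L i) u) (i + -t) <;>
      grind
    · refine ⟨i - T.dist (L i) u, between_unique A.tree (x := L i) (y := L (i + -t)) ?_ ?_ ?_⟩ <;>
      have := hL.1.dist A.tree i (i - T.dist (L i) u) <;>
      have := hL.1.dist A.tree (i - T.dist (L i) u) (i + -t) <;>
      grind
  -- there `c * b * c` and `a * b * a` agree
  refine ⟨L k, ?_⟩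
  rw [rbc, mul_smul, mul_smul, ← eq_inv_smul_iff, hc.2.2, hc.inv.2.2] at hu
  rw [mul_smul, mul_smul, ← eq_inv_smul_iff, hL.2.2, hL.inv.2.2, hu]

/-- The trichotomy for elements `a`, `b`, `c` satisfying the relations of the Artin group, with
an invariant line given by an axis on which all three act by translations. -/
lemma trichotomy (A : IsTreeAction G T) {k : ℕ} (hm : m = 3 * k + 1) (rac : a * c = c * a)
    (rbc : b * c * b = c * b * c) (r : (a * b) ^ m * a = b * (a * b) ^ m) :
    (∃ v : V, a • v = v ∧ b • v = v ∧ c • v = v) ∨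
    (∃ (L : ℤ → V) (s t q : ℤ), IsLine T L ∧ (∀ i, a • L i = L (i + s)) ∧
      (∀ i, b • L i = L (i + t)) ∧ ∀ i, c • L i = L (i + q)) ∨
    ∃ v : V, ((a * b) ^ m * a) • v = v ∧ (a * b) ^ 3 • v = v := by
  by_cases hab : Elliptic V (a * b)
  swap
  · obtain ⟨L, s, t, hs, ht⟩ := axis_of_not_elliptic A r hab
    obtain ⟨q, hq⟩ := hs.commute A (show Commute c a from rac.symm)
    exact Or.inr (Or.inl ⟨L, s, t, q, hs.1, hs.2.2, ht.2.2, hq⟩)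
  have rbc' : (b * c) ^ 1 * b = c * (b * c) ^ 1 := by simpa [mul_assoc] using rbc
  by_cases hbc : Elliptic V (b * c)
  swap
  · obtain ⟨L, t, q, ht, hq⟩ := axis_of_not_elliptic A rbc' hbc
    obtain ⟨s, hs⟩ := hq.commute A rac
    exact Or.inr (Or.inl ⟨L, s, t, q, ht.1, hs, ht.2.2, hq.2.2⟩)
  by_cases ha : Elliptic V a
  · -- the three fixed subtrees meet pairwise, so the median of three vertices is fixed
    have hb : Elliptic V b := garside_conj r ▸ ha.conj _
    have hc : Elliptic V c := garside_conj rbc' ▸ hb.conj _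
    obtain ⟨x, xa, xb⟩ := A.serre ha hb hab
    obtain ⟨y, yb, yc⟩ := A.serre hb hc hbc
    obtain ⟨z, za, zc⟩ := A.commute_fix rac ha hc
    obtain ⟨v, h1, h2, h3⟩ := exists_median A.tree x y z
    exact Or.inl ⟨v, A.fix_between xa za h2, A.fix_between xb yb h1, A.fix_between yc zc h3⟩
  · refine Or.inr (Or.inr ?_)
    have haba := aba_elliptic A rac rbc r ha hab hbc
    have hD : Elliptic V ((a * b) ^ m * a) :=
      A.elliptic_of_pow (k := 2) (by omega) (garside_sq r ▸ hab.pow _)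
    -- `a * b * a` is the product of `(a * b) ^ (-3 * k)` and `(a * b) ^ m * a`
    have e : ((a * b) ^ (3 * k))⁻¹ * ((a * b) ^ m * a) = a * b * a := by
      rw [hm, pow_succ, mul_assoc, inv_mul_cancel_left]
    obtain ⟨v, h1, h2⟩ := A.serre (hab.pow (3 * k)).inv hD (e ▸ haba)
    refine ⟨v, h2, ?_⟩
    -- `(a * b) ^ 3` is a product of powers of the two elements fixing `v`
    have e3 : (a * b) ^ 3 = (((a * b) ^ (3 * k))⁻¹) ^ 2 * ((a * b) ^ m * a) ^ 2 := by
      rw [garside_sq r, inv_pow, eq_inv_mul_iff_mul_eq, ← pow_mul, ← pow_add]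
      congr 1
      omega
    have := (MulAction.stabilizer G v).mul_mem ((MulAction.stabilizer G v).pow_mem h1 2)
      ((MulAction.stabilizer G v).pow_mem h2 2)
    rw [← e3] at this
    exact this

end Artin

end TreeAct

/-- For `m = 3k+1` (`k ≥ 0`), every action without inversions of
`G = Art_{2,3,2m+1}` on a tree `T` either has a global fixed vertex, or admits a
geodesic line in `T` with `G`-invariant image, or has a vertex `p₀` fixed by both
`(ab)^m a` and `(ab)^3`. -/
theorem art23odd_fixed_point_or_line_or_stabilizer (m k : ℕ) (hm : m = 3 * k + 1)
    (V : Type) (T : SimpleGraph V) (hT : T.IsTree)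
    [MulAction (Art23odd m) V]
    (hact : ∀ (g : Art23odd m) (u v : V), T.Adj u v → T.Adj (g • u) (g • v))
    (hninv : ∀ (g : Art23odd m) (u v : V), T.Adj u v → ¬(g • u = v ∧ g • v = u)) :
    (∃ v : V, ∀ g : Art23odd m, g • v = v) ∨
    (∃ ℓ : ℤ → V, Function.Injective ℓ ∧ (∀ i : ℤ, T.Adj (ℓ i) (ℓ (i + 1))) ∧
      ∀ (g : Art23odd m) (i : ℤ), ∃ j : ℤ, g • ℓ i = ℓ j) ∨
    (∃ p₀ : V, ((Art23odd.gA m * Art23odd.gB m) ^ m * Art23odd.gA m) • p₀ = p₀ ∧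
      ((Art23odd.gA m * Art23odd.gB m) ^ 3) • p₀ = p₀) := by
  have A : TreeAct.IsTreeAction (Art23odd m) T := ⟨hT, hact, hninv⟩
  have rel : ∀ {x y : FreeGroup (Fin 3)}, x * y⁻¹ ∈ Art23odd.rels m →
      PresentedGroup.mk (Art23odd.rels m) x = PresentedGroup.mk (Art23odd.rels m) y :=
    fun h => PresentedGroup.mk_eq_mk_of_mul_inv_mem h
  have rac : Art23odd.gA m * Art23odd.gC m = Art23odd.gC m * Art23odd.gA m :=
    rel (x := Art23odd.a * Art23odd.c) (y := Art23odd.c * Art23odd.a) (Or.inl rfl)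
  have rbc : Art23odd.gB m * Art23odd.gC m * Art23odd.gB m =
      Art23odd.gC m * Art23odd.gB m * Art23odd.gC m :=
    rel (x := Art23odd.b * Art23odd.c * Art23odd.b)
      (y := Art23odd.c * Art23odd.b * Art23odd.c) (Or.inr (Or.inl rfl))
  have rab : (Art23odd.gA m * Art23odd.gB m) ^ m * Art23odd.gA m =
      Art23odd.gB m * (Art23odd.gA m * Art23odd.gB m) ^ m :=
    rel (x := (Art23odd.a * Art23odd.b) ^ m * Art23odd.a)
      (y := Art23odd.b * (Art23odd.a * Art23odd.b) ^ m) (Or.inr (Or.inr rfl))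
  have gen : ∀ H : Subgroup (Art23odd m), Art23odd.gA m ∈ H → Art23odd.gB m ∈ H →
      Art23odd.gC m ∈ H → ∀ g, g ∈ H := fun H h0 h1 h2 =>
    PresentedGroup.generated_by _ H fun j => by
      fin_cases j
      exacts [h0, h1, h2]
  rcases TreeAct.trichotomy A hm rac rbc rab with ⟨v, ha, hb, hc⟩ | ⟨L, s, t, q, hL, hs, ht, hq⟩ | h
  · exact Or.inl ⟨v, gen (MulAction.stabilizer _ v) ha hb hc⟩
  · let H : Subgroup (Art23odd m) :=
      { carrier := {g | ∃ s : ℤ, ∀ i, g • L i = L (i + s)}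
        one_mem' := ⟨0, by simp⟩
        mul_mem' := by
          rintro g h ⟨s, hs⟩ ⟨t, ht⟩
          exact ⟨t + s, fun i => by rw [mul_smul, ht, hs, add_assoc]⟩
        inv_mem' := by
          rintro g ⟨s, hs⟩
          exact ⟨-s, TreeAct.inv_smul_line hs⟩ }
    refine Or.inr (Or.inl ⟨L, hL.injective hT, fun i => (hL i).1, fun g i => ?_⟩)
    obtain ⟨s, hs⟩ := gen H ⟨s, hs⟩ ⟨t, ht⟩ ⟨q, hq⟩ g
    exact ⟨i + s, hs i⟩
  · exact Or.inr (Or.inr h)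
end

section
/- Let F be a group, let H and H' be subgroups of F, and let φ: H → H' be an isomorphism that extends to an automorphism of F (i.e. there is an automorphism Φ of F with Φ(h) = φ(h) for all h ∈ H). If F is poly-free, then the HNN extension F*_φ = ⟨F, t | t h t^{-1} = φ(h) for all h ∈ H⟩ is poly-free; if moreover F is free, then F*_φ is normally poly-free. -/
/-!
Let `Φ` be an automorphism of `F` extending `φ`, and let `Q = F ⋊ ℤ`, where the generator of `ℤ`
acts by `Φ`. The identity of `F` together with `t ↦` generator defines a surjection
`ρ : F*_φ → Q` that is injective on `F`. The kernel of `ρ` therefore acts freely on the Bass–Serre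
tree of the HNN extension, so it is free. Since `Q` is poly-free when `F` is (add the step `F ⊴ Q`
with quotient `ℤ` on top of the chain of `F`), pulling the chain of `Q` back along `ρ` and adding
`1 ⊴ ker ρ` at the bottom gives a chain for `F*_φ`. If `F` is free, the chain `1 ⊴ F ⊴ Q` consists
of normal subgroups, and so does its pullback.

The freeness of the kernel (`isFreeGroup_ker_of_equivariant`) is obtained without trees. Choose
`s : Q → F*_φ` with `s 1 = 1` that is equivariant for left multiplication by `F`. The crossed
homomorphism `c w q = (s q)⁻¹ * w * s ((ρ w)⁻¹ * q)` is trivial on `F` and restricts at `q = 1` to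
the identity of `ker ρ`. It lifts to a homomorphism from `F*_φ` to the wreath product of
`FreeGroup F*_φ` by `Q`: keep it trivial on `F` and send `t` to the function `q ↦ of (c t q)`; the
HNN relation survives because it only demands an invariance of that function which `c t` already
has. Evaluating the lift at `1` embeds `ker ρ` in a free group, and the Nielsen–Schreier theorem
applies.
-/

/-- A group `G` is poly-free if it has a finite subnormal chain
`1 = G₀ ⊴ G₁ ⊴ ⋯ ⊴ Gₙ = G` whose successive quotients are free groups
(equivalently, each `Gᵢ₊₁` surjects onto a free group with kernel `Gᵢ`). -/
def IsPolyFree (G : Type u) [Group G] : Prop :=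
  ∃ (n : ℕ) (s : Fin (n + 1) → Subgroup G),
    s 0 = ⊥ ∧ s (Fin.last n) = ⊤ ∧
    ∀ i : Fin n, s i.castSucc ≤ s i.succ ∧
      ∃ (ι : Type u) (f : ↥(s i.succ) →* FreeGroup ι),
        Function.Surjective f ∧ f.ker = (s i.castSucc).subgroupOf (s i.succ)

/-- A group `G` is normally poly-free if it has a chain as in `IsPolyFree` in which
each term is moreover normal in `G`. -/
def IsNormallyPolyFree (G : Type u) [Group G] : Prop :=
  ∃ (n : ℕ) (s : Fin (n + 1) → Subgroup G),
    s 0 = ⊥ ∧ s (Fin.last n) = ⊤ ∧ (∀ i : Fin (n + 1), (s i).Normal) ∧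
    ∀ i : Fin n, s i.castSucc ≤ s i.succ ∧
      ∃ (ι : Type u) (f : ↥(s i.succ) →* FreeGroup ι),
        Function.Surjective f ∧ f.ker = (s i.castSucc).subgroupOf (s i.succ)

/-! ### Steps of a poly-free chain -/

/-- A single step of a poly-free chain: `A ≤ B`, with `A` normal in `B` and `B / A` free. The last
two conditions are expressed by a surjection of `B` onto a free group with kernel `A`. -/
def FreeStep {G : Type u} [Group G] (A B : Subgroup G) : Prop :=
  A ≤ B ∧ ∃ (ι : Type u) (f : ↥B →* FreeGroup ι),
    Function.Surjective f ∧ f.ker = A.subgroupOf B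

theorem FreeStep.comap {G Q : Type u} [Group G] [Group Q] {ρ : G →* Q}
    (hρ : Function.Surjective ρ) {A B : Subgroup Q} (h : FreeStep A B) :
    FreeStep (A.comap ρ) (B.comap ρ) := by
  obtain ⟨hAB, ι, f, hf, hk⟩ := h
  refine ⟨Subgroup.comap_mono hAB, ι, f.comp (ρ.subgroupComap B), hf.comp ?_, ?_⟩
  · rintro ⟨b, hb⟩
    obtain ⟨g, rfl⟩ := hρ b
    exact ⟨⟨g, hb⟩, rfl⟩
  · rw [← MonoidHom.comap_ker, hk]
    rfl

theorem FreeStep.map {G Q : Type u} [Group G] [Group Q] {j : G →* Q}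
    (hj : Function.Injective j) {A B : Subgroup G} (h : FreeStep A B) :
    FreeStep (A.map j) (B.map j) := by
  obtain ⟨hAB, ι, f, hf, hk⟩ := h
  let e : B ≃* B.map j := B.equivMapOfInjective j hj
  refine ⟨Subgroup.map_mono hAB, ι, f.comp e.symm.toMonoidHom, hf.comp e.symm.surjective, ?_⟩
  ext x
  obtain ⟨b, rfl⟩ := e.surjective x
  have hb : f b = 1 ↔ (b : G) ∈ A := by
    rw [← MonoidHom.mem_ker, hk, Subgroup.mem_subgroupOf]
  have hx : ((e b : B.map j) : Q) = j b := rfl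
  simp [MonoidHom.mem_ker, Subgroup.mem_subgroupOf, hb, hx, Subgroup.mem_map, hj.eq_iff]

theorem freeStep_bot {G : Type u} [Group G] (N : Subgroup G) [IsFreeGroup N] :
    FreeStep ⊥ N := by
  refine ⟨bot_le, _, (IsFreeGroup.toFreeGroup N).toMonoidHom,
    (IsFreeGroup.toFreeGroup N).surjective, ?_⟩
  ext x
  simp [MonoidHom.mem_ker]

theorem freeStep_ker_top {G : Type u} [Group G] {ι : Type u} (π : G →* FreeGroup ι)
    (hπ : Function.Surjective π) : FreeStep π.ker ⊤ := by
  refine ⟨le_top, ι, π.comp (⊤ : Subgroup G).subtype, fun y => ?_, rfl⟩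
  obtain ⟨g, rfl⟩ := hπ y
  exact ⟨⟨g, trivial⟩, rfl⟩

/-! ### Extending poly-free chains -/

/-- The chain of `Q` is pulled back to `G`, with `⊥` added below it. -/
theorem IsPolyFree.of_surjective {G Q : Type u} [Group G] [Group Q] {ρ : G →* Q}
    (hρ : Function.Surjective ρ) [IsFreeGroup ρ.ker] (h : IsPolyFree Q) : IsPolyFree G := by
  obtain ⟨n, s, h0, hn, hs⟩ := h
  refine ⟨n + 1, Fin.cons ⊥ fun i => (s i).comap ρ, rfl, ?_, fun i => ?_⟩
  · rw [← Fin.succ_last, Fin.cons_succ, hn, Subgroup.comap_top]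
  · induction i using Fin.cases with
    | zero =>
      have := freeStep_bot ρ.ker
      rwa [← MonoidHom.comap_bot, ← h0] at this
    | succ i => exact FreeStep.comap hρ (hs i)

theorem IsNormallyPolyFree.of_surjective {G Q : Type u} [Group G] [Group Q] {ρ : G →* Q}
    (hρ : Function.Surjective ρ) [IsFreeGroup ρ.ker] (h : IsNormallyPolyFree Q) :
    IsNormallyPolyFree G := by
  obtain ⟨n, s, h0, hn, hN, hs⟩ := h
  refine ⟨n + 1, Fin.cons ⊥ fun i => (s i).comap ρ, rfl, ?_, fun i => ?_, fun i => ?_⟩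
  · rw [← Fin.succ_last, Fin.cons_succ, hn, Subgroup.comap_top]
  · induction i using Fin.cases with
    | zero => exact Subgroup.normal_bot
    | succ i => exact (hN i).comap ρ
  · induction i using Fin.cases with
    | zero =>
      have := freeStep_bot ρ.ker
      rwa [← MonoidHom.comap_bot, ← h0] at this
    | succ i => exact FreeStep.comap hρ (hs i)

/-- The chain of `F` is pushed forward to `Q`, with `⊤` added above it. -/
theorem IsPolyFree.of_extension {F Q : Type u} [Group F] [Group Q] {j : F →* Q}
    (hj : Function.Injective j) {ι : Type u} {π : Q →* FreeGroup ι}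
    (hπ : Function.Surjective π) (hjπ : j.range = π.ker) (h : IsPolyFree F) : IsPolyFree Q := by
  obtain ⟨n, s, h0, hn, hs⟩ := h
  refine ⟨n + 1, Fin.snoc (α := fun _ => Subgroup Q) (fun i => (s i).map j) ⊤, ?_,
    Fin.snoc_last _ _, fun i => ?_⟩
  · rw [← Fin.castSucc_zero, Fin.snoc_castSucc, h0, Subgroup.map_bot]
  · rw [Fin.snoc_castSucc]
    induction i using Fin.lastCases with
    | last =>
      rw [Fin.succ_last, Fin.snoc_last, hn, ← MonoidHom.range_eq_map, hjπ]
      exact freeStep_ker_top π hπ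
    | cast i =>
      rw [← Fin.castSucc_succ, Fin.snoc_castSucc]
      exact FreeStep.map hj (hs i)

theorem IsNormallyPolyFree.of_ker_free {Q : Type u} [Group Q] {ι : Type u} {π : Q →* FreeGroup ι}
    (hπ : Function.Surjective π) [IsFreeGroup π.ker] : IsNormallyPolyFree Q := by
  refine ⟨2, ![⊥, π.ker, ⊤], rfl, rfl, fun i => ?_, fun i => ?_⟩
  · fin_cases i
    · exact Subgroup.normal_bot
    · exact π.normal_ker
    · exact Subgroup.normal_top
  · fin_cases i
    · exact freeStep_bot π.ker
    · exact freeStep_ker_top π hπ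

/-! ### Freeness of the kernel -/

namespace HNNExtension

section Kernel

variable {F Q : Type u} [Group F] [Group Q] {H K : Subgroup F} {φ : ↥H ≃* ↥K}

/-- The crossed homomorphism `w ↦ (q ↦ (s q)⁻¹ * w * s ((ρ w)⁻¹ * q))` attached to a map
`s : Q → F*_φ`; for a section `s` of `ρ`, its values lie in `ker ρ`. -/
def sectionCocycle (ρ : HNNExtension F H K φ →* Q) (s : Q → HNNExtension F H K φ)
    (w : HNNExtension F H K φ) (q : Q) : HNNExtension F H K φ :=
  (s q)⁻¹ * w * s ((ρ w)⁻¹ * q)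

/-- The invariance of `sectionCocycle ρ s t` under `K` which makes the HNN relation hold in the
wreath product. -/
theorem sectionCocycle_t_invariant (ρ : HNNExtension F H K φ →* Q)
    (s : Q → HNNExtension F H K φ) (hs : ∀ f q, s (ρ (of f) * q) = of f * s q) (a : H) (q : Q) :
    sectionCocycle ρ s t ((ρ (of (φ a : F)))⁻¹ * q) = sectionCocycle ρ s t q := by
  have hinv : ∀ f q, s ((ρ (of f))⁻¹ * q) = (of f)⁻¹ * s q := fun f q => by
    rw [← map_inv, ← map_inv, hs]
  have hρ : (ρ t)⁻¹ * ((ρ (of (φ a : F)))⁻¹ * q) = (ρ (of (a : F)))⁻¹ * ((ρ t)⁻¹ * q) := by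
    rw [← mul_assoc, ← mul_assoc, ← mul_inv_rev, ← mul_inv_rev, ← map_mul, ← map_mul, t_mul_of]
  simp only [sectionCocycle]
  rw [hρ, hinv, hinv, equiv_eq_conj]
  group

/-- The lift of `sectionCocycle ρ s` to the free group on `F*_φ`, as a homomorphism to a wreath
product: the base group component is trivial on `F`, and at `t` it is the function
`q ↦ FreeGroup.of (sectionCocycle ρ s t q)`. -/
def toWreath (ρ : HNNExtension F H K φ →* Q)
    (s : Q → HNNExtension F H K φ) (hs : ∀ f q, s (ρ (of f) * q) = of f * s q) :
    HNNExtension F H K φ →* RegularWreathProduct (FreeGroup (HNNExtension F H K φ)) Q :=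
  lift (RegularWreathProduct.inl.comp (ρ.comp of))
    ⟨fun q => FreeGroup.of (sectionCocycle ρ s t q), ρ t⟩ <| by
      intro a
      ext q
      · simp [sectionCocycle_t_invariant ρ s hs]
      · simp [← map_mul, t_mul_of]

theorem toWreath_right (ρ : HNNExtension F H K φ →* Q)
    (s : Q → HNNExtension F H K φ) (hs : ∀ f q, s (ρ (of f) * q) = of f * s q)
    (w : HNNExtension F H K φ) : (toWreath ρ s hs w).right = ρ w := by
  induction w using induction_on with
  | of f => simp [toWreath]
  | t => simp [toWreath]
  | mul x y hx hy => simp [hx, hy]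
  | inv x hx => simp [hx]

/-- Under the tautological homomorphism `FreeGroup F*_φ → F*_φ` the base group component of
`toWreath` becomes `sectionCocycle`, since both obey the same cocycle rule and agree on `F` and
`t`. -/
theorem lift_toWreath_left (ρ : HNNExtension F H K φ →* Q)
    (s : Q → HNNExtension F H K φ) (hs : ∀ f q, s (ρ (of f) * q) = of f * s q)
    (w : HNNExtension F H K φ) (q : Q) :
    FreeGroup.lift id ((toWreath ρ s hs w).left q) = sectionCocycle ρ s w q := by
  induction w using induction_on generalizing q with
  | of f =>
    have := hs f⁻¹ q
    rw [map_inv, map_inv] at this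
    simp [toWreath, sectionCocycle, this]
  | t => simp [toWreath]
  | mul x y hx hy =>
    simp only [map_mul, RegularWreathProduct.mul_left, Pi.mul_apply, hx, hy, toWreath_right,
      sectionCocycle]
    simp [mul_assoc]
  | inv x hx =>
    simp [hx, toWreath_right, sectionCocycle, mul_assoc]

/-- If a map `s : Q → F*_φ` with `s 1 = 1` is equivariant for left multiplication by `F`, then
`ker ρ` is free: evaluation of `toWreath` at `1` embeds it in a free group. -/
theorem isFreeGroup_ker_of_equivariant (ρ : HNNExtension F H K φ →* Q)
    (s : Q → HNNExtension F H K φ) (hs : ∀ f q, s (ρ (of f) * q) = of f * s q) (h1 : s 1 = 1) :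
    IsFreeGroup ρ.ker := by
  let β : ρ.ker →* FreeGroup (HNNExtension F H K φ) :=
    { toFun := fun k => (toWreath ρ s hs k).left 1
      map_one' := by simp
      map_mul' := fun k l => by
        have hk : ρ k = 1 := k.2
        simp [toWreath_right, hk] }
  have hβ : Function.Injective β := by
    have key : ∀ k : ρ.ker, FreeGroup.lift id (β k) = (k : HNNExtension F H K φ) := fun k => by
      have hk : ρ k = 1 := k.2
      refine (lift_toWreath_left ρ s hs k 1).trans ?_
      simp [sectionCocycle, hk, h1]
    intro k l hkl
    exact Subtype.ext (by rw [← key k, ← key l, hkl])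
  exact IsFreeGroup.ofMulEquiv (MonoidHom.ofInjective hβ).symm

end Kernel

/-! ### The projection to the semidirect product -/

section Semidirect

variable {F : Type u} [Group F] {H K : Subgroup F} {φ : ↥H ≃* ↥K}

/-- The group `F ⋊ ℤ` in which the generator of `ℤ` acts on `F` by `Φ`. -/
abbrev MappingTorus (Φ : F ≃* F) : Type u :=
  F ⋊[zpowersHom (MulAut F) Φ] Multiplicative ℤ

/-- The projection `F*_φ → F ⋊ ℤ`, the identity on `F`, sending `t` to the generator of `ℤ`. -/
def toMappingTorus (Φ : F ≃* F) (hΦ : ∀ h : H, Φ (h : F) = (φ h : F)) :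
    HNNExtension F H K φ →* MappingTorus Φ :=
  lift SemidirectProduct.inl (SemidirectProduct.inr (Multiplicative.ofAdd 1)) <| by
    intro a
    ext <;> simp [hΦ]

theorem toMappingTorus_of_mul_t_zpow (Φ : F ≃* F) (hΦ : ∀ h : H, Φ (h : F) = (φ h : F)) (f : F)
    (n : Multiplicative ℤ) :
    toMappingTorus Φ hΦ (of f * t ^ n.toAdd) = ⟨f, n⟩ := by
  rw [SemidirectProduct.mk_eq_inl_mul_inr, map_mul, map_zpow]
  simp only [toMappingTorus, lift_of, lift_t]
  rw [← map_zpow, ← ofAdd_zsmul]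
  simp

theorem toMappingTorus_surjective (Φ : F ≃* F) (hΦ : ∀ h : H, Φ (h : F) = (φ h : F)) :
    Function.Surjective (toMappingTorus Φ hΦ) :=
  fun q => ⟨_, toMappingTorus_of_mul_t_zpow Φ hΦ q.left q.right⟩

theorem isFreeGroup_ker_toMappingTorus (Φ : F ≃* F) (hΦ : ∀ h : H, Φ (h : F) = (φ h : F)) :
    IsFreeGroup (toMappingTorus Φ hΦ).ker := by
  refine isFreeGroup_ker_of_equivariant _ (fun q => of q.left * t ^ q.right.toAdd) ?_ ?_
  · intro f q
    simp [toMappingTorus, mul_assoc]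
  · simp

/-- The projection `F ⋊ ℤ → ℤ`, with `ℤ` viewed as a free group of rank one. -/
def mappingTorusToFree (Φ : F ≃* F) : MappingTorus Φ →* FreeGroup PUnit.{u + 1} :=
  FreeGroup.mulEquivIntOfUnique.symm.toMonoidHom.comp SemidirectProduct.rightHom

theorem mappingTorusToFree_surjective (Φ : F ≃* F) :
    Function.Surjective (mappingTorusToFree Φ) :=
  FreeGroup.mulEquivIntOfUnique.symm.surjective.comp SemidirectProduct.rightHom_surjective

theorem range_inl_eq_ker_mappingTorusToFree (Φ : F ≃* F) :
    (SemidirectProduct.inl : F →* MappingTorus Φ).range = (mappingTorusToFree Φ).ker := by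
  rw [SemidirectProduct.range_inl_eq_ker_rightHom]
  ext x
  simp [MonoidHom.mem_ker, mappingTorusToFree]

end Semidirect

end HNNExtension

/-- Let `φ : H → H'` be an isomorphism of subgroups of `F` that
extends to an automorphism of `F`. If `F` is poly-free then the HNN extension
`F*_φ` is poly-free; if moreover `F` is free then `F*_φ` is normally poly-free. -/
theorem hnn_of_extendable_polyFree (F : Type) [Group F] (H H' : Subgroup F)
    (φ : ↥H ≃* ↥H')
    (hext : ∃ Φ : F ≃* F, ∀ h : ↥H, Φ (h : F) = ((φ h : ↥H') : F)) :
    (IsPolyFree F → IsPolyFree (HNNExtension F H H' φ)) ∧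
    ((∃ ι : Type, Nonempty (FreeGroup ι ≃* F)) →
      IsNormallyPolyFree (HNNExtension F H H' φ)) := by
  obtain ⟨Φ, hΦ⟩ := hext
  have := HNNExtension.isFreeGroup_ker_toMappingTorus Φ hΦ
  have hρ := HNNExtension.toMappingTorus_surjective Φ hΦ
  have hπ := HNNExtension.mappingTorusToFree_surjective Φ
  have hker := HNNExtension.range_inl_eq_ker_mappingTorusToFree Φ
  refine ⟨fun hF => ?_, fun ⟨ι, ⟨e⟩⟩ => ?_⟩
  · exact (hF.of_extension SemidirectProduct.inl_injective hπ hker).of_surjective hρ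
  · have : IsFreeGroup (HNNExtension.mappingTorusToFree Φ).ker := by
      rw [← hker]
      exact IsFreeGroup.ofMulEquiv
        (e.trans (MonoidHom.ofInjective SemidirectProduct.inl_injective))
    exact (IsNormallyPolyFree.of_ker_free hπ).of_surjective hρ
end
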